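/- arXiv:1310.5938 — 6 statements merged into one kernel-verified Lean document; each statement's English description precedes it below -/
import Mathlib

section
/- For every integer n ≥ 1, the double series defining the subelliptic heat kernel p_t(r,η) converges absolutely for every t > 0, r ∈ [0, π/2), η ∈ (0, π), and the resulting function satisfies the subelliptic heat equation ∂p/∂t = ∂²p/∂r² + ((4n−1)·cot r − 3·tan r)·∂p/∂r + tan²r·(∂²p/∂η² + 2·cot η·∂p/∂η) at every point (t, r, η) ∈ (0,∞) × (0, π/2) × (0, π). -/
open Real MeasureTheory Filter Topology Set

noncomputable section

/-- The defining formula of the Jacobi polynomial `P_k^{(α,β)}` on `(-1,1)`. -/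
def jacobiFormula (k α β : ℕ) (x : ℝ) : ℝ :=
  ((-1 : ℝ) ^ k / (2 ^ k * Nat.factorial k)) * (1 - x) ^ (-(α : ℤ)) * (1 + x) ^ (-(β : ℤ)) *
    iteratedDeriv k (fun y => (1 - y) ^ (α + k) * (1 + y) ^ (β + k)) x

/-- `J k α β` is the Jacobi polynomial `P_k^{(α,β)}`: a polynomial function satisfying the
defining formula on `(-1,1)`. -/
def IsJacobi (J : ℕ → ℕ → ℕ → ℝ → ℝ) : Prop :=
  ∀ k α β : ℕ, (∃ p : Polynomial ℝ, ∀ x : ℝ, J k α β x = p.eval x) ∧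
    ∀ x ∈ Set.Ioo (-1 : ℝ) 1, J k α β x = jacobiFormula k α β x

/-- The vertical factor `sin((m+1)η)/sin η`, extended by its limit `m+1` at `η = 0`. -/
def vertFactor (m : ℕ) (η : ℝ) : ℝ :=
  if η = 0 then (m + 1 : ℝ) else Real.sin ((m + 1) * η) / Real.sin η

/-- The general term of the double series defining the subelliptic heat kernel of the
quaternionic Hopf fibration on `S^{4n+3}`. -/
def pTerm (n : ℕ) (J : ℕ → ℕ → ℕ → ℝ → ℝ) (t r η : ℝ) (mk : ℕ × ℕ) : ℝ :=
  (Real.Gamma (2 * n) / (2 * Real.pi ^ (2 * n + 2))) *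
    (2 * (mk.2 : ℝ) + mk.1 + 2 * n + 1) * ((mk.1 : ℝ) + 1) *
    (Nat.choose (mk.2 + mk.1 + 2 * n) (2 * n - 1) : ℝ) *
    Real.exp (-(4 * ((mk.2 : ℝ) * (mk.2 + 2 * n + mk.1 + 1) + n * mk.1)) * t) *
    vertFactor mk.1 η * Real.cos r ^ mk.1 * J mk.2 (2 * n - 1) (mk.1 + 1) (Real.cos (2 * r))

/-- The subelliptic heat kernel of the quaternionic Hopf fibration on `S^{4n+3}`. -/
def pKernel (n : ℕ) (J : ℕ → ℕ → ℕ → ℝ → ℝ) (t r η : ℝ) : ℝ :=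
  ∑' mk : ℕ × ℕ, pTerm n J t r η mk

/-- The defining formula of the Gegenbauer polynomial `C_m^{2n+1}` on `(-1,1)`. -/
def gegenbauerFormula (n m : ℕ) (x : ℝ) : ℝ :=
  ((-1 : ℝ) ^ m / 2 ^ m) *
    (Real.Gamma ((m : ℝ) + 4 * n + 2) * Real.Gamma (2 * (n : ℝ) + 3 / 2) /
      (Real.Gamma (4 * (n : ℝ) + 2) * Real.Gamma ((m : ℝ) + 1) *
        Real.Gamma (2 * (n : ℝ) + m + 3 / 2))) *
    (1 - x ^ 2) ^ (-(2 * (n : ℝ) + 1 / 2)) *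
    iteratedDeriv m (fun y => (1 - y ^ 2) ^ (2 * (n : ℝ) + m + 1 / 2)) x

/-- `C m` is the Gegenbauer polynomial `C_m^{2n+1}`. -/
def IsGegenbauer (n : ℕ) (C : ℕ → ℝ → ℝ) : Prop :=
  ∀ m : ℕ, (∃ p : Polynomial ℝ, ∀ x : ℝ, C m x = p.eval x) ∧
    ∀ x ∈ Set.Ioo (-1 : ℝ) 1, C m x = gegenbauerFormula n m x

/-- The Riemannian heat kernel of `S^{4n+3}`. -/
def qKernel (n : ℕ) (C : ℕ → ℝ → ℝ) (t x : ℝ) : ℝ :=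
  (Real.Gamma (2 * n + 1) / (2 * Real.pi ^ (2 * n + 2))) *
    ∑' m : ℕ, ((m : ℝ) + 2 * n + 1) * Real.exp (-((m : ℝ) * (m + 4 * n + 2)) * t) * C m x

/-- The general term of the double series defining the subelliptic heat kernel on `CP^{2n+1}`. -/
def hTerm (n : ℕ) (J : ℕ → ℕ → ℕ → ℝ → ℝ) (t r φ : ℝ) (mk : ℕ × ℕ) : ℝ :=
  (Real.Gamma (2 * n) / (4 * Real.pi ^ (2 * n + 2))) *
    (2 * (mk.2 : ℝ) + 2 * mk.1 + 2 * n + 1) * (2 * (mk.1 : ℝ) + 1) *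
    (Nat.choose (mk.2 + 2 * mk.1 + 2 * n) (2 * n - 1) : ℝ) *
    Real.exp (-(4 * (mk.2 : ℝ) * (mk.2 + 2 * n + 2 * mk.1 + 1) + 8 * n * mk.1) * t) *
    Real.cos r ^ (2 * mk.1) * J mk.1 0 0 (Real.cos (2 * φ)) *
    J mk.2 (2 * n - 1) (2 * mk.1 + 1) (Real.cos (2 * r))

/-- The subelliptic heat kernel of the fibration `CP^1 → CP^{2n+1} → HP^n`. -/
def hKernel (n : ℕ) (J : ℕ → ℕ → ℕ → ℝ → ℝ) (t r φ : ℝ) : ℝ :=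
  ∑' mk : ℕ × ℕ, hTerm n J t r φ mk

end

section Aux
open Polynomial

lemma aux_D1 (N j : ℕ) : derivative^[j] ((1 - X : ℝ[X]) ^ N)
    = (-1) ^ j * (N.descFactorial j : ℝ[X]) * (1 - X) ^ (N - j) := by
  induction j with
  | zero => simp
  | succ j ih =>
    rw [Function.iterate_succ_apply', ih, Nat.descFactorial_succ]
    have : ((-1 : ℝ[X]) ^ j * (N.descFactorial j : ℝ[X])) = C ((-1) ^ j * (N.descFactorial j : ℝ)) := by
      simp
    rw [this, derivative_C_mul, derivative_pow, Nat.sub_sub]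
    simp
    ring

lemma aux_D2 (N j : ℕ) : derivative^[j] ((1 + X : ℝ[X]) ^ N)
    = (N.descFactorial j : ℝ[X]) * (1 + X) ^ (N - j) := by
  induction j with
  | zero => simp
  | succ j ih =>
    rw [Function.iterate_succ_apply', ih, Nat.descFactorial_succ]
    have : ((N.descFactorial j : ℝ[X])) = C ((N.descFactorial j : ℝ)) := by
      simp
    rw [this, derivative_C_mul, derivative_pow, Nat.sub_sub]
    simp
    ring

noncomputable def auxW (a b : ℕ) : ℝ[X] := (1 - X) ^ a * (1 + X) ^ b

noncomputable def auxR (k α β : ℕ) : ℝ[X] := ∑ s ∈ Finset.range (k + 1),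
  C ((k.choose s : ℝ) * ((-1) ^ (k - s) * ((α + k).descFactorial (k - s)) *
    ((β + k).descFactorial s))) * ((1 - X) ^ s * (1 + X) ^ (k - s))

lemma aux_rod (k α β : ℕ) : derivative^[k] (auxW (α + k) (β + k)) = auxW α β * auxR k α β := by
  unfold auxW auxR
  rw [iterate_derivative_mul, Finset.mul_sum]
  refine Finset.sum_congr rfl fun s hs => ?_
  have hs' : s ≤ k := by simpa [Nat.lt_succ_iff] using hs
  rw [aux_D1, aux_D2]
  have e1 : α + k - (k - s) = α + s := by omega
  have e2 : β + k - s = β + (k - s) := by omega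
  rw [e1, e2, pow_add, pow_add]
  simp
  ring

lemma aux_W (a b : ℕ) : (1 - X ^ 2) * derivative (auxW a b) =
    ((b : ℝ[X]) - (a : ℝ[X]) - ((a : ℝ[X]) + (b : ℝ[X])) * X) * auxW a b := by
  unfold auxW
  rcases a with _ | a <;> rcases b with _ | b <;> simp [derivative_mul, derivative_pow] <;> ring

lemma aux_u (a b : ℕ) (j : ℕ) : (1 - X ^ 2) * derivative^[j+2] (auxW a b) =
    ((b : ℝ[X]) - (a : ℝ[X]) - ((a : ℝ[X]) + (b : ℝ[X]) - 2 * ((j : ℝ[X]) + 1)) * X) * derivative^[j+1] (auxW a b)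
     + (- ((j : ℝ[X]) + 1) * ((a : ℝ[X]) + (b : ℝ[X])) + (j : ℝ[X]) * ((j : ℝ[X]) + 1)) * derivative^[j] (auxW a b) := by
  induction j with
  | zero =>
    have := congrArg derivative (aux_W a b)
    simp [derivative_mul] at this
    simp
    linear_combination this
  | succ j ih =>
    have := congrArg derivative ih
    simp only [derivative_mul, derivative_add, derivative_sub, derivative_one, derivative_X_pow,
      derivative_natCast, derivative_X, derivative_neg, ← Function.iterate_succ_apply' (f := (derivative : ℝ[X] → ℝ[X])),
      derivative_ofNat] at this
    simp at this
    rw [show (C 2 : ℝ[X]) = 2 from rfl] at this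
    simp only [show j + 1 + 2 = j + 1 + 1 + 1 from rfl, Function.iterate_succ_apply]
    push_cast
    linear_combination this

lemma auxW_ne (a b : ℕ) : auxW a b ≠ 0 := by
  intro h
  have := congrArg (eval 0) h
  simp [auxW] at this

lemma auxR_ode (k α β : ℕ) : (1 - X ^ 2) * derivative (derivative (auxR k α β)) +
    ((β : ℝ[X]) - (α : ℝ[X]) - ((α : ℝ[X]) + (β : ℝ[X]) + 2) * X) * derivative (auxR k α β) +
    ((k : ℝ[X]) * ((k : ℝ[X]) + (α : ℝ[X]) + (β : ℝ[X]) + 1)) * auxR k α β = 0 := by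
  have hu := aux_u (α + k) (β + k) k
  have e1 : derivative^[k+1] (auxW (α + k) (β + k)) = derivative (auxW α β * auxR k α β) := by
    rw [Function.iterate_succ_apply', aux_rod]
  have e2 : derivative^[k+2] (auxW (α + k) (β + k)) = derivative (derivative (auxW α β * auxR k α β)) := by
    rw [Function.iterate_succ_apply', e1]
  rw [e1, e2, aux_rod] at hu
  have hv := aux_W α β
  have hv2 := congrArg derivative hv
  have hZ : (1 - X ^ 2 : ℝ[X]) ≠ 0 := by
    intro h
    have := congrArg (eval 0) h
    simp at this
  apply mul_left_cancel₀ (mul_ne_zero hZ (auxW_ne α β))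
  rw [mul_zero]
  simp [derivative_mul] at hu hv hv2
  linear_combination (1 - X ^ 2) * hu - (1 - X ^ 2) * auxR k α β * hv2
    - (2 * (1 - X ^ 2) * derivative (auxR k α β)) * hv
end Aux
section Aux2
open Polynomial

lemma aux_iter (p : ℝ[X]) (k : ℕ) (x : ℝ) :
    iteratedDeriv k (fun y => p.eval y) x = (derivative^[k] p).eval x := by
  induction k generalizing p with
  | zero => simp
  | succ k ih =>
    rw [iteratedDeriv_succ', Function.iterate_succ_apply, ← ih]
    congr 1
    funext y
    simp

noncomputable def auxQ (k α β : ℕ) : ℝ[X] := C ((-1 : ℝ) ^ k / (2 ^ k * Nat.factorial k)) * auxR k α β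

lemma aux_J (J : ℕ → ℕ → ℕ → ℝ → ℝ) (hJ : IsJacobi J) (k α β : ℕ) (x : ℝ) :
    J k α β x = (auxQ k α β).eval x := by
  obtain ⟨⟨p, hp⟩, hf⟩ := hJ k α β
  have : p = auxQ k α β := by
    apply eq_of_infinite_eval_eq
    refine Set.Infinite.mono ?_ (Set.Ioo_infinite (show (-1 : ℝ) < 1 by norm_num))
    intro x hx
    have h := hf x hx
    rw [hp] at h
    have hfun : (fun y : ℝ => (1 - y) ^ (α + k) * (1 + y) ^ (β + k)) =
      fun y => (auxW (α + k) (β + k)).eval y := by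
      funext y; simp [auxW]
    simp only [Set.mem_ofPred_eq]
    rw [h, jacobiFormula, hfun, aux_iter, aux_rod, auxQ]
    have h1 : 1 - x ≠ 0 := by have := hx.2; linarith
    have h2 : 1 + x ≠ 0 := by have := hx.1; linarith
    simp [auxW]
    field_simp
  rw [hp, this]

lemma auxQ_ode (k α β : ℕ) (x : ℝ) :
    (1 - x ^ 2) * (derivative (derivative (auxQ k α β))).eval x +
    ((β : ℝ) - α - (α + β + 2) * x) * (derivative (auxQ k α β)).eval x +
    ((k : ℝ) * (k + α + β + 1)) * (auxQ k α β).eval x = 0 := by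
  have := congrArg (eval x) (auxR_ode k α β)
  simp at this
  simp [auxQ]
  linear_combination ((-1 : ℝ) ^ k / (2 ^ k * Nat.factorial k)) * this

/-- horizontal factor -/
noncomputable def auxF (k α β m : ℕ) (r : ℝ) : ℝ :=
  Real.cos r ^ m * (auxQ k α β).eval (Real.cos (2 * r))

noncomputable def auxc (k α β s : ℕ) : ℝ :=
  ((-1 : ℝ) ^ k / (Nat.factorial k)) * ((k.choose s : ℝ) * ((-1) ^ (k - s) * ((α + k).descFactorial (k - s)) *
    ((β + k).descFactorial s)))

lemma auxF_eq (k α β m : ℕ) (r : ℝ) : auxF k α β m r = ∑ s ∈ Finset.range (k + 1),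
    auxc k α β s * (Real.sin r ^ (2 * s) * Real.cos r ^ (2 * (k - s) + m)) := by
  unfold auxF auxQ auxR auxc
  simp only [eval_mul, eval_C, eval_finsetSum, Finset.mul_sum]
  refine Finset.sum_congr rfl fun s hs => ?_
  have hs' : s ≤ k := by simpa [Nat.lt_succ_iff] using hs
  have e1 : 1 - Real.cos (2 * r) = 2 * Real.sin r ^ 2 := by
    rw [Real.cos_two_mul, Real.sin_sq]; ring
  have e2 : 1 + Real.cos (2 * r) = 2 * Real.cos r ^ 2 := by
    rw [Real.cos_two_mul]; ring
  have e3 : (2 : ℝ) ^ k = 2 ^ s * 2 ^ (k - s) := by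
    rw [← pow_add]; congr 1; omega
  simp only [eval_pow, eval_sub, eval_add, eval_one, eval_X, e1, e2, mul_pow, ← pow_mul]
  rw [e3, pow_add]
  field_simp

/-- trig monomials -/
lemma aux_mono_bound (a b : ℕ) (r : ℝ) : |Real.sin r ^ a * Real.cos r ^ b| ≤ 1 := by
  rw [abs_mul, abs_pow, abs_pow]
  exact mul_le_one₀ (pow_le_one₀ (abs_nonneg _) (Real.abs_sin_le_one r)) (by positivity)
    (pow_le_one₀ (abs_nonneg _) (Real.abs_cos_le_one r))

lemma aux_mono_deriv (a b : ℕ) (r : ℝ) : HasDerivAt (fun r => Real.sin r ^ a * Real.cos r ^ b)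
    (a * (Real.sin r ^ (a - 1) * Real.cos r ^ (b + 1)) -
     b * (Real.sin r ^ (a + 1) * Real.cos r ^ (b - 1))) r := by
  have := ((Real.hasDerivAt_sin r).pow a).mul ((Real.hasDerivAt_cos r).pow b)
  convert! this using 1
  simp
  ring

lemma aux_mono (a b : ℕ) : ∃ g1 g2 : ℝ → ℝ,
    (∀ r, HasDerivAt (fun r => Real.sin r ^ a * Real.cos r ^ b) (g1 r) r) ∧
    (∀ r, HasDerivAt g1 (g2 r) r) ∧ (∀ r, |g1 r| ≤ ((a : ℝ) + b + 2) ^ 2) ∧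
    (∀ r, |g2 r| ≤ ((a : ℝ) + b + 2) ^ 2) := by
  refine ⟨_, _, aux_mono_deriv a b, fun r => ((aux_mono_deriv (a - 1) (b + 1) r).const_mul (a : ℝ)).sub
     ((aux_mono_deriv (a + 1) (b - 1) r).const_mul (b : ℝ)), fun r => ?_, fun r => ?_⟩
  · have h1 := aux_mono_bound (a - 1) (b + 1) r
    have h2 := aux_mono_bound (a + 1) (b - 1) r
    have ha : (0 : ℝ) ≤ a := by positivity
    have hb : (0 : ℝ) ≤ b := by positivity
    refine (abs_sub _ _).trans ?_
    rw [abs_mul (Nat.cast _ : ℝ), abs_of_nonneg ha, abs_mul (Nat.cast _ : ℝ), abs_of_nonneg hb]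
    nlinarith
  · have key : ∀ (c d : ℕ), |(c : ℝ) * (Real.sin r ^ (c - 1) * Real.cos r ^ (d + 1)) -
        d * (Real.sin r ^ (c + 1) * Real.cos r ^ (d - 1))| ≤ c + d := by
      intro c d
      have h1 := aux_mono_bound (c - 1) (d + 1) r
      have h2 := aux_mono_bound (c + 1) (d - 1) r
      have ha : (0 : ℝ) ≤ c := by positivity
      have hb : (0 : ℝ) ≤ d := by positivity
      refine (abs_sub _ _).trans ?_
      rw [abs_mul (Nat.cast _ : ℝ), abs_of_nonneg ha, abs_mul (Nat.cast _ : ℝ), abs_of_nonneg hb]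
      nlinarith
    have h1 := key (a - 1) (b + 1)
    have h2 := key (a + 1) (b - 1)
    have ha : (0 : ℝ) ≤ a := by positivity
    have hb : (0 : ℝ) ≤ b := by positivity
    have ha' : ((a - 1 : ℕ) : ℝ) ≤ a := by exact_mod_cast Nat.sub_le _ _
    have hb' : ((b - 1 : ℕ) : ℝ) ≤ b := by exact_mod_cast Nat.sub_le _ _
    refine (abs_sub _ _).trans ?_
    rw [abs_mul (Nat.cast _ : ℝ), abs_of_nonneg ha, abs_mul (Nat.cast _ : ℝ), abs_of_nonneg hb]
    push_cast at h1 h2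
    have h1' := mul_le_mul_of_nonneg_left (h1.trans (show _ ≤ (a : ℝ) + b + 2 by linarith)) ha
    have h2' := mul_le_mul_of_nonneg_left (h2.trans (show _ ≤ (a : ℝ) + b + 2 by linarith)) hb
    push_cast
    nlinarith

lemma auxc_bound (k α β : ℕ) (Y : ℝ) (hα : (α : ℝ) + k ≤ Y) (hβ : (β : ℝ) + k ≤ Y) :
    ∑ s ∈ Finset.range (k + 1), |auxc k α β s| ≤ (2 * Y) ^ k := by
  have hY : 0 ≤ Y := le_trans (by positivity) hα
  have h : ∀ s ∈ Finset.range (k + 1), |auxc k α β s| ≤ (k.choose s : ℝ) * Y ^ k := by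
    intro s hs
    have hs' : s ≤ k := by simpa [Nat.lt_succ_iff] using hs
    unfold auxc
    simp only [abs_mul, abs_div, abs_pow, abs_neg, abs_one, one_pow, Nat.abs_cast, one_mul]
    have h1 : (((α + k).descFactorial (k - s) : ℕ) : ℝ) ≤ Y ^ (k - s) := by
      calc (((α + k).descFactorial (k - s) : ℕ) : ℝ) ≤ (((α + k) ^ (k - s) : ℕ) : ℝ) := by
            exact_mod_cast Nat.descFactorial_le_pow _ _
        _ ≤ _ := by push_cast; gcongr
    have h2 : (((β + k).descFactorial s : ℕ) : ℝ) ≤ Y ^ s := by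
      calc (((β + k).descFactorial s : ℕ) : ℝ) ≤ (((β + k) ^ s : ℕ) : ℝ) := by
            exact_mod_cast Nat.descFactorial_le_pow _ _
        _ ≤ _ := by push_cast; gcongr
    have h3 : (1 : ℝ) / (k.factorial : ℝ) ≤ 1 := by
      rw [div_le_one (by positivity)]
      exact_mod_cast Nat.one_le_iff_ne_zero.2 (Nat.factorial_ne_zero k)
    have e : Y ^ k = Y ^ (k - s) * Y ^ s := by rw [← pow_add]; congr 1; omega
    rw [e]
    calc _ ≤ 1 * ((k.choose s : ℝ) * (Y ^ (k - s) * Y ^ s)) := by gcongr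
      _ = _ := by ring
  refine (Finset.sum_le_sum h).trans ?_
  rw [← Finset.sum_mul, mul_pow]
  have : (∑ s ∈ Finset.range (k + 1), (k.choose s : ℝ)) = 2 ^ k := by
    exact_mod_cast Nat.sum_range_choose k
  rw [this]

lemma auxF_bound (k α β m : ℕ) (Y : ℝ) (hα : (α : ℝ) + k ≤ Y) (hβ : (β : ℝ) + k ≤ Y) :
    ∃ F1 F2 : ℝ → ℝ, (∀ r, HasDerivAt (auxF k α β m) (F1 r) r) ∧ (∀ r, HasDerivAt F1 (F2 r) r) ∧
    (∀ r, |auxF k α β m r| ≤ (2 * Y) ^ k * (2 * k + m + 2) ^ 2) ∧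
    (∀ r, |F1 r| ≤ (2 * Y) ^ k * (2 * k + m + 2) ^ 2) ∧
    (∀ r, |F2 r| ≤ (2 * Y) ^ k * (2 * k + m + 2) ^ 2) := by
  choose g1 g2 h1 h2 h3 h4 using aux_mono
  have hF : auxF k α β m = fun r => ∑ s ∈ Finset.range (k + 1),
    auxc k α β s * (Real.sin r ^ (2 * s) * Real.cos r ^ (2 * (k - s) + m)) := by
    funext r; exact auxF_eq k α β m r
  have gen : ∀ g : ℕ → ℝ, (∀ s ∈ Finset.range (k + 1), |g s| ≤ (2 * (k : ℝ) + m + 2) ^ 2) →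
      |∑ s ∈ Finset.range (k + 1), auxc k α β s * g s| ≤ (2 * Y) ^ k * (2 * k + m + 2) ^ 2 := by
    intro g hg
    refine (Finset.abs_sum_le_sum_abs _ _).trans ?_
    calc _ ≤ ∑ s ∈ Finset.range (k + 1), |auxc k α β s| * (2 * (k : ℝ) + m + 2) ^ 2 := by
          refine Finset.sum_le_sum fun s hs => ?_
          rw [abs_mul]
          exact mul_le_mul_of_nonneg_left (hg s hs) (abs_nonneg _)
      _ ≤ _ := by
          rw [← Finset.sum_mul]
          gcongr
          exact auxc_bound k α β Y hα hβ
  have cst : ∀ s ∈ Finset.range (k + 1),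
      (((2 * s : ℕ) : ℝ) + ((2 * (k - s) + m : ℕ) : ℝ) + 2) ^ 2 = (2 * (k : ℝ) + m + 2) ^ 2 := by
    intro s hs
    have hs' : s ≤ k := by simpa [Nat.lt_succ_iff] using hs
    push_cast [Nat.cast_sub hs']
    ring
  refine ⟨fun r => ∑ s ∈ Finset.range (k + 1), auxc k α β s * g1 (2 * s) (2 * (k - s) + m) r,
    fun r => ∑ s ∈ Finset.range (k + 1), auxc k α β s * g2 (2 * s) (2 * (k - s) + m) r,
    fun r => ?_, fun r => ?_, fun r => ?_, fun r => ?_, fun r => ?_⟩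
  · rw [hF]
    exact HasDerivAt.fun_sum fun s _ => (h1 _ _ r).const_mul _
  · exact HasDerivAt.fun_sum fun s _ => (h2 _ _ r).const_mul _
  · rw [hF]
    refine gen _ fun s _ => (aux_mono_bound _ _ r).trans ?_
    have : (0 : ℝ) ≤ k := by positivity
    have : (0 : ℝ) ≤ m := by positivity
    nlinarith
  · exact gen _ fun s hs => (h3 _ _ r).trans (cst s hs).le
  · exact gen _ fun s hs => (h4 _ _ r).trans (cst s hs).le

lemma auxF_ode (k α β m : ℕ) (hm : β = m + 1) (F1 F2 : ℝ → ℝ)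
    (h1 : ∀ r, HasDerivAt (auxF k α β m) (F1 r) r)
    (h2 : ∀ r, HasDerivAt F1 (F2 r) r) (r : ℝ) (hs : Real.sin r ≠ 0) (hc : Real.cos r ≠ 0) :
    F2 r + ((2 * (α : ℝ) + 1) * Real.cot r - 3 * Real.tan r) * F1 r
      - Real.tan r ^ 2 * (m * (m + 2)) * auxF k α β m r =
      - (4 * (k * (k + α + β + 1)) + 2 * (α + 1) * m) * auxF k α β m r := by
  set q := auxQ k α β with hq
  have hx : ∀ r, HasDerivAt (fun r : ℝ => Real.cos (2 * r)) (-4 * Real.sin r * Real.cos r) r := by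
    intro r
    have := (Real.hasDerivAt_cos (2 * r)).comp r ((hasDerivAt_id r).const_mul 2)
    convert! this using 1
    simp [Real.sin_two_mul]; ring
  have hp : ∀ (p : ℝ[X]) r, HasDerivAt (fun r : ℝ => p.eval (Real.cos (2 * r)))
      ((derivative p).eval (Real.cos (2 * r)) * (-4 * Real.sin r * Real.cos r)) r := by
    intro p r
    exact (p.hasDerivAt (Real.cos (2 * r))).comp r (hx r)
  -- work with the product `cos r * F'`
  have hcm : ∀ r, HasDerivAt (fun r => Real.cos r ^ m) (m * Real.cos r ^ (m - 1) * (- Real.sin r)) r :=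
    fun r => (Real.hasDerivAt_cos r).pow m
  have hF1 : ∀ r, F1 r = m * Real.cos r ^ (m - 1) * (- Real.sin r) * q.eval (Real.cos (2 * r)) +
      Real.cos r ^ m * ((derivative q).eval (Real.cos (2 * r)) * (-4 * Real.sin r * Real.cos r)) :=
    fun r => (h1 r).unique ((hcm r).mul (hp q r))
  have hF1c : ∀ r, Real.cos r * F1 r = Real.cos r ^ m * (- m * Real.sin r * q.eval (Real.cos (2 * r))
      - 4 * Real.sin r * Real.cos r ^ 2 * (derivative q).eval (Real.cos (2 * r))) := by
    intro r
    rw [hF1]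
    rcases m with _ | m
    · simp; ring
    · simp; ring
  have hd1 : HasDerivAt (fun r => Real.cos r * F1 r) (- Real.sin r * F1 r + Real.cos r * F2 r) r :=
    (Real.hasDerivAt_cos r).mul (h2 r)
  have hd2 : HasDerivAt (fun r => Real.cos r ^ m * (- m * Real.sin r * q.eval (Real.cos (2 * r))
      - 4 * Real.sin r * Real.cos r ^ 2 * (derivative q).eval (Real.cos (2 * r)))) _ r :=
    (hcm r).mul ((((Real.hasDerivAt_sin r).const_mul (-(m : ℝ))).mul (hp q r)).sub
      ((((Real.hasDerivAt_sin r).const_mul 4).mul ((Real.hasDerivAt_cos r).pow 2)).mul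
        (hp (derivative q) r)))
  have he := hd1.unique (by rw [funext hF1c]; exact hd2)
  have hode := auxQ_ode k α β (Real.cos (2 * r))
  rw [← hq] at hode
  have hcos : Real.cos (2 * r) = 2 * Real.cos r ^ 2 - 1 := Real.cos_two_mul r
  have hFc := hF1c r
  have hFv : auxF k α β m r = Real.cos r ^ m * q.eval (Real.cos (2 * r)) := rfl
  rw [hFv]
  have hpm : (m : ℝ) * Real.cos r ^ (m - 1) * Real.cos r = m * Real.cos r ^ m := by
    rcases m with _ | m
    · simp
    · simp; ring
  generalize (derivative (derivative q)).eval (Real.cos (2 * r)) = q2 at *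
  generalize (derivative q).eval (Real.cos (2 * r)) = q1 at *
  generalize q.eval (Real.cos (2 * r)) = q0 at *
  rw [hcos] at hode
  have hsc := Real.sin_sq_add_cos_sq r
  rw [Real.tan_eq_sin_div_cos, Real.cot_eq_cos_div_sin]
  generalize hss : Real.sin r = S at *
  generalize hcc : Real.cos r = c at *
  generalize F1 r = f1 at *
  generalize F2 r = f2 at *
  subst hm
  have hS : S ^ 2 = 1 - c ^ 2 := by linarith
  have he' : -S * f1 + c * f2 =
    ↑m * c ^ (m - 1) * -S * (-↑m * S * q0 - 4 * S * c ^ 2 * q1) +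
      c ^ m * (-↑m * c * q0 + -↑m * S * (q1 * (-4 * S * c)) -
          ((4 * c * c ^ 2 + 4 * S * (2 * c * -S)) * q1 +
            (4 * S * c ^ 2) * (q2 * (-4 * S * c)))) := by
    rw [he]
    simp [hcc, hss]
  clear he hd2 hd1
  have k2 : c ^ 2 * f2 = c ^ m * ((1 - c ^ 2) * (-m * q0 - 4 * c ^ 2 * q1 + m ^ 2 * q0 +
      8 * m * c ^ 2 * q1 + 8 * c ^ 2 * q1 + 16 * c ^ 4 * q2) - m * c ^ 2 * q0 - 4 * c ^ 4 * q1) := by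
    linear_combination c * he' + S * hFc + (S ^ 2 * (m * q0 + 4 * c ^ 2 * q1)) * hpm +
      c ^ m * (-m * q0 - 4 * c ^ 2 * q1 + m ^ 2 * q0 +
      8 * m * c ^ 2 * q1 + 8 * c ^ 2 * q1 + 16 * c ^ 4 * q2) * hS
  field_simp
  push_cast at hode ⊢
  linear_combination S * k2 + ((2 * α + 1) * c ^ 2 - 3 * S ^ 2) * hFc +
    (S * c ^ m * (3 * (m * q0 + 4 * c ^ 2 * q1) - m * (m + 2) * q0)) * hS +
    4 * c ^ m * c ^ 2 * S * hode
end Aux2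
section Aux3

lemma aux_tsum2 {ι : Type*} (g g1 g2 : ι → ℝ → ℝ) (u : ι → ℝ) (hu : Summable u)
    (h1 : ∀ i x, HasDerivAt (g i) (g1 i x) x) (h2 : ∀ i x, HasDerivAt (g1 i) (g2 i x) x)
    (b0 : ∀ i x, |g i x| ≤ u i) (b1 : ∀ i x, |g1 i x| ≤ u i) (b2 : ∀ i x, |g2 i x| ≤ u i) (x : ℝ) :
    deriv (fun x => ∑' i, g i x) x = ∑' i, g1 i x ∧
    iteratedDeriv 2 (fun x => ∑' i, g i x) x = ∑' i, g2 i x ∧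
    Summable (fun i => g1 i x) ∧ Summable (fun i => g2 i x) := by
  have s0 : Summable (fun i => g i x) := Summable.of_norm_bounded hu fun i => b0 i x
  have s1 : Summable (fun i => g1 i x) := Summable.of_norm_bounded hu fun i => b1 i x
  have s2 : Summable (fun i => g2 i x) := Summable.of_norm_bounded hu fun i => b2 i x
  have d1 : ∀ y, HasDerivAt (fun x => ∑' i, g i x) (∑' i, g1 i y) y :=
    hasDerivAt_tsum hu h1 b1 s0
  have d2 : ∀ y, HasDerivAt (fun x => ∑' i, g1 i x) (∑' i, g2 i y) y :=
    hasDerivAt_tsum hu h2 b2 s1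
  refine ⟨(d1 x).deriv, ?_, s1, s2⟩
  rw [iteratedDeriv_succ, iteratedDeriv_one]
  have : deriv (fun x => ∑' i, g i x) = fun x => ∑' i, g1 i x := funext fun y => (d1 y).deriv
  rw [this]
  exact (d2 x).deriv

noncomputable def auxV (m : ℕ) (η : ℝ) : ℝ :=
  ∑ j ∈ Finset.range (m + 1), Real.cos (((m : ℝ) - 2 * j) * η)

noncomputable def auxV1 (m : ℕ) (η : ℝ) : ℝ :=
  ∑ j ∈ Finset.range (m + 1), -(((m : ℝ) - 2 * j) * Real.sin (((m : ℝ) - 2 * j) * η))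

noncomputable def auxV2 (m : ℕ) (η : ℝ) : ℝ :=
  ∑ j ∈ Finset.range (m + 1), -(((m : ℝ) - 2 * j) ^ 2 * Real.cos (((m : ℝ) - 2 * j) * η))

lemma auxV_d1 (m : ℕ) (η : ℝ) : HasDerivAt (auxV m) (auxV1 m η) η := by
  refine HasDerivAt.fun_sum fun j _ => ?_
  have := (Real.hasDerivAt_cos (((m : ℝ) - 2 * j) * η)).comp η
    ((hasDerivAt_id η).const_mul ((m : ℝ) - 2 * j))
  convert! this using 1
  simp; ring

lemma auxV_d2 (m : ℕ) (η : ℝ) : HasDerivAt (auxV1 m) (auxV2 m η) η := by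
  refine HasDerivAt.fun_sum fun j _ => ?_
  have := (((Real.hasDerivAt_sin (((m : ℝ) - 2 * j) * η)).comp η
    ((hasDerivAt_id η).const_mul ((m : ℝ) - 2 * j))).const_mul ((m : ℝ) - 2 * j)).neg
  convert! this using 1
  simp; ring

lemma auxV_sin (m : ℕ) (η : ℝ) : auxV m η * Real.sin η = Real.sin ((m + 1) * η) := by
  have h : ∀ N : ℕ, 2 * ((∑ j ∈ Finset.range N, Real.cos (((m : ℝ) - 2 * j) * η)) * Real.sin η) =
      Real.sin ((m + 1) * η) - Real.sin (((m : ℝ) + 1 - 2 * N) * η) := by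
    intro N
    induction N with
    | zero => simp
    | succ N ih =>
      rw [Finset.sum_range_succ, add_mul, mul_add, ih]
      push_cast
      have e1 : ((m : ℝ) + 1 - 2 * N) * η = ((m : ℝ) - 2 * N) * η + η := by ring
      have e2 : ((m : ℝ) + 1 - 2 * (N + 1)) * η = ((m : ℝ) - 2 * N) * η - η := by ring
      rw [e1, e2, Real.sin_add, Real.sin_sub]
      ring
  have h2 := h (m + 1)
  have e : ((m : ℝ) + 1 - 2 * ((m + 1 : ℕ) : ℝ)) * η = -((m + 1) * η) := by push_cast; ring
  rw [e, Real.sin_neg] at h2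
  unfold auxV
  linarith

lemma auxV_vert (m : ℕ) (η : ℝ) (h : η ∈ Set.Ioo 0 π) : vertFactor m η = auxV m η := by
  have hs := Real.sin_pos_of_pos_of_lt_pi h.1 h.2
  rw [vertFactor, if_neg h.1.ne', ← auxV_sin, mul_div_cancel_right₀ _ hs.ne']

lemma auxV_ode (m : ℕ) (η : ℝ) (h : Real.sin η ≠ 0) :
    auxV2 m η + 2 * Real.cot η * auxV1 m η = - (m * (m + 2)) * auxV m η := by
  have d1 : ∀ η, auxV1 m η * Real.sin η + auxV m η * Real.cos η = (m + 1) * Real.cos ((m + 1) * η) := by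
    intro η
    have a := (auxV_d1 m η).mul (Real.hasDerivAt_sin η)
    have b := (Real.hasDerivAt_sin (((m : ℝ) + 1) * η)).comp η ((hasDerivAt_id η).const_mul ((m : ℝ) + 1))
    have c := a.unique (b.congr_of_eventuallyEq (Filter.Eventually.of_forall fun x => auxV_sin m x))
    rw [c]; simp; ring
  have a := ((auxV_d2 m η).mul (Real.hasDerivAt_sin η)).add ((auxV_d1 m η).mul (Real.hasDerivAt_cos η))
  have b := ((Real.hasDerivAt_cos (((m : ℝ) + 1) * η)).comp η
    ((hasDerivAt_id η).const_mul ((m : ℝ) + 1))).const_mul ((m : ℝ) + 1)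
  have c := a.unique (b.congr_of_eventuallyEq (Filter.Eventually.of_forall fun x => d1 x))
  have s := auxV_sin m η
  simp at c
  rw [Real.cot_eq_cos_div_sin]
  field_simp
  linear_combination c + (m + 1) ^ 2 * s

lemma auxV_coef (m j : ℕ) (hj : j ∈ Finset.range (m + 1)) : |(m : ℝ) - 2 * j| ≤ m + 1 := by
  have : (j : ℝ) ≤ m := by
    have : j ≤ m := by simpa [Nat.lt_succ_iff] using hj
    exact_mod_cast this
  have : (0 : ℝ) ≤ j := by positivity
  rw [abs_le]; constructor <;> linarith

lemma auxV_gen (m : ℕ) (f : ℕ → ℝ) (h : ∀ j ∈ Finset.range (m + 1), |f j| ≤ ((m : ℝ) + 1) ^ 2) :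
    |∑ j ∈ Finset.range (m + 1), f j| ≤ ((m : ℝ) + 1) ^ 3 := by
  refine (Finset.abs_sum_le_sum_abs _ _).trans ((Finset.sum_le_sum h).trans ?_)
  simp
  apply le_of_eq; ring

lemma auxV_b0 (m : ℕ) (η : ℝ) : |auxV m η| ≤ ((m : ℝ) + 1) ^ 3 := by
  refine auxV_gen m _ fun j _ => (Real.abs_cos_le_one _).trans ?_
  have : (0 : ℝ) ≤ m := by positivity
  nlinarith

lemma auxV_b1 (m : ℕ) (η : ℝ) : |auxV1 m η| ≤ ((m : ℝ) + 1) ^ 3 := by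
  refine auxV_gen m _ fun j hj => ?_
  rw [abs_neg, abs_mul]
  have h0 : (0 : ℝ) ≤ m := by positivity
  calc _ ≤ ((m : ℝ) + 1) * 1 :=
        mul_le_mul (auxV_coef m j hj) (Real.abs_sin_le_one _) (abs_nonneg _) (by positivity)
    _ ≤ _ := by nlinarith

lemma auxV_b2 (m : ℕ) (η : ℝ) : |auxV2 m η| ≤ ((m : ℝ) + 1) ^ 3 := by
  refine auxV_gen m _ fun j hj => ?_
  rw [abs_neg, abs_mul, abs_pow]
  calc _ ≤ ((m : ℝ) + 1) ^ 2 * 1 :=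
        mul_le_mul (pow_le_pow_left₀ (abs_nonneg _) (auxV_coef m j hj) 2)
          (Real.abs_cos_le_one _) (abs_nonneg _) (by positivity)
    _ = _ := by ring

noncomputable def auxX (n : ℕ) (mk : ℕ × ℕ) : ℝ := (mk.2 : ℝ) + mk.1 + 2 * n
noncomputable def auxl (n : ℕ) (mk : ℕ × ℕ) : ℝ :=
  4 * ((mk.2 : ℝ) * (mk.2 + 2 * n + mk.1 + 1) + n * mk.1)

lemma aux_summable (n : ℕ) (hn : 1 ≤ n) (D : ℕ) (τ : ℝ) (hτ : 0 < τ) :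
    Summable (fun mk : ℕ × ℕ => auxX n mk ^ D * (2 * auxX n mk) ^ mk.2 *
      Real.exp (-(auxl n mk) * τ)) := by
  have hg : Summable (fun k : ℕ => Real.exp (k * (-τ))) :=
    Real.summable_exp_nat_mul_iff.2 (by linarith)
  have hgg := (hg.mul_of_nonneg hg (fun _ => (Real.exp_pos _).le) (fun _ => (Real.exp_pos _).le)).mul_left
    ((D.factorial / τ ^ D) * Real.exp (2 * n * τ + (1 / τ + 2 * τ) ^ 2 / (8 * τ)))
  refine Summable.of_nonneg_of_le (fun mk => ?_) (fun mk => ?_) hgg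
  · unfold auxX; positivity
  obtain ⟨m, k⟩ := mk
  have hX0 : 0 ≤ auxX n (m, k) := by unfold auxX; positivity
  have hX : auxX n (m, k) = k + m + 2 * n := rfl
  have hl : auxl n (m, k) = 4 * ((k : ℝ) * (auxX n (m, k) + 1) + n * m) := by
    unfold auxl auxX; ring
  rw [hl]
  set X := auxX n (m, k)
  have hk : (0 : ℝ) ≤ k := by positivity
  have hm : (0 : ℝ) ≤ m := by positivity
  have hn' : (1 : ℝ) ≤ n := by exact_mod_cast hn
  have a1 : X ^ D ≤ (D.factorial / τ ^ D) * Real.exp (τ * X) := by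
    have := Real.pow_div_factorial_le_exp (τ * X) (by positivity) D
    rw [mul_pow, div_le_iff₀ (by positivity)] at this
    rw [div_mul_eq_mul_div, le_div_iff₀ (by positivity)]
    linarith
  have a2 : (2 * X) ^ k ≤ Real.exp (k * (1 / τ + 2 * τ * X)) := by
    rw [Real.exp_nat_mul]
    apply pow_le_pow_left₀ (by positivity)
    rw [Real.exp_add]
    have h1 : 2 * τ * X ≤ Real.exp (2 * τ * X) := by linarith [Real.add_one_le_exp (2 * τ * X)]
    have h2 : 1 / τ ≤ Real.exp (1 / τ) := by linarith [Real.add_one_le_exp (1 / τ)]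
    calc 2 * X = 1 / τ * (2 * τ * X) := by field_simp
      _ ≤ _ := mul_le_mul h2 h1 (by positivity) (by positivity)
  calc X ^ D * (2 * X) ^ k * Real.exp (-(4 * ((k : ℝ) * (X + 1) + n * m)) * τ)
      ≤ ((D.factorial / τ ^ D) * Real.exp (τ * X)) * Real.exp (k * (1 / τ + 2 * τ * X)) *
        Real.exp (-(4 * ((k : ℝ) * (X + 1) + n * m)) * τ) := by gcongr
    _ = (D.factorial / τ ^ D) * Real.exp (τ * X + k * (1 / τ + 2 * τ * X) +
        -(4 * ((k : ℝ) * (X + 1) + n * m)) * τ) := by rw [Real.exp_add, Real.exp_add]; ring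
    _ ≤ (D.factorial / τ ^ D) * Real.exp ((2 * n * τ + (1 / τ + 2 * τ) ^ 2 / (8 * τ)) +
        (m * (-τ) + k * (-τ))) := by
        refine mul_le_mul_of_nonneg_left (Real.exp_le_exp.2 ?_) (by positivity)
        have sq : k * (1 / τ + 2 * τ) - 2 * τ * k ^ 2 ≤ (1 / τ + 2 * τ) ^ 2 / (8 * τ) := by
          rw [le_div_iff₀ (by positivity)]
          nlinarith [sq_nonneg ((1 / τ + 2 * τ) - 4 * τ * k)]
        have e1 : 0 ≤ τ * (m * (n - 1)) := by
          have : (0 : ℝ) ≤ n - 1 := by linarith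
          positivity
        have e2 : 0 ≤ τ * (k * m) := by positivity
        have e3 : 0 ≤ τ * (k * n) := by positivity
        have e4 : 0 ≤ τ * k := by positivity
        have e5 : 0 ≤ τ * m := by positivity
        rw [hX]
        nlinarith
    _ = _ := by simp only [Real.exp_add]; ring

end Aux3
section Aux4

noncomputable def auxA (n : ℕ) (mk : ℕ × ℕ) : ℝ :=
  (Real.Gamma (2 * n) / (2 * Real.pi ^ (2 * n + 2))) *
    (2 * (mk.2 : ℝ) + mk.1 + 2 * n + 1) * ((mk.1 : ℝ) + 1) *
    (Nat.choose (mk.2 + mk.1 + 2 * n) (2 * n - 1) : ℝ)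

noncomputable def auxG (n : ℕ) (mk : ℕ × ℕ) (r : ℝ) : ℝ := auxF mk.2 (2 * n - 1) (mk.1 + 1) mk.1 r

lemma auxA_bound (n : ℕ) (hn : 1 ≤ n) : ∃ K : ℝ, 0 ≤ K ∧ ∀ mk, |auxA n mk| ≤ K * auxX n mk ^ (2 * n + 1) := by
  have hn' : (1 : ℝ) ≤ n := by exact_mod_cast hn
  have hG : 0 ≤ Real.Gamma (2 * n) := (Real.Gamma_pos_of_pos (by positivity)).le
  refine ⟨(Real.Gamma (2 * n) / (2 * Real.pi ^ (2 * n + 2))) * 2, by positivity, fun ⟨m, k⟩ => ?_⟩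
  rw [abs_of_nonneg (by unfold auxA; positivity)]
  unfold auxA auxX
  simp only
  have hk : (0 : ℝ) ≤ k := by positivity
  have hm : (0 : ℝ) ≤ m := by positivity
  have h1 : 2 * (k : ℝ) + m + 2 * n + 1 ≤ 2 * (k + m + 2 * n) := by linarith
  have h2 : (m : ℝ) + 1 ≤ k + m + 2 * n := by linarith
  have h3 : (Nat.choose (k + m + 2 * n) (2 * n - 1) : ℝ) ≤ ((k : ℝ) + m + 2 * n) ^ (2 * n - 1) := by
    exact_mod_cast Nat.choose_le_pow (k + m + 2 * n) (2 * n - 1)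
  have e : ((k : ℝ) + m + 2 * n) ^ (2 * n + 1) =
      (k + m + 2 * n) * (k + m + 2 * n) * (k + m + 2 * n) ^ (2 * n - 1) := by
    rw [← pow_two, ← pow_add]; congr 1; omega
  rw [e]
  calc _ ≤ Real.Gamma (2 * n) / (2 * Real.pi ^ (2 * n + 2)) * (2 * (k + m + 2 * n)) *
        (k + m + 2 * n) * ((k : ℝ) + m + 2 * n) ^ (2 * n - 1) := by gcongr
    _ = _ := by ring

lemma aux_pTerm (n : ℕ) (J : ℕ → ℕ → ℕ → ℝ → ℝ) (hJ : IsJacobi J) (t r η : ℝ)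
    (hη : η ∈ Set.Ioo 0 π) (mk : ℕ × ℕ) :
    pTerm n J t r η mk = auxA n mk * Real.exp (-(auxl n mk) * t) * auxV mk.1 η * auxG n mk r := by
  rw [pTerm, auxV_vert _ _ hη, aux_J J hJ, auxG, auxF, auxA, auxl]
  ring

lemma aux_master (n : ℕ) (hn : 1 ≤ n) (τ : ℝ) (hτ : 0 < τ) :
    ∃ u : ℕ × ℕ → ℝ, Summable u ∧ ∀ (mk : ℕ × ℕ) (s v f : ℝ), τ ≤ s → |v| ≤ ((mk.1 : ℝ) + 1) ^ 3 →
      |f| ≤ (2 * auxX n mk) ^ mk.2 * (2 * mk.2 + mk.1 + 2) ^ 2 →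
      |auxA n mk * Real.exp (-(auxl n mk) * s) * v * f| ≤ u mk ∧
      |auxl n mk * (auxA n mk * Real.exp (-(auxl n mk) * s) * v * f)| ≤ u mk := by
  obtain ⟨K, hK, hA⟩ := auxA_bound n hn
  have hn' : (1 : ℝ) ≤ n := by exact_mod_cast hn
  refine ⟨_, (aux_summable n hn (2 * n + 8) τ hτ).mul_left (48 * K), ?_⟩
  rintro ⟨m, k⟩ s v f hs hv hf
  have hA := hA (m, k)
  have hk : (0 : ℝ) ≤ k := by positivity
  have hm : (0 : ℝ) ≤ m := by positivity
  have hXd : auxX n (m, k) = k + m + 2 * n := rfl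
  have hld : auxl n (m, k) = 4 * ((k : ℝ) * (auxX n (m, k) + 1) + n * m) := by
    unfold auxl auxX; ring
  have hl0 : 0 ≤ auxl n (m, k) := by unfold auxl; positivity
  simp only at hv hf ⊢
  generalize auxA n (m, k) = A at *
  set X := auxX n (m, k)
  set l := auxl n (m, k)
  have hX1 : 1 ≤ X := by linarith
  have hX0 : 0 ≤ X := by linarith
  have hl : l ≤ 12 * X ^ 2 := by
    have b1 : (k : ℝ) * (X + 1) ≤ X * (X + X) := by
      apply mul_le_mul <;> first | positivity | linarith
    have b2 : (n : ℝ) * m ≤ X * X := by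
      apply mul_le_mul <;> first | positivity | linarith
    rw [hld]; nlinarith
  have hv' : |v| ≤ X ^ 3 := hv.trans (by gcongr; linarith)
  have hf' : |f| ≤ (2 * X) ^ k * (2 * X) ^ 2 := hf.trans (by gcongr; linarith)
  have hexp : Real.exp (-l * s) ≤ Real.exp (-l * τ) := by
    apply Real.exp_le_exp.2; nlinarith
  have hmain : |A * Real.exp (-l * s) * v * f| ≤
      K * X ^ (2 * n + 1) * Real.exp (-l * τ) * X ^ 3 * ((2 * X) ^ k * (2 * X) ^ 2) := by
    rw [abs_mul, abs_mul, abs_mul, Real.abs_exp]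
    gcongr
  have hfin : ∀ L : ℝ, 0 ≤ L → L ≤ 12 * X ^ 2 → L * |A * Real.exp (-l * s) * v * f| ≤
      48 * K * (X ^ (2 * n + 8) * (2 * X) ^ k * Real.exp (-l * τ)) := by
    intro L h0 hL
    calc _ ≤ (12 * X ^ 2) * (K * X ^ (2 * n + 1) * Real.exp (-l * τ) * X ^ 3 *
          ((2 * X) ^ k * (2 * X) ^ 2)) := mul_le_mul hL hmain (abs_nonneg _) (by positivity)
      _ = _ := by ring
  constructor
  · have := hfin 1 (by norm_num) (by nlinarith)
    rwa [one_mul] at this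
  · rw [abs_mul, abs_of_nonneg hl0]
    exact hfin l hl0 hl

end Aux4

/-- absolute convergence of the double series defining the subelliptic heat
kernel `p_t(r,η)` and the subelliptic heat equation it satisfies. -/
theorem stmt_0 (n : ℕ) (hn : 1 ≤ n) (J : ℕ → ℕ → ℕ → ℝ → ℝ) (hJ : IsJacobi J) :
    (∀ t r η : ℝ, 0 < t → r ∈ Set.Ico 0 (π / 2) → η ∈ Set.Ioo 0 π →
      Summable (fun mk : ℕ × ℕ => |pTerm n J t r η mk|)) ∧
    (∀ t r η : ℝ, t ∈ Set.Ioi (0 : ℝ) → r ∈ Set.Ioo 0 (π / 2) → η ∈ Set.Ioo 0 π →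
      deriv (fun s => pKernel n J s r η) t =
        iteratedDeriv 2 (fun ρ => pKernel n J t ρ η) r +
          ((4 * (n : ℝ) - 1) * Real.cot r - 3 * Real.tan r) *
            deriv (fun ρ => pKernel n J t ρ η) r +
          Real.tan r ^ 2 *
            (iteratedDeriv 2 (fun e => pKernel n J t r e) η +
              2 * Real.cot η * deriv (fun e => pKernel n J t r e) η)) := by
  have hn' : (1 : ℝ) ≤ n := by exact_mod_cast hn
  have hG : ∀ mk : ℕ × ℕ, ∃ F1 F2 : ℝ → ℝ, (∀ r, HasDerivAt (auxG n mk) (F1 r) r) ∧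
      (∀ r, HasDerivAt F1 (F2 r) r) ∧
      (∀ r, |auxG n mk r| ≤ (2 * auxX n mk) ^ mk.2 * (2 * mk.2 + mk.1 + 2) ^ 2) ∧
      (∀ r, |F1 r| ≤ (2 * auxX n mk) ^ mk.2 * (2 * mk.2 + mk.1 + 2) ^ 2) ∧
      (∀ r, |F2 r| ≤ (2 * auxX n mk) ^ mk.2 * (2 * mk.2 + mk.1 + 2) ^ 2) := by
    rintro ⟨m, k⟩
    have hm : (0 : ℝ) ≤ m := by positivity
    have hk : (0 : ℝ) ≤ k := by positivity
    refine auxF_bound k (2 * n - 1) (m + 1) m (auxX n (m, k)) ?_ ?_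
    · rw [Nat.cast_sub (by omega)]; unfold auxX; push_cast; linarith
    · unfold auxX; push_cast; linarith
  choose F1 F2 hF1 hF2 bF bF1 bF2 using hG
  constructor
  · intro t r η ht hr hη
    obtain ⟨u, hu, hb⟩ := aux_master n hn t ht
    refine Summable.of_nonneg_of_le (fun _ => abs_nonneg _) (fun mk => ?_) hu
    rw [aux_pTerm n J hJ t r η hη]
    exact (hb mk t _ _ le_rfl (auxV_b0 _ _) (bF mk r)).1
  · intro t r η ht hr hη
    have ht : 0 < t := ht
    have hsη : Real.sin η ≠ 0 := (Real.sin_pos_of_pos_of_lt_pi hη.1 hη.2).ne'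
    have hsr : Real.sin r ≠ 0 := (Real.sin_pos_of_pos_of_lt_pi hr.1 (by linarith [hr.2, Real.pi_pos])).ne'
    have hcr : Real.cos r ≠ 0 := (Real.cos_pos_of_mem_Ioo ⟨by linarith [hr.1, Real.pi_pos], hr.2⟩).ne'
    obtain ⟨u, hu, hb⟩ := aux_master n hn t ht
    obtain ⟨w, hw, hbw⟩ := aux_master n hn (t / 2) (by linarith)
    -- time derivative
    have ht1 : (fun s => pKernel n J s r η) = fun s => ∑' mk : ℕ × ℕ,
        auxA n mk * Real.exp (-(auxl n mk) * s) * auxV mk.1 η * auxG n mk r := by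
      funext s; exact tsum_congr fun mk => aux_pTerm n J hJ s r η hη mk
    have ht2 : deriv (fun s => pKernel n J s r η) t = ∑' mk : ℕ × ℕ,
        -(auxl n mk * (auxA n mk * Real.exp (-(auxl n mk) * t) * auxV mk.1 η * auxG n mk r)) := by
      rw [ht1]
      refine (hasDerivAt_tsum_of_isPreconnected (t := Set.Ioi (t / 2)) (y₀ := t) hw isOpen_Ioi
        isPreconnected_Ioi (g' := fun mk s =>
          -(auxl n mk * (auxA n mk * Real.exp (-(auxl n mk) * s) * auxV mk.1 η * auxG n mk r)))
        ?_ ?_ (by simp; linarith) ?_ (by simp; linarith)).deriv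
      · intro mk s _
        have := (((((hasDerivAt_id s).const_mul (-(auxl n mk))).exp).const_mul (auxA n mk)).mul_const
          (auxV mk.1 η)).mul_const (auxG n mk r)
        convert! this using 1
        simp; ring
      · intro mk s hs
        rw [norm_neg]
        exact (hbw mk s _ _ (le_of_lt hs) (auxV_b0 _ _) (bF mk r)).2
      · exact Summable.of_norm_bounded hu fun mk =>
          (hb mk t _ _ le_rfl (auxV_b0 _ _) (bF mk r)).1
    -- r derivatives
    have hr1 : (fun ρ => pKernel n J t ρ η) = fun ρ => ∑' mk : ℕ × ℕ,
        auxA n mk * Real.exp (-(auxl n mk) * t) * auxV mk.1 η * auxG n mk ρ := by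
      funext s; exact tsum_congr fun mk => aux_pTerm n J hJ t s η hη mk
    obtain ⟨r1, r2, rs1, rs2⟩ := aux_tsum2
      (fun mk ρ => auxA n mk * Real.exp (-(auxl n mk) * t) * auxV mk.1 η * auxG n mk ρ)
      (fun mk ρ => auxA n mk * Real.exp (-(auxl n mk) * t) * auxV mk.1 η * F1 mk ρ)
      (fun mk ρ => auxA n mk * Real.exp (-(auxl n mk) * t) * auxV mk.1 η * F2 mk ρ) u hu
      (fun mk ρ => (hF1 mk ρ).const_mul _) (fun mk ρ => (hF2 mk ρ).const_mul _)
      (fun mk ρ => (hb mk t _ _ le_rfl (auxV_b0 _ _) (bF mk ρ)).1)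
      (fun mk ρ => (hb mk t _ _ le_rfl (auxV_b0 _ _) (bF1 mk ρ)).1)
      (fun mk ρ => (hb mk t _ _ le_rfl (auxV_b0 _ _) (bF2 mk ρ)).1) r
    rw [← hr1] at r1 r2
    -- η derivatives
    have he1 : (fun e => pKernel n J t r e) =ᶠ[𝓝 η] fun e => ∑' mk : ℕ × ℕ,
        auxA n mk * Real.exp (-(auxl n mk) * t) * auxV mk.1 e * auxG n mk r := by
      filter_upwards [isOpen_Ioo.mem_nhds hη] with e he
      exact tsum_congr fun mk => aux_pTerm n J hJ t r e he mk
    obtain ⟨e1, e2, es1, es2⟩ := aux_tsum2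
      (fun mk e => auxA n mk * Real.exp (-(auxl n mk) * t) * auxV mk.1 e * auxG n mk r)
      (fun mk e => auxA n mk * Real.exp (-(auxl n mk) * t) * auxV1 mk.1 e * auxG n mk r)
      (fun mk e => auxA n mk * Real.exp (-(auxl n mk) * t) * auxV2 mk.1 e * auxG n mk r) u hu
      (fun mk e => ((auxV_d1 mk.1 e).const_mul _).mul_const _)
      (fun mk e => ((auxV_d2 mk.1 e).const_mul _).mul_const _)
      (fun mk e => (hb mk t _ _ le_rfl (auxV_b0 _ _) (bF mk r)).1)
      (fun mk e => (hb mk t _ _ le_rfl (auxV_b1 _ _) (bF mk r)).1)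
      (fun mk e => (hb mk t _ _ le_rfl (auxV_b2 _ _) (bF mk r)).1) η
    rw [← he1.deriv_eq] at e1
    rw [← he1.iteratedDeriv_eq] at e2
    rw [ht2, r1, r2, e1, e2, ← tsum_mul_left, ← tsum_mul_left,
      ← es2.tsum_add (es1.mul_left _), ← tsum_mul_left, ← rs2.tsum_add (rs1.mul_left _),
      ← (rs2.add (rs1.mul_left _)).tsum_add ((es2.add (es1.mul_left _)).mul_left _)]
    refine tsum_congr fun mk => ?_
    have o1 := auxV_ode mk.1 η hsη
    have o2 := auxF_ode mk.2 (2 * n - 1) (mk.1 + 1) mk.1 rfl (F1 mk) (F2 mk) (hF1 mk) (hF2 mk) r hsr hcr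
    have o3 : auxF mk.2 (2 * n - 1) (mk.1 + 1) mk.1 r = auxG n mk r := rfl
    rw [o3, Nat.cast_sub (by omega)] at o2
    push_cast at o2
    have o4 : auxl n mk = 4 * ((mk.2 : ℝ) * (mk.2 + 2 * n + mk.1 + 1) + n * mk.1) := rfl
    generalize Real.exp (-(auxl n mk) * t) = E
    rw [o4]
    linear_combination (-(auxA n mk * E * auxV mk.1 η)) * o2 -
      (auxA n mk * E * auxG n mk r * Real.tan r ^ 2) * o1
end

section
/- For every integer n ≥ 1, all integers k, m ≥ 0 and every t > 0, one has ∫_0^π ∫_0^{π/2} p_t(r,η)·(sin((m+1)η)/sin η)·(cos r)^m·P_k^{(2n−1,m+1)}(cos 2r)·(8π^{2n+1}/Γ(2n))·(sin r)^{4n−1}·(cos r)^3·(sin η)^2 dr dη = e^{−4[k(k+2n+m+1)+nm]t}·(m+1)·C(k+2n−1, k). In particular, as t → 0⁺ this integral tends to (m+1)·C(k+2n−1,k), the value of the test function (sin((m+1)η)/sin η)·(cos r)^m·P_k^{(2n−1,m+1)}(cos 2r) at (r,η)=(0,0). -/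
open Real MeasureTheory Filter Topology Set

namespace JacobiAux

open Polynomial in
/-- `2^k` times the Jacobi polynomial. -/
noncomputable def S (k α β : ℕ) : Polynomial ℝ :=
  ∑ i ∈ Finset.range (k + 1), (((α + k).choose (k - i) * (β + k).choose i : ℕ) : ℝ) •
    ((X - C 1) ^ i * (X + C 1) ^ (k - i))

open Polynomial in
noncomputable def W (k α β : ℕ) : Polynomial ℝ := (X - C 1) ^ (α + k) * (X + C 1) ^ (β + k)

open Polynomial in
lemma rodrigues (k α β : ℕ) :
    derivative^[k] (W k α β) =
      (k.factorial : ℝ) • ((X - C 1) ^ α * (X + C 1) ^ β * S k α β) := by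
  unfold W S
  rw [iterate_derivative_mul, Finset.mul_sum, Finset.smul_sum]
  refine Finset.sum_congr rfl fun i hi => ?_
  have hik : i ≤ k := by simpa [Nat.lt_succ_iff] using hi
  rw [iterate_derivative_X_sub_pow, iterate_derivative_X_add_pow]
  have h1 : α + k - (k - i) = α + i := by omega
  have h2 : β + k - i = β + (k - i) := by omega
  rw [h1, h2, Nat.descFactorial_eq_factorial_mul_choose, Nat.descFactorial_eq_factorial_mul_choose]
  have h3 := Nat.choose_mul_factorial_mul_factorial hik
  have h4 : (C ((k.choose i : ℕ) : ℝ)) * C ((i.factorial : ℕ) : ℝ) * C (((k - i).factorial : ℕ) : ℝ)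
      = C ((k.factorial : ℕ) : ℝ) := by
    rw [← C_mul, ← C_mul]; congr 1; exact_mod_cast h3
  simp only [nsmul_eq_mul, smul_eq_C_mul, Nat.cast_mul, C_mul, ← h4]
  simp only [pow_add, map_natCast]
  ring

lemma vander (k α β : ℕ) : ∑ i ∈ Finset.range (k + 1), (α + k).choose (k - i) * (β + k).choose i
    = (2 * k + α + β).choose k := by
  have : 2 * k + α + β = (β + k) + (α + k) := by ring
  rw [this, Nat.add_choose_eq, Finset.Nat.sum_antidiagonal_eq_sum_range_succ
    (fun i j => (β + k).choose i * (α + k).choose j)]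
  exact Finset.sum_congr rfl fun i _ => mul_comm _ _

open Polynomial in
lemma iteratedDeriv_poly (k : ℕ) (p : Polynomial ℝ) :
    iteratedDeriv k (fun x => p.eval x) = fun x => (derivative^[k] p).eval x := by
  induction k with
  | zero => simp
  | succ k ih =>
    rw [iteratedDeriv_succ, ih, Function.iterate_succ_apply']
    funext x
    simp

lemma J_eq {J : ℕ → ℕ → ℕ → ℝ → ℝ} (hJ : IsJacobi J) (k α β : ℕ) (x : ℝ) :
    J k α β x = (S k α β).eval x / 2 ^ k := by
  obtain ⟨⟨p, hp⟩, h⟩ := hJ k α β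
  have key : ∀ x ∈ Set.Ioo (-1 : ℝ) 1, J k α β x = (S k α β).eval x / 2 ^ k := by
    intro x hx
    rw [h x hx]
    unfold jacobiFormula
    have e : (fun y : ℝ => (1 - y) ^ (α + k) * (1 + y) ^ (β + k)) =
        fun y => (Polynomial.C ((-1) ^ (α + k)) * W k α β).eval y := by
      funext y
      simp only [W, Polynomial.eval_mul, Polynomial.eval_C, Polynomial.eval_pow,
        Polynomial.eval_sub, Polynomial.eval_X, Polynomial.eval_add]
      rw [← mul_assoc, ← mul_pow]
      congr 2 <;> ring
    rw [e, iteratedDeriv_poly]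
    simp only [Polynomial.iterate_derivative_C_mul, rodrigues]
    simp only [Polynomial.eval_mul, Polynomial.eval_C, Polynomial.eval_pow, Polynomial.eval_smul,
        Polynomial.eval_sub, Polynomial.eval_X, Polynomial.eval_add, smul_eq_mul]
    have h1 : (1 - x) ≠ 0 := by have := hx.2; linarith
    have h2 : (1 + x) ≠ 0 := by have := hx.1; linarith
    have h3 : (x - 1) ^ α = (-1) ^ α * (1 - x) ^ α := by rw [← mul_pow]; congr 1; ring
    rw [h3, zpow_neg, zpow_neg, zpow_natCast, zpow_natCast, add_comm x 1]
    have h4 : (k.factorial : ℝ) ≠ 0 := by positivity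
    have h5 : ((-1 : ℝ) ^ k) * (-1) ^ (α + k) * (-1) ^ α = 1 := by
      rw [← pow_add, ← pow_add]; exact Even.neg_one_pow ⟨α + k, by ring⟩
    field_simp
    linear_combination (S k α β).eval x * h5
  have : p = Polynomial.C ((2 ^ k)⁻¹) * S k α β := by
    apply Polynomial.eq_of_infinite_eval_eq
    apply (Set.Ioo_infinite (show (-1 : ℝ) < 1 by norm_num)).mono
    intro x hx
    simp only [Set.mem_ofPred_eq, Polynomial.eval_mul, Polynomial.eval_C]
    rw [← hp, key x hx]; ring
  rw [hp, this]; simp only [Polynomial.eval_mul, Polynomial.eval_C]; ring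

lemma J_bound {J : ℕ → ℕ → ℕ → ℝ → ℝ} (hJ : IsJacobi J) (k α β : ℕ) (x : ℝ) (hx : x ∈ Set.Icc (-1:ℝ) 1) :
    |J k α β x| ≤ ((2 * k + α + β).choose k : ℝ) := by
  rw [J_eq hJ, abs_div, abs_of_pos (by positivity : (0:ℝ) < 2 ^ k), div_le_iff₀ (by positivity),
    ← vander]
  unfold S
  rw [Polynomial.eval_finsetSum]
  push_cast
  rw [Finset.sum_mul]
  refine (Finset.abs_sum_le_sum_abs _ _).trans (Finset.sum_le_sum fun i hi => ?_)
  have hik : i ≤ k := by simpa [Nat.lt_succ_iff] using hi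
  simp only [Polynomial.eval_mul, Polynomial.eval_C, Polynomial.eval_pow, Polynomial.eval_smul,
        Polynomial.eval_sub, Polynomial.eval_X, Polynomial.eval_add, smul_eq_mul]
  rw [abs_mul, abs_of_nonneg (by positivity)]
  refine mul_le_mul_of_nonneg_left ?_ (by positivity)
  rw [abs_mul, abs_pow, abs_pow]
  have h1 : |x - 1| ≤ 2 := by rw [abs_le]; constructor <;> linarith [hx.1, hx.2]
  have h2 : |x + 1| ≤ 2 := by rw [abs_le]; constructor <;> linarith [hx.1, hx.2]
  calc _ ≤ (2:ℝ) ^ i * 2 ^ (k - i) := by gcongr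
    _ = 2 ^ k := by rw [← pow_add]; congr 1; omega

open Polynomial in
lemma S_natDegree (k α β : ℕ) : (S k α β).natDegree ≤ k := by
  unfold S
  refine natDegree_sum_le_of_forall_le _ _ fun i hi => ?_
  have hik : i ≤ k := by simpa [Nat.lt_succ_iff] using hi
  refine (natDegree_smul_le _ _).trans ?_
  refine natDegree_mul_le.trans ?_
  simp only [natDegree_pow, natDegree_X_sub_C, natDegree_X_add_C]; omega

open Polynomial in
lemma S_coeff (k α β : ℕ) : (S k α β).coeff k = ((2 * k + α + β).choose k : ℝ) := by
  unfold S
  rw [finsetSum_coeff, ← vander, Nat.cast_sum]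
  refine Finset.sum_congr rfl fun i hi => ?_
  have hik : i ≤ k := by simpa [Nat.lt_succ_iff] using hi
  have hm : ((X - C (1:ℝ)) ^ i * (X + C 1) ^ (k - i)).Monic :=
    ((monic_X_sub_C _).pow _).mul ((monic_X_add_C _).pow _)
  have hd : ((X - C (1:ℝ)) ^ i * (X + C 1) ^ (k - i)).natDegree = k := by
    rw [Monic.natDegree_mul ((monic_X_sub_C _).pow _) ((monic_X_add_C _).pow _)]
    simp only [natDegree_pow, natDegree_X_sub_C, natDegree_X_add_C]; omega
  have := hm.coeff_natDegree
  rw [hd] at this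
  rw [coeff_smul, this]; simp

open Polynomial in
lemma S_deriv (k α β : ℕ) : derivative^[k] (S k α β) =
    C ((k.factorial : ℝ) * ((2 * k + α + β).choose k : ℝ)) := by
  have h := natDegree_iterate_derivative (S k α β) k
  have h' := S_natDegree k α β
  rw [eq_C_of_natDegree_le_zero (h.trans (by omega)), coeff_iterate_derivative]
  rw [zero_add, S_coeff, Nat.descFactorial_self, nsmul_eq_mul]

open Polynomial in
lemma ibp (V Q : Polynomial ℝ) (h1 : V.eval 1 = 0) (h2 : V.eval (-1) = 0) :
    ∫ x in (-1:ℝ)..1, (derivative V).eval x * Q.eval x =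
      - ∫ x in (-1:ℝ)..1, V.eval x * (derivative Q).eval x := by
  have := intervalIntegral.integral_mul_deriv_eq_deriv_mul (a := (-1:ℝ)) (b := 1)
    (u := fun x => V.eval x) (v := fun x => Q.eval x)
    (u' := fun x => (derivative V).eval x) (v' := fun x => (derivative Q).eval x)
    (fun x _ => V.hasDerivAt x) (fun x _ => Q.hasDerivAt x)
    ((Polynomial.continuous _).intervalIntegrable _ _)
    ((Polynomial.continuous _).intervalIntegrable _ _)
  rw [this, h1, h2]; ring

open Polynomial in
lemma ibp_iter (V : Polynomial ℝ) (k : ℕ)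
    (h1 : ∀ j < k, (derivative^[j] V).eval 1 = 0) (h2 : ∀ j < k, (derivative^[j] V).eval (-1) = 0)
    (Q : Polynomial ℝ) :
    ∫ x in (-1:ℝ)..1, (derivative^[k] V).eval x * Q.eval x =
      (-1) ^ k * ∫ x in (-1:ℝ)..1, V.eval x * (derivative^[k] Q).eval x := by
  induction k generalizing Q with
  | zero => simp
  | succ k ih =>
    rw [Function.iterate_succ_apply', ibp _ _ (h1 k (by omega)) (h2 k (by omega)),
      ih (fun j hj => h1 j (by omega)) (fun j hj => h2 j (by omega)), ← Function.iterate_succ_apply]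
    ring

open Polynomial in
lemma W_vanish (k α β j : ℕ) (hj : j < k) : (derivative^[j] (W k α β)).eval 1 = 0 ∧
    (derivative^[j] (W k α β)).eval (-1) = 0 := by
  constructor
  · have : (X - C (1:ℝ)) ^ (α + k - j) ∣ derivative^[j] (W k α β) :=
      pow_sub_dvd_iterate_derivative_of_pow_dvd _ (Dvd.intro _ rfl)
    obtain ⟨q, hq⟩ := this
    rw [hq]
    simp [show α + k - j ≠ 0 by omega]
  · have : (X + C (1:ℝ)) ^ (β + k - j) ∣ derivative^[j] (W k α β) :=
      pow_sub_dvd_iterate_derivative_of_pow_dvd _ (Dvd.intro_left _ rfl)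
    obtain ⟨q, hq⟩ := this
    rw [hq]
    simp [show β + k - j ≠ 0 by omega]

lemma beta (a b : ℕ) : ∫ x in (-1:ℝ)..1, (x + 1) ^ a * (1 - x) ^ b =
    2 ^ (a + b + 1) * a.factorial * b.factorial / (a + b + 1).factorial := by
  induction b generalizing a with
  | zero =>
    simp only [pow_zero, mul_one]
    rw [intervalIntegral.integral_comp_add_right (fun x : ℝ => x ^ a), integral_pow]
    rw [Nat.factorial_succ]
    have : (a.factorial : ℝ) ≠ 0 := by positivity
    push_cast
    norm_num
    field_simp
  | succ b ih =>
    have h := intervalIntegral.integral_mul_deriv_eq_deriv_mul (a := (-1:ℝ)) (b := 1)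
      (u := fun x => (1 - x) ^ (b + 1)) (v := fun x => (x + 1) ^ (a + 1))
      (u' := fun x => ((b + 1 : ℕ) : ℝ) * (1 - x) ^ b * (-1))
      (v' := fun x => ((a + 1 : ℕ) : ℝ) * (x + 1) ^ a * 1)
      (fun x _ => by simpa using ((hasDerivAt_id x).const_sub 1).fun_pow (b + 1))
      (fun x _ => by simpa using ((hasDerivAt_id x).add_const 1).fun_pow (a + 1))
      ((by fun_prop : Continuous _).intervalIntegrable _ _)
      ((by fun_prop : Continuous _).intervalIntegrable _ _)
    have e1 : ∫ x in (-1:ℝ)..1, (1 - x) ^ (b + 1) * (((a + 1 : ℕ) : ℝ) * (x + 1) ^ a * 1) =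
        ((a + 1 : ℕ) : ℝ) * ∫ x in (-1:ℝ)..1, (x + 1) ^ a * (1 - x) ^ (b + 1) := by
      rw [← intervalIntegral.integral_const_mul]; congr 1; funext x; ring
    have e2 : ∫ x in (-1:ℝ)..1, (((b + 1 : ℕ) : ℝ) * (1 - x) ^ b * (-1)) * (x + 1) ^ (a + 1) =
        -((b + 1 : ℕ) : ℝ) * ∫ x in (-1:ℝ)..1, (x + 1) ^ (a + 1) * (1 - x) ^ b := by
      rw [← intervalIntegral.integral_const_mul]; congr 1; funext x; ring
    rw [e1, e2, ih] at h
    have hz : a + 1 + b + 1 = a + (b + 1) + 1 := by ring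
    rw [hz, Nat.factorial_succ a] at h
    rw [Nat.factorial_succ b]
    have ha : ((a + 1 : ℕ) : ℝ) ≠ 0 := by positivity
    apply mul_left_cancel₀ ha
    rw [h]
    push_cast
    simp
    ring

/-- orthogonality relation -/
lemma orth_aux (k l α β : ℕ) (hl : l ≤ k) :
    ∫ x in (-1:ℝ)..1, (1 - x) ^ α * (1 + x) ^ β * ((S k α β).eval x * (S l α β).eval x) =
      if l = k then ((2 * k + α + β).choose k : ℝ) * (2 ^ (2 * k + α + β + 1) * (β + k).factorial * (α + k).factorial
        / (2 * k + α + β + 1).factorial) else 0 := by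
  have hib := ibp_iter (W k α β) k (fun j hj => (W_vanish k α β j hj).1)
    (fun j hj => (W_vanish k α β j hj).2) (S l α β)
  rw [rodrigues] at hib
  have hk : (k.factorial : ℝ) ≠ 0 := by positivity
  have e1 : ∫ x in (-1:ℝ)..1, ((k.factorial : ℝ) • ((Polynomial.X - Polynomial.C 1) ^ α *
      (Polynomial.X + Polynomial.C 1) ^ β * S k α β)).eval x * (S l α β).eval x =
      k.factorial * (-1) ^ α *
       ∫ x in (-1:ℝ)..1, (1 - x) ^ α * (1 + x) ^ β * ((S k α β).eval x * (S l α β).eval x) := by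
    rw [← intervalIntegral.integral_const_mul]; congr 1; funext x
    simp only [Polynomial.eval_mul, Polynomial.eval_C, Polynomial.eval_pow, Polynomial.eval_smul,
        Polynomial.eval_sub, Polynomial.eval_X, Polynomial.eval_add, smul_eq_mul]
    have h3 : (x - 1) ^ α = (-1) ^ α * (1 - x) ^ α := by rw [← mul_pow]; congr 1; ring
    rw [h3]; ring
  rw [e1] at hib
  have hs : ((-1 : ℝ) ^ α) ≠ 0 := by simp
  split_ifs with hlk
  · subst hlk
    rw [S_deriv] at hib
    have e2 : ∫ x in (-1:ℝ)..1, (W l α β).eval x * (Polynomial.C ((l.factorial : ℝ) *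
        ((2 * l + α + β).choose l : ℝ))).eval x = (-1) ^ (α + l) * ((l.factorial : ℝ) *
        ((2 * l + α + β).choose l : ℝ)) *
        ∫ x in (-1:ℝ)..1, (x + 1) ^ (β + l) * (1 - x) ^ (α + l) := by
      rw [← intervalIntegral.integral_const_mul]; congr 1; funext x
      simp only [W, Polynomial.eval_mul, Polynomial.eval_C, Polynomial.eval_pow,
        Polynomial.eval_sub, Polynomial.eval_X, Polynomial.eval_add]
      have h3 : (x - 1) ^ (α + l) = (-1) ^ (α + l) * (1 - x) ^ (α + l) := by
        rw [← mul_pow]; congr 1; ring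
      rw [h3]; ring
    rw [e2, beta] at hib
    have h0 : β + l + (α + l) + 1 = 2 * l + α + β + 1 := by ring
    rw [h0] at hib
    apply mul_left_cancel₀ (mul_ne_zero hk hs)
    rw [hib]
    have h5 : ((-1 : ℝ) ^ l) * (-1) ^ (α + l) = (-1) ^ α := by
      rw [← pow_add, show l + (α + l) = α + 2 * l by ring, pow_add, pow_mul]; simp
    rw [← h5]; ring
  · have hd : (S l α β).natDegree < k := by have := S_natDegree l α β; omega
    rw [Polynomial.iterate_derivative_eq_zero hd] at hib
    simp at hib
    rcases hib with h | h
    · exact absurd h (Nat.factorial_ne_zero _)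
    · exact h

lemma orth (k l α β : ℕ) :
    ∫ x in (-1:ℝ)..1, (1 - x) ^ α * (1 + x) ^ β * ((S k α β).eval x * (S l α β).eval x) =
      if l = k then ((2 * k + α + β).choose k : ℝ) * (2 ^ (2 * k + α + β + 1) * (β + k).factorial * (α + k).factorial
        / (2 * k + α + β + 1).factorial) else 0 := by
  rcases le_total l k with h | h
  · exact orth_aux k l α β h
  · have := orth_aux l k α β h
    rcases eq_or_ne l k with rfl | hne
    · exact this
    · rw [if_neg hne.symm] at this
      rw [if_neg hne, ← this]
      congr 1; funext x; ring


lemma radial {J : ℕ → ℕ → ℕ → ℝ → ℝ} (hJ : IsJacobi J) (k l α m : ℕ) :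
    ∫ r in (0:ℝ)..(π / 2), J k α (m + 1) (cos (2 * r)) * J l α (m + 1) (cos (2 * r)) *
      sin r ^ (2 * α + 1) * cos r ^ (2 * m + 3) =
    if l = k then ((α + k).factorial * (m + 1 + k).factorial : ℝ) /
      (2 * (2 * k + α + m + 2) * k.factorial * (k + α + m + 1).factorial) else 0 := by
  have h := intervalIntegral.integral_comp_mul_deriv (a := (0:ℝ)) (b := π / 2)
    (f := fun r => cos (2 * r)) (f' := fun r => -sin (2 * r) * 2)
    (g := fun x => (1 - x) ^ α * (1 + x) ^ (m + 1) *
      ((S k α (m + 1)).eval x * (S l α (m + 1)).eval x))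
    (fun x _ => by
      have := ((hasDerivAt_id x).const_mul 2).cos
      simpa using this)
    (by fun_prop) (by fun_prop)
  have e : 2 * (π / 2) = π := by ring
  simp only [mul_zero, cos_zero, e, cos_pi] at h
  rw [intervalIntegral.integral_symm (-1) 1, orth] at h
  have e1 : ∀ r : ℝ, J k α (m + 1) (cos (2 * r)) * J l α (m + 1) (cos (2 * r)) *
      sin r ^ (2 * α + 1) * cos r ^ (2 * m + 3) = -(1 / (2 ^ k * 2 ^ l * 2 ^ α * 2 ^ (m + 1) * 4)) *
      (((fun x => (1 - x) ^ α * (1 + x) ^ (m + 1) *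
      ((S k α (m + 1)).eval x * (S l α (m + 1)).eval x)) ∘ fun r => cos (2 * r)) r *
        (-sin (2 * r) * 2)) := by
    intro r
    simp only [Function.comp]
    rw [J_eq hJ, J_eq hJ]
    have a1 : 1 - cos (2 * r) = 2 * sin r ^ 2 := by rw [cos_two_mul, cos_sq']; ring
    have a2 : 1 + cos (2 * r) = 2 * cos r ^ 2 := by rw [cos_two_mul]; ring
    rw [a1, a2, sin_two_mul, mul_pow, mul_pow]
    field_simp
    ring
  simp_rw [e1]
  rw [intervalIntegral.integral_const_mul, h]
  split_ifs with hlk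
  · subst hlk
    have hc := Nat.choose_mul_factorial_mul_factorial (show l ≤ 2 * l + α + (m + 1) by omega)
    have hc' : ((2 * l + α + (m + 1)).choose l : ℝ) = (2 * l + α + (m + 1)).factorial /
        (l.factorial * (l + α + m + 1).factorial) := by
      rw [eq_div_iff (by positivity), ← hc,
        show 2 * l + α + (m + 1) - l = l + α + m + 1 by omega]
      push_cast; ring
    rw [hc', Nat.factorial_succ (2 * l + α + (m + 1))]
    push_cast
    have p0 : (2:ℝ) ^ (2 * l + α + (m + 1) + 1) = 2 ^ l * 2 ^ l * 2 ^ α * 2 ^ (m + 1) * 2 := by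
      rw [← pow_add, ← pow_add, ← pow_add, ← pow_succ]; congr 1; ring
    rw [p0]
    have q1 : ((2 * l + α + (m + 1)).factorial : ℝ) ≠ 0 := by positivity
    have q2 : (2 * (l:ℝ) + α + m + 2) ≠ 0 := by positivity
    have q3 : (2 * (l:ℝ) + α + (m + 1) + 1) = 2 * (l:ℝ) + α + m + 2 := by ring
    rw [q3]
    field_simp
    norm_num
  · simp

lemma int_cos (c : ℤ) : ∫ x in (0:ℝ)..π, cos (c * x) = if c = 0 then π else 0 := by
  split_ifs with h
  · subst h; simp
  · have hc : (c : ℝ) ≠ 0 := by exact_mod_cast h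
    rw [intervalIntegral.integral_comp_mul_left _ hc]
    simp [sin_int_mul_pi]

lemma int_sin (a b : ℕ) : ∫ x in (0:ℝ)..π, sin ((a + 1) * x) * sin ((b + 1) * x) =
    if a = b then π / 2 else 0 := by
  have e : ∀ x : ℝ, sin ((a + 1) * x) * sin ((b + 1) * x) =
      (1 / 2) * (cos (((a - b : ℤ) : ℝ) * x) - cos (((a + b + 2 : ℤ) : ℝ) * x)) := by
    intro x
    have e1 : ((a - b : ℤ) : ℝ) * x = (a + 1) * x - (b + 1) * x := by push_cast; ring
    have e2 : ((a + b + 2 : ℤ) : ℝ) * x = (a + 1) * x + (b + 1) * x := by push_cast; ring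
    rw [e1, e2, cos_sub, cos_add]; ring
  simp_rw [e]
  rw [intervalIntegral.integral_const_mul, intervalIntegral.integral_sub
    ((by fun_prop : Continuous _).intervalIntegrable _ _)
    ((by fun_prop : Continuous _).intervalIntegrable _ _), int_cos, int_cos,
    if_neg (show (a + b + 2 : ℤ) ≠ 0 by omega)]
  by_cases h : a = b
  · subst h; simp; ring
  · rw [if_neg h, if_neg (by omega)]; simp

lemma abs_sin_le (m : ℕ) (x : ℝ) : |sin ((m + 1) * x)| ≤ (m + 1) * |sin x| := by
  induction m with
  | zero => simp
  | succ m ih =>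
    have : ((m + 1 : ℕ) + 1 : ℝ) * x = (m + 1) * x + x := by push_cast; ring
    rw [this, sin_add]
    calc _ ≤ |sin ((m + 1) * x) * cos x| + |cos ((m + 1) * x) * sin x| := abs_add_le _ _
      _ = |sin ((m + 1) * x)| * |cos x| + |cos ((m + 1) * x)| * |sin x| := by rw [abs_mul, abs_mul]
      _ ≤ |sin ((m + 1) * x)| * 1 + 1 * |sin x| := by
        gcongr
        · exact abs_cos_le_one _
        · exact abs_cos_le_one _
      _ ≤ _ := by push_cast; linarith

lemma ratio_bound (m : ℕ) (x : ℝ) : |sin ((m + 1) * x) / sin x| ≤ m + 1 := by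
  rw [abs_div]
  exact div_le_of_le_mul₀ (abs_nonneg _) (by positivity) (abs_sin_le m x)

lemma vert_bound (m : ℕ) (x : ℝ) : |vertFactor m x| ≤ m + 1 := by
  unfold vertFactor
  split_ifs
  · rw [abs_of_nonneg (by positivity)]
  · exact ratio_bound m x

lemma vert_meas (m : ℕ) : Measurable (vertFactor m) := by
  unfold vertFactor
  exact Measurable.ite (measurableSet_singleton 0) measurable_const (by fun_prop)

lemma choose_bound (δ : ℝ) (hδ : 0 < δ) : ∃ A : ℝ, 0 < A ∧
    ∀ N k : ℕ, (N.choose k : ℝ) ≤ A ^ k * exp δ ^ N := by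
  have hx : 0 < exp δ - 1 := by have := add_one_lt_exp hδ.ne'; linarith
  refine ⟨(exp δ - 1)⁻¹, by positivity, fun N k => ?_⟩
  rw [inv_pow, inv_mul_eq_div, le_div_iff₀ (by positivity)]
  rcases le_or_gt k N with h | h
  · have := add_pow (exp δ - 1) 1 N
    rw [sub_add_cancel] at this
    rw [this]
    have h2 := Finset.single_le_sum (f := fun i => (exp δ - 1) ^ i * 1 ^ (N - i) * (N.choose i : ℝ))
      (s := Finset.range (N + 1)) (fun i _ => by positivity) (Finset.mem_range.2 (Nat.lt_succ_of_le h))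
    refine le_trans (le_of_eq ?_) h2
    simp; ring
  · rw [Nat.choose_eq_zero_of_lt h]; simp; positivity

lemma gauss_summable (c t : ℝ) (hc : 0 < c) (ht : 0 < t) :
    Summable fun k : ℕ => c ^ k * exp (-(4 * t * (k : ℝ) ^ 2)) := by
  apply summable_of_ratio_test_tendsto_lt_one (l := 0) (by norm_num)
  · exact Eventually.of_forall fun k => by positivity
  · have : ∀ k : ℕ, ‖c ^ (k + 1) * exp (-(4 * t * ((k + 1 : ℕ) : ℝ) ^ 2))‖ /
        ‖c ^ k * exp (-(4 * t * (k : ℝ) ^ 2))‖ = c * exp (-(4 * t)) * exp (-(8 * t)) ^ k := by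
      intro k
      rw [norm_of_nonneg (by positivity), norm_of_nonneg (by positivity), div_eq_iff (by positivity),
        ← exp_nat_mul]
      have : exp (-(4 * t * ((k + 1 : ℕ) : ℝ) ^ 2)) =
          exp (-(4 * t)) * exp (k * -(8 * t)) * exp (-(4 * t * (k : ℝ) ^ 2)) := by
        rw [← exp_add, ← exp_add]; congr 1; push_cast; ring
      rw [this]; ring
    simp_rw [this]
    have h := (tendsto_pow_atTop_nhds_zero_of_lt_one (exp_pos (-(8 * t))).le
      (by rw [exp_lt_one_iff]; linarith)).const_mul (c * exp (-(4 * t)))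
    simpa using h

lemma term_bound (n : ℕ) (hn : 1 ≤ n) {J : ℕ → ℕ → ℕ → ℝ → ℝ} (hJ : IsJacobi J) (t : ℝ)
    (ht : 0 < t) : ∃ b : ℕ × ℕ → ℝ, Summable b ∧ ∀ mk r η, |pTerm n J t r η mk| ≤ b mk := by
  obtain ⟨A, hA, hch⟩ := choose_bound (t / 5) (by positivity)
  set q := exp (t / 5) with hq
  have hq5 : q ^ 5 = exp t := by rw [hq, ← exp_nat_mul]; congr 1; push_cast; ring
  have hq0 : 0 < q := exp_pos _
  have hG : 0 < Real.Gamma (2 * n) := Real.Gamma_pos_of_pos (by positivity)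
  have lin : ∀ N : ℕ, ((N : ℕ) : ℝ) ≤ A * q ^ N := by
    intro N; have := hch N 1; simpa using this
  set K := (Real.Gamma (2 * n) / (2 * Real.pi ^ (2 * n + 2))) *
    (A * q ^ (2 * n + 1)) * (A * q) * (A ^ (2 * n - 1) * q ^ (2 * n)) * (A * q) * q ^ (2 * n) with hK
  refine ⟨fun mk => K * (exp (-(3 * t)) ^ mk.1 * ((A * exp t) ^ mk.2 * exp (-(4 * t * (mk.2 : ℝ) ^ 2)))),
    ?_, ?_⟩
  · apply Summable.mul_left
    apply Summable.mul_of_nonneg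
      (summable_geometric_of_lt_one (exp_pos _).le (by rw [exp_lt_one_iff]; linarith))
      (gauss_summable _ _ (by positivity) ht)
    · intro i; positivity
    · intro i; positivity
  · rintro ⟨m, k⟩ r η
    unfold pTerm
    simp only
    have hexp : exp (-(4 * ((k : ℝ) * (k + 2 * n + m + 1) + n * m)) * t) ≤
        exp (-(4 * t)) ^ m * exp (-(4 * t * (k : ℝ) ^ 2)) := by
      rw [← exp_nat_mul, ← exp_add, exp_le_exp]
      have hn' : (1 : ℝ) ≤ n := by exact_mod_cast hn
      have h1 : (0:ℝ) ≤ (n - 1) * m * t := by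
        have : (0:ℝ) ≤ n - 1 := by linarith
        positivity
      have h2 : (0:ℝ) ≤ k * (2 * n + m + 1) * t := by positivity
      nlinarith
    have hc2 : |cos r ^ m| ≤ 1 := by
      rw [abs_pow]; exact pow_le_one₀ (abs_nonneg _) (abs_cos_le_one _)
    have hj := J_bound hJ k (2 * n - 1) (m + 1) (cos (2 * r)) ⟨neg_one_le_cos _, cos_le_one _⟩
    have hj2 : |J k (2 * n - 1) (m + 1) (cos (2 * r))| ≤ A ^ k * q ^ (2 * k + m + 2 * n) := by
      refine hj.trans ?_
      rw [show 2 * k + (2 * n - 1) + (m + 1) = 2 * k + m + 2 * n by omega]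
      exact hch _ _
    have l1 := lin (2 * k + m + 2 * n + 1)
    have l2 := lin (m + 1)
    push_cast at l1 l2
    have l3 := hch (k + m + 2 * n) (2 * n - 1)
    rw [abs_mul, abs_mul, abs_mul, abs_mul, abs_mul, abs_mul, abs_mul,
      abs_of_nonneg (by positivity : (0:ℝ) ≤ Real.Gamma (2 * n) / (2 * π ^ (2 * n + 2))),
      abs_of_nonneg (by positivity : (0:ℝ) ≤ 2 * (k:ℝ) + m + 2 * n + 1),
      abs_of_nonneg (by positivity : (0:ℝ) ≤ (m:ℝ) + 1),
      abs_of_nonneg (by positivity : (0:ℝ) ≤ ((k + m + 2 * n).choose (2 * n - 1) : ℝ)),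
      abs_of_nonneg (exp_pos _).le]
    have hv := (vert_bound m η).trans l2
    calc _ ≤ (Real.Gamma (2 * n) / (2 * Real.pi ^ (2 * n + 2))) *
          (A * q ^ (2 * k + m + 2 * n + 1)) * (A * q ^ (m + 1)) *
          (A ^ (2 * n - 1) * q ^ (k + m + 2 * n)) *
          (exp (-(4 * t)) ^ m * exp (-(4 * t * (k : ℝ) ^ 2))) * (A * q ^ (m + 1)) * 1 *
          (A ^ k * q ^ (2 * k + m + 2 * n)) := by gcongr
      _ = K * ((q ^ 5 * exp (-(4 * t))) ^ m * ((A * q ^ 5) ^ k * exp (-(4 * t * (k : ℝ) ^ 2)))) := by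
        rw [hK]; generalize A ^ (2 * n - 1) = A'
        ring
      _ = _ := by
        rw [hq5, ← exp_add]; congr 4; ring_nf


/-- coefficient of the expansion -/
noncomputable def cf (n : ℕ) (t : ℝ) (m k : ℕ) : ℝ :=
  (8 * π ^ (2 * n + 1) / Real.Gamma (2 * n)) * ((Real.Gamma (2 * n) / (2 * Real.pi ^ (2 * n + 2))) *
    (2 * (k : ℝ) + m + 2 * n + 1) * ((m : ℝ) + 1) *
    (Nat.choose (k + m + 2 * n) (2 * n - 1) : ℝ) *
    Real.exp (-(4 * ((k : ℝ) * (k + 2 * n + m + 1) + n * m)) * t))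

lemma final_const (n : ℕ) (hn : 1 ≤ n) (t : ℝ) (m k : ℕ) :
    cf n t m k * (π / 2 * (((2 * n - 1 + k).factorial * (m + 1 + k).factorial : ℝ) /
      (2 * (2 * k + ((2 * n - 1 : ℕ) : ℝ) + m + 2) * k.factorial *
        (k + (2 * n - 1) + m + 1).factorial))) =
    Real.exp (-(4 * ((k : ℝ) * (k + 2 * n + m + 1) + n * m)) * t) *
          ((m : ℝ) + 1) * (Nat.choose (k + 2 * n - 1) k : ℝ) := by
  unfold cf
  have hG : Real.Gamma (2 * n) ≠ 0 := (Real.Gamma_pos_of_pos (by positivity)).ne'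
  generalize Real.exp (-(4 * ((k : ℝ) * (k + 2 * n + m + 1) + n * m)) * t) = E
  have hcast : ((2 * n - 1 : ℕ) : ℝ) = 2 * n - 1 := by
    rw [Nat.cast_sub (by omega)]; push_cast; ring
  have e1 : k + (2 * n - 1) + m + 1 = k + m + 2 * n := by omega
  have e2 : k + 2 * n - 1 = 2 * n - 1 + k := by omega
  rw [hcast, e1, e2]
  have hc1 := Nat.choose_mul_factorial_mul_factorial (show 2 * n - 1 ≤ k + m + 2 * n by omega)
  have hc2 := Nat.choose_mul_factorial_mul_factorial (show k ≤ 2 * n - 1 + k by omega)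
  rw [show k + m + 2 * n - (2 * n - 1) = m + 1 + k by omega] at hc1
  rw [show 2 * n - 1 + k - k = 2 * n - 1 by omega] at hc2
  have f1 : ((k + m + 2 * n).choose (2 * n - 1) : ℝ) =
      (k + m + 2 * n).factorial / ((2 * n - 1).factorial * (m + 1 + k).factorial) := by
    rw [eq_div_iff (by positivity), ← hc1]; push_cast; ring
  have f2 : ((2 * n - 1 + k).choose k : ℝ) =
      (2 * n - 1 + k).factorial / (k.factorial * (2 * n - 1).factorial) := by
    rw [eq_div_iff (by positivity), ← hc2]; push_cast; ring
  rw [f1, f2]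
  have q3 : (2 * (k:ℝ) + (2 * n - 1) + m + 2) = 2 * (k:ℝ) + m + 2 * n + 1 := by ring
  rw [q3]
  have q4 : 2 * (k:ℝ) + m + 2 * n + 1 ≠ 0 := by positivity
  have q5 : ((k + m + 2 * n).factorial : ℝ) ≠ 0 := by positivity
  have q6 : ((m + 1 + k).factorial : ℝ) ≠ 0 := by positivity
  have q7 : ((2 * n - 1).factorial : ℝ) ≠ 0 := by positivity
  have q8 : (k.factorial : ℝ) ≠ 0 := by positivity
  rw [show π ^ (2 * n + 2) = π ^ (2 * n + 1) * π by ring]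
  have q9 : π ^ (2 * n + 1) ≠ 0 := by positivity
  have q10 : π ≠ 0 := by positivity
  generalize π ^ (2 * n + 1) = P at *
  field_simp
  norm_num

/-- angular part -/
noncomputable def hh (m m' : ℕ) (η : ℝ) : ℝ :=
  vertFactor m' η * (Real.sin ((m + 1) * η) / Real.sin η) * Real.sin η ^ 2

lemma hh_int (m m' : ℕ) : ∫ η in (0:ℝ)..π, hh m m' η = if m' = m then π / 2 else 0 := by
  rw [← int_sin]
  apply intervalIntegral.integral_congr_ae
  have : ∀ᵐ x : ℝ, x ≠ π := by
    rw [ae_iff]; simp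
  filter_upwards [this] with x hx hx'
  rw [uIoc_of_le pi_pos.le] at hx'
  have hs : sin x ≠ 0 := (sin_pos_of_pos_of_lt_pi hx'.1 (lt_of_le_of_ne hx'.2 hx)).ne'
  unfold hh vertFactor
  rw [if_neg hx'.1.ne']
  field_simp

/-- radial part -/
noncomputable def gg (n : ℕ) (J : ℕ → ℕ → ℕ → ℝ → ℝ) (m k m' k' : ℕ) (r : ℝ) : ℝ :=
  cos r ^ m' * J k' (2 * n - 1) (m' + 1) (cos (2 * r)) * cos r ^ m *
    J k (2 * n - 1) (m + 1) (Real.cos (2 * r)) * Real.sin r ^ (4 * n - 1) * Real.cos r ^ 3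

lemma J_cont {J : ℕ → ℕ → ℕ → ℝ → ℝ} (hJ : IsJacobi J) (k α β : ℕ) : Continuous (J k α β) := by
  obtain ⟨⟨p, hp⟩, -⟩ := hJ k α β
  rw [show J k α β = fun x => p.eval x from funext hp]
  exact p.continuous

lemma gg_cont (n : ℕ) {J : ℕ → ℕ → ℕ → ℝ → ℝ} (hJ : IsJacobi J) (m k m' k' : ℕ) :
    Continuous (gg n J m k m' k') := by
  unfold gg
  have h1 := J_cont hJ k' (2 * n - 1) (m' + 1)
  have h2 := J_cont hJ k (2 * n - 1) (m + 1)
  fun_prop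

lemma gg_int (n : ℕ) (hn : 1 ≤ n) {J : ℕ → ℕ → ℕ → ℝ → ℝ} (hJ : IsJacobi J) (m k k' : ℕ) :
    ∫ r in (0:ℝ)..(π / 2), gg n J m k m k' r =
    if k' = k then ((2 * n - 1 + k).factorial * (m + 1 + k).factorial : ℝ) /
      (2 * (2 * k + ((2 * n - 1 : ℕ) : ℝ) + m + 2) * k.factorial *
        (k + (2 * n - 1) + m + 1).factorial) else 0 := by
  rw [← radial hJ]
  congr 1; funext r
  unfold gg
  rw [show 2 * (2 * n - 1) + 1 = 4 * n - 1 by omega]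
  ring

/-- The test function times the density. -/
noncomputable def TT (n : ℕ) (J : ℕ → ℕ → ℕ → ℝ → ℝ) (m k : ℕ) (r η : ℝ) : ℝ :=
  (Real.sin ((m + 1) * η) / Real.sin η) * Real.cos r ^ m *
            J k (2 * n - 1) (m + 1) (Real.cos (2 * r)) *
            (8 * π ^ (2 * n + 1) / Real.Gamma (2 * n)) *
            Real.sin r ^ (4 * n - 1) * Real.cos r ^ 3 * Real.sin η ^ 2

lemma TT_bound (n : ℕ) (hn : 1 ≤ n) {J : ℕ → ℕ → ℕ → ℝ → ℝ} (hJ : IsJacobi J) (m k : ℕ) (r η : ℝ) :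
    |TT n J m k r η| ≤ (m + 1) * 1 * ((2 * k + (2 * n - 1) + (m + 1)).choose k : ℝ) *
      (8 * π ^ (2 * n + 1) / Real.Gamma (2 * n)) * 1 * 1 * 1 := by
  have hG : 0 < Real.Gamma (2 * n) := Real.Gamma_pos_of_pos (by positivity)
  unfold TT
  have c1 : ∀ j : ℕ, |cos r ^ j| ≤ 1 := fun j => by
    rw [abs_pow]; exact pow_le_one₀ (abs_nonneg _) (abs_cos_le_one _)
  have s1 : ∀ (j : ℕ) x, |sin x ^ j| ≤ 1 := fun j x => by
    rw [abs_pow]; exact pow_le_one₀ (abs_nonneg _) (abs_sin_le_one _)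
  have hj := J_bound hJ k (2 * n - 1) (m + 1) (cos (2 * r)) ⟨neg_one_le_cos _, cos_le_one _⟩
  rw [abs_mul, abs_mul, abs_mul, abs_mul, abs_mul, abs_mul,
    abs_of_nonneg (by positivity : (0:ℝ) ≤ 8 * π ^ (2 * n + 1) / Real.Gamma (2 * n))]
  have := ratio_bound m η
  gcongr
  · exact c1 m
  · exact s1 _ _
  · exact c1 3
  · exact s1 _ _

lemma term_eq (n : ℕ) (J : ℕ → ℕ → ℕ → ℝ → ℝ) (m k : ℕ) (t r η : ℝ) (mk : ℕ × ℕ) :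
    pTerm n J t r η mk * TT n J m k r η =
      cf n t mk.1 mk.2 * hh m mk.1 η * gg n J m k mk.1 mk.2 r := by
  unfold pTerm TT cf hh gg
  ring

lemma main_eq (n : ℕ) (hn : 1 ≤ n) {J : ℕ → ℕ → ℕ → ℝ → ℝ} (hJ : IsJacobi J) (m k : ℕ) (t : ℝ)
    (ht : 0 < t) :
    (∫ η in (0:ℝ)..π, ∫ r in (0:ℝ)..(π / 2), pKernel n J t r η * TT n J m k r η) =
        Real.exp (-(4 * ((k : ℝ) * (k + 2 * n + m + 1) + n * m)) * t) *
          ((m : ℝ) + 1) * (Nat.choose (k + 2 * n - 1) k : ℝ) := by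
  obtain ⟨b, hb, hbound⟩ := term_bound n hn hJ t ht
  obtain ⟨D, hD⟩ : ∃ D : ℝ, ∀ r η, |TT n J m k r η| ≤ D := ⟨_, TT_bound n hn hJ m k⟩
  have hFb : ∀ mk r η, ‖pTerm n J t r η mk * TT n J m k r η‖ ≤ b mk * D := by
    intro mk r η
    rw [norm_eq_abs, abs_mul]
    exact mul_le_mul (hbound _ _ _) (hD _ _) (abs_nonneg _) ((abs_nonneg _).trans (hbound mk r η))
  have hbs : Summable fun mk => b mk * D := hb.mul_right D
  have hs : ∀ r η, HasSum (fun mk => pTerm n J t r η mk * TT n J m k r η)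
      (pKernel n J t r η * TT n J m k r η) := by
    intro r η
    apply HasSum.mul_right
    exact (Summable.of_norm_bounded hb (fun mk => hbound mk r η)).hasSum
  have inner : ∀ η, HasSum (fun mk : ℕ × ℕ => ∫ r in (0:ℝ)..(π / 2),
      pTerm n J t r η mk * TT n J m k r η)
      (∫ r in (0:ℝ)..(π / 2), pKernel n J t r η * TT n J m k r η) := by
    intro η
    apply intervalIntegral.hasSum_integral_of_dominated_convergence (fun mk _ => b mk * D)
    · intro mk
      simp_rw [term_eq]
      exact ((gg_cont n hJ m k mk.1 mk.2).const_mul _).aestronglyMeasurable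
    · exact fun mk => Eventually.of_forall fun r _ => hFb mk r η
    · exact Eventually.of_forall fun _ _ => hbs
    · exact intervalIntegrable_const
    · exact Eventually.of_forall fun r _ => hs r η
  have inner_eq : ∀ η (mk : ℕ × ℕ), ∫ r in (0:ℝ)..(π / 2), pTerm n J t r η mk * TT n J m k r η =
      hh m mk.1 η * (cf n t mk.1 mk.2 * ∫ r in (0:ℝ)..(π / 2), gg n J m k mk.1 mk.2 r) := by
    intro η mk
    simp_rw [term_eq]
    rw [intervalIntegral.integral_const_mul]; ring
  have outer : HasSum (fun mk : ℕ × ℕ => ∫ η in (0:ℝ)..π, ∫ r in (0:ℝ)..(π / 2),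
      pTerm n J t r η mk * TT n J m k r η)
      (∫ η in (0:ℝ)..π, ∫ r in (0:ℝ)..(π / 2), pKernel n J t r η * TT n J m k r η) := by
    apply intervalIntegral.hasSum_integral_of_dominated_convergence
      (fun mk _ => b mk * D * |π / 2 - 0|)
    · intro mk
      simp_rw [inner_eq]
      have h1 := vert_meas mk.1
      have : Measurable (hh m mk.1) := by unfold hh; fun_prop
      exact (this.mul_const _).aestronglyMeasurable
    · exact fun mk => Eventually.of_forall fun η _ =>
        intervalIntegral.norm_integral_le_of_norm_le_const fun r _ => hFb mk r η
    · exact Eventually.of_forall fun _ _ => hbs.mul_right _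
    · exact intervalIntegrable_const
    · exact Eventually.of_forall fun η _ => inner η
  have outer_eq : ∀ mk : ℕ × ℕ, ∫ η in (0:ℝ)..π, ∫ r in (0:ℝ)..(π / 2),
      pTerm n J t r η mk * TT n J m k r η =
      (if mk.1 = m then π / 2 else 0) *
        (cf n t mk.1 mk.2 * ∫ r in (0:ℝ)..(π / 2), gg n J m k mk.1 mk.2 r) := by
    intro mk
    simp_rw [inner_eq]
    rw [intervalIntegral.integral_mul_const, hh_int]
  simp_rw [outer_eq] at outer
  refine outer.unique ?_
  rw [← final_const n hn]
  convert hasSum_single ((m, k) : ℕ × ℕ) ?_ using 1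
  · simp only [if_true]
    rw [gg_int n hn hJ, if_pos rfl]; ring
  · rintro ⟨m', k'⟩ hne
    simp only
    by_cases hm : m' = m
    · subst hm
      have hk : k' ≠ k := fun h => hne (by rw [h])
      rw [gg_int n hn hJ, if_neg hk]; simp
    · rw [if_neg hm]; simp

end JacobiAux

/-- integrating the subelliptic heat kernel against the eigenfunctions with
respect to the cylindric Riemannian measure of `S^{4n+3}`, and the `t → 0⁺` limit. -/
theorem stmt_1 (n : ℕ) (hn : 1 ≤ n) (J : ℕ → ℕ → ℕ → ℝ → ℝ) (hJ : IsJacobi J)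
    (k m : ℕ) :
    (∀ t : ℝ, 0 < t →
      (∫ η in (0:ℝ)..π, ∫ r in (0:ℝ)..(π / 2),
          pKernel n J t r η * (Real.sin ((m + 1) * η) / Real.sin η) * Real.cos r ^ m *
            J k (2 * n - 1) (m + 1) (Real.cos (2 * r)) *
            (8 * π ^ (2 * n + 1) / Real.Gamma (2 * n)) *
            Real.sin r ^ (4 * n - 1) * Real.cos r ^ 3 * Real.sin η ^ 2) =
        Real.exp (-(4 * ((k : ℝ) * (k + 2 * n + m + 1) + n * m)) * t) *
          ((m : ℝ) + 1) * (Nat.choose (k + 2 * n - 1) k : ℝ)) ∧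
    Filter.Tendsto (fun t : ℝ =>
      ∫ η in (0:ℝ)..π, ∫ r in (0:ℝ)..(π / 2),
          pKernel n J t r η * (Real.sin ((m + 1) * η) / Real.sin η) * Real.cos r ^ m *
            J k (2 * n - 1) (m + 1) (Real.cos (2 * r)) *
            (8 * π ^ (2 * n + 1) / Real.Gamma (2 * n)) *
            Real.sin r ^ (4 * n - 1) * Real.cos r ^ 3 * Real.sin η ^ 2)
      (𝓝[>] 0) (𝓝 (((m : ℝ) + 1) * (Nat.choose (k + 2 * n - 1) k : ℝ))) := by
  have key : ∀ t : ℝ, 0 < t →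
      (∫ η in (0:ℝ)..π, ∫ r in (0:ℝ)..(π / 2),
          pKernel n J t r η * (Real.sin ((m + 1) * η) / Real.sin η) * Real.cos r ^ m *
            J k (2 * n - 1) (m + 1) (Real.cos (2 * r)) *
            (8 * π ^ (2 * n + 1) / Real.Gamma (2 * n)) *
            Real.sin r ^ (4 * n - 1) * Real.cos r ^ 3 * Real.sin η ^ 2) =
        Real.exp (-(4 * ((k : ℝ) * (k + 2 * n + m + 1) + n * m)) * t) *
          ((m : ℝ) + 1) * (Nat.choose (k + 2 * n - 1) k : ℝ) := by
    intro t ht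
    rw [← JacobiAux.main_eq n hn hJ m k t ht]
    simp only [JacobiAux.TT, mul_assoc]
  refine ⟨key, ?_⟩
  have hlim : Filter.Tendsto (fun t : ℝ =>
      Real.exp (-(4 * ((k : ℝ) * (k + 2 * n + m + 1) + n * m)) * t) *
          ((m : ℝ) + 1) * (Nat.choose (k + 2 * n - 1) k : ℝ)) (𝓝[>] 0)
      (𝓝 (((m : ℝ) + 1) * (Nat.choose (k + 2 * n - 1) k : ℝ))) := by
    have hc : Continuous (fun t : ℝ =>
      Real.exp (-(4 * ((k : ℝ) * (k + 2 * n + m + 1) + n * m)) * t) *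
          ((m : ℝ) + 1) * (Nat.choose (k + 2 * n - 1) k : ℝ)) := by fun_prop
    have := (hc.tendsto 0).mono_left (nhdsWithin_le_nhds (s := Set.Ioi 0))
    simpa using this
  refine hlim.congr' ?_
  filter_upwards [self_mem_nhdsWithin] with t ht
  exact (key t ht).symm
end

section
/- Let n ≥ 1 and m ≥ 0 be integers, let ψ : (0,∞) × (0, π/2) → ℝ be a smooth function, and define φ(t,r) = e^{−4nmt}·(cos r)^m·ψ(t,r). Then φ satisfies ∂φ/∂t = ∂²φ/∂r² + ((4n−1)·cot r − 3·tan r)·∂φ/∂r − m(m+2)·tan²r·φ on (0,∞) × (0, π/2) if and only if ψ satisfies ∂ψ/∂t = ∂²ψ/∂r² + ((4n−1)·cot r − (2m+3)·tan r)·∂ψ/∂r on (0,∞) × (0, π/2). -/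
open Real MeasureTheory Filter Topology Set

noncomputable section

theorem aux_cos_pow (m : ℕ) (r : ℝ) (h : Real.cos r ≠ 0) :
    HasDerivAt (fun x => Real.cos x ^ m) (-(m * Real.tan r) * Real.cos r ^ m) r := by
  have h1 := (Real.hasDerivAt_cos r).pow m
  refine h1.congr_deriv ?_
  rw [Real.tan_eq_sin_div_cos]
  rcases m with _ | k
  · simp
  · simp only [Nat.add_sub_cancel, pow_succ]
    field_simp

/-- the change of unknown function `φ(t,r) = e^{-4nmt} (cos r)^m ψ(t,r)` turns the
radial subelliptic heat equation (with vertical eigenvalue `-m(m+2)`) into a Jacobi-type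
equation. -/
theorem stmt_2 (n : ℕ) (hn : 1 ≤ n) (m : ℕ) (ψ : ℝ → ℝ → ℝ)
    (hψ : ContDiffOn ℝ (⊤ : ℕ∞) (fun p : ℝ × ℝ => ψ p.1 p.2) (Set.Ioi 0 ×ˢ Set.Ioo 0 (π / 2)))
    (φ : ℝ → ℝ → ℝ)
    (hφ : ∀ t r : ℝ, φ t r = Real.exp (-(4 * n * m) * t) * Real.cos r ^ m * ψ t r) :
    (∀ t ∈ Set.Ioi (0 : ℝ), ∀ r ∈ Set.Ioo (0 : ℝ) (π / 2),
      deriv (fun s => φ s r) t =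
        iteratedDeriv 2 (fun ρ => φ t ρ) r +
          ((4 * (n : ℝ) - 1) * Real.cot r - 3 * Real.tan r) * deriv (fun ρ => φ t ρ) r -
          (m : ℝ) * (m + 2) * Real.tan r ^ 2 * φ t r) ↔
    (∀ t ∈ Set.Ioi (0 : ℝ), ∀ r ∈ Set.Ioo (0 : ℝ) (π / 2),
      deriv (fun s => ψ s r) t =
        iteratedDeriv 2 (fun ρ => ψ t ρ) r +
          ((4 * (n : ℝ) - 1) * Real.cot r - (2 * (m : ℝ) + 3) * Real.tan r) *
            deriv (fun ρ => ψ t ρ) r) := by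
  have key : ∀ t ∈ Set.Ioi (0 : ℝ), ∀ r ∈ Set.Ioo (0 : ℝ) (π / 2),
      (deriv (fun s => φ s r) t =
        iteratedDeriv 2 (fun ρ => φ t ρ) r +
          ((4 * (n : ℝ) - 1) * Real.cot r - 3 * Real.tan r) * deriv (fun ρ => φ t ρ) r -
          (m : ℝ) * (m + 2) * Real.tan r ^ 2 * φ t r) ↔
      (deriv (fun s => ψ s r) t =
        iteratedDeriv 2 (fun ρ => ψ t ρ) r +
          ((4 * (n : ℝ) - 1) * Real.cot r - (2 * (m : ℝ) + 3) * Real.tan r) *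
            deriv (fun ρ => ψ t ρ) r) := by
    intro t ht r hr
    have hopen : IsOpen (Set.Ioi (0 : ℝ) ×ˢ Set.Ioo (0 : ℝ) (π / 2)) :=
      isOpen_Ioi.prod isOpen_Ioo
    have hcos : ∀ x ∈ Set.Ioo (0 : ℝ) (π / 2), 0 < Real.cos x := fun x hx =>
      Real.cos_pos_of_mem_Ioo ⟨by linarith [hx.1, Real.pi_pos], hx.2⟩
    have hsin : 0 < Real.sin r :=
      Real.sin_pos_of_pos_of_lt_pi hr.1 (by linarith [hr.2, Real.pi_pos])
    have hat : ∀ x ∈ Set.Ioo (0 : ℝ) (π / 2),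
        ContDiffAt ℝ (⊤ : ℕ∞) (fun p : ℝ × ℝ => ψ p.1 p.2) (t, x) := fun x hx =>
      hψ.contDiffAt (hopen.mem_nhds ⟨ht, hx⟩)
    have hψr : ∀ x ∈ Set.Ioo (0 : ℝ) (π / 2), ContDiffAt ℝ (⊤ : ℕ∞) (fun ρ => ψ t ρ) x := by
      intro x hx
      exact (hat x hx).comp (f := fun ρ : ℝ => (t, ρ)) x (contDiffAt_const.prodMk contDiffAt_id)
    have hψt : ContDiffAt ℝ (⊤ : ℕ∞) (fun s => ψ s r) t :=
      (hat r hr).comp (f := fun s : ℝ => (s, r)) t (contDiffAt_id.prodMk contDiffAt_const)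
    have dψt : HasDerivAt (fun s => ψ s r) (deriv (fun s => ψ s r) t) t :=
      (hψt.differentiableAt (by simp)).hasDerivAt
    have dψr : ∀ x ∈ Set.Ioo (0 : ℝ) (π / 2),
        HasDerivAt (fun ρ => ψ t ρ) (deriv (fun ρ => ψ t ρ) x) x := fun x hx =>
      ((hψr x hx).differentiableAt (by simp)).hasDerivAt
    have dψrr : HasDerivAt (deriv (fun ρ => ψ t ρ)) (deriv (deriv (fun ρ => ψ t ρ)) r) r := by
      have h2 : ContDiffOn ℝ 2 (fun ρ => ψ t ρ) (Set.Ioo (0 : ℝ) (π / 2)) := fun x hx =>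
        ((hψr x hx).of_le (WithTop.coe_le_coe.2 (le_top : (2 : ℕ∞) ≤ ⊤))).contDiffWithinAt
      have h3 : ContDiffOn ℝ 1 (deriv (fun ρ => ψ t ρ)) (Set.Ioo (0 : ℝ) (π / 2)) :=
        h2.deriv_of_isOpen isOpen_Ioo (by norm_num)
      exact ((h3.contDiffAt (isOpen_Ioo.mem_nhds hr)).differentiableAt (by simp)).hasDerivAt
    set E := Real.exp (-(4 * n * m) * t) with hE
    have hEpos : 0 < E := Real.exp_pos _
    have e1 : deriv (fun s => φ s r) t =
        E * Real.cos r ^ m * (deriv (fun s => ψ s r) t - 4 * n * m * ψ t r) := by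
      have hexp : HasDerivAt (fun s : ℝ => Real.exp (-(4 * n * m) * s))
          (E * (-(4 * n * m) * 1)) t := ((hasDerivAt_id t).const_mul _).exp
      have := (hexp.mul_const (Real.cos r ^ m)).mul dψt
      have h4 : (fun s => φ s r) =
          (fun s : ℝ => Real.exp (-(4 * n * m) * s) * Real.cos r ^ m) * fun s => ψ s r := by
        funext s; exact hφ s r
      rw [h4, this.deriv, ← hE]; ring
    have e2 : ∀ x ∈ Set.Ioo (0 : ℝ) (π / 2), deriv (fun ρ => φ t ρ) x =
        E * Real.cos x ^ m * (deriv (fun ρ => ψ t ρ) x - m * Real.tan x * ψ t x) := by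
      intro x hx
      have := ((aux_cos_pow m x (hcos x hx).ne').const_mul E).mul (dψr x hx)
      have h4 : (fun ρ => φ t ρ) =
          (fun ρ : ℝ => E * Real.cos ρ ^ m) * fun ρ => ψ t ρ := by
        funext s; exact hφ t s
      rw [h4, this.deriv]; ring
    have e3 : iteratedDeriv 2 (fun ρ => φ t ρ) r = E * Real.cos r ^ m *
        (deriv (deriv (fun ρ => ψ t ρ)) r - 2 * m * Real.tan r * deriv (fun ρ => ψ t ρ) r
          - m * (1 / Real.cos r ^ 2) * ψ t r + m ^ 2 * Real.tan r ^ 2 * ψ t r) := by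
      rw [iteratedDeriv_succ, iteratedDeriv_one]
      have hev : deriv (fun ρ => φ t ρ) =ᶠ[𝓝 r] (fun x => E * Real.cos x ^ m) *
          ((deriv (fun ρ => ψ t ρ)) - (fun x => m * Real.tan x) * fun x => ψ t x) := by
        filter_upwards [isOpen_Ioo.mem_nhds hr] with x hx
        exact e2 x hx
      rw [hev.deriv_eq]
      have := ((aux_cos_pow m r (hcos r hr).ne').const_mul E).mul
        (dψrr.sub (((Real.hasDerivAt_tan (hcos r hr).ne').const_mul (m : ℝ)).mul (dψr r hr)))
      rw [this.deriv]
      simp only [Pi.sub_apply, Pi.mul_apply]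
      ring
    have e4 : iteratedDeriv 2 (fun ρ => ψ t ρ) r = deriv (deriv (fun ρ => ψ t ρ)) r := by
      rw [iteratedDeriv_succ, iteratedDeriv_one]
    have hc := hcos r hr
    have hsec : 1 / Real.cos r ^ 2 = 1 + Real.tan r ^ 2 := by
      rw [Real.tan_eq_sin_div_cos]; field_simp; linarith [Real.sin_sq_add_cos_sq r]
    have hct : Real.cot r * Real.tan r = 1 := by
      rw [Real.tan_eq_sin_div_cos, Real.cot_eq_cos_div_sin]; field_simp
    have hA : E * Real.cos r ^ m ≠ 0 := by positivity
    rw [e1, e3, e2 r hr, e4, hφ t r, ← hE, hsec]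
    rw [← mul_right_inj' hA (b := deriv (fun s => ψ s r) t)]
    constructor
    · intro h
      linear_combination h - E * Real.cos r ^ m * (4 * n - 1) * m * ψ t r * hct
    · intro h
      linear_combination h + E * Real.cos r ^ m * (4 * n - 1) * m * ψ t r * hct
  exact ⟨fun h t ht r hr => (key t ht r hr).1 (h t ht r hr),
    fun h t ht r hr => (key t ht r hr).2 (h t ht r hr)⟩

end
end

section
/- Let f : [0,∞) → ℝ be continuous with compact support, and for t > 0, η > 0 define u(t,η) = (e^{−t}/√(πt))·∫_0^∞ (sinh r·sinh(ηr/(2t))/sinh η)·e^{−(r²+η²)/(4t)}·f(r) dr. Then u satisfies the heat equation ∂u/∂t = ∂²u/∂η² + 2·coth η·∂u/∂η for all t > 0, η > 0, and for every η > 0, u(t,η) → f(η) as t → 0⁺. (That is, u(t,·) = e^{tΔ̃_{SL(2)}}f for the operator Δ̃_{SL(2)} = d²/dη² + 2 coth η d/dη.) -/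
open Real MeasureTheory Filter Topology Set

noncomputable section

lemma aux_diff (g : ℝ → ℝ) (hg : Continuous g) (hg' : HasCompactSupport g)
    (K K' : ℝ → ℝ → ℝ) (a : ℝ) (s : Set ℝ) (hs : s ∈ 𝓝 a) (hsc : IsCompact s)
    (hK : ∀ x ∈ s, Continuous (K x))
    (hK' : ContinuousOn (fun p : ℝ × ℝ => K' p.1 p.2) (s ×ˢ univ))
    (hd : ∀ r, ∀ x ∈ s, HasDerivAt (fun x => K x r) (K' x r) x) :
    HasDerivAt (fun x => ∫ r, g r * K x r) (∫ r, g r * K' a r) a := by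
  have ha : a ∈ s := mem_of_mem_nhds hs
  obtain ⟨C, hC⟩ := (hsc.prod hg'.isCompact).exists_bound_of_continuousOn
    (hK'.mono (prod_mono_right (subset_univ _)))
  have hint : ∀ φ : ℝ → ℝ, Continuous φ → Integrable (fun r => g r * φ r) := fun φ hφ =>
    (hg.mul hφ).integrable_of_hasCompactSupport hg'.mul_right
  have hKa : Continuous (K' a) := by
    have : ContinuousOn (fun r : ℝ => K' a r) univ :=
      hK'.comp (f := fun r : ℝ => (a, r)) (by fun_prop) (fun r _ => ⟨ha, mem_univ _⟩)
    simpa [continuousOn_univ] using this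
  refine (hasDerivAt_integral_of_dominated_loc_of_deriv_le (μ := volume)
    (F := fun x r => g r * K x r) (F' := fun x r => g r * K' x r)
    (bound := fun r => |g r| * C) hs ?_ (hint _ (hK a ha)) ?_ ?_ ?_ ?_).2
  · filter_upwards [hs] with x hx
    exact (hint _ (hK x hx)).aestronglyMeasurable
  · exact (hint _ hKa).aestronglyMeasurable
  · refine Eventually.of_forall fun r x hx => ?_
    by_cases hr : r ∈ tsupport g
    · rw [norm_mul]
      exact mul_le_mul_of_nonneg_left (hC (x, r) ⟨hx, hr⟩) (norm_nonneg _)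
    · simp [image_eq_zero_of_notMem_tsupport hr]
  · exact ((hg.integrable_of_hasCompactSupport hg').abs).mul_const C
  · exact Eventually.of_forall fun r x hx => (hd r x hx).const_mul (g r)

def kM (g : ℝ → ℝ) (n : ℕ) (t x : ℝ) : ℝ :=
  ∫ r, g r * ((r - x) ^ n * Real.exp (-(r - x) ^ 2 / (4 * t)))

lemma kM_int (g : ℝ → ℝ) (hg : Continuous g) (hg' : HasCompactSupport g) (n : ℕ) (t x : ℝ) :
    Integrable (fun r => g r * ((r - x) ^ n * Real.exp (-(r - x) ^ 2 / (4 * t)))) :=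
  (hg.mul (by fun_prop)).integrable_of_hasCompactSupport hg'.mul_right

lemma kM_dt (g : ℝ → ℝ) (hg : Continuous g) (hg' : HasCompactSupport g) (t x : ℝ) (ht : 0 < t) :
    HasDerivAt (fun s => kM g 0 s x) (kM g 2 t x / (4 * t ^ 2)) t := by
  have h := aux_diff g hg hg' (fun s r => (r - x) ^ 0 * Real.exp (-(r - x) ^ 2 / (4 * s)))
    (fun s r => (r - x) ^ 2 * Real.exp (-(r - x) ^ 2 / (4 * s)) / (4 * s ^ 2)) t
    (Icc (t / 2) (2 * t)) (Icc_mem_nhds (by linarith) (by linarith)) isCompact_Icc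
    (fun s _ => by fun_prop) ?_ ?_
  · refine h.congr_deriv ?_
    rw [kM, ← integral_div]
    congr 1; ext r; ring
  · rintro ⟨s, r⟩ ⟨hs, _⟩
    have : s ≠ 0 := by have := hs.1; simp at this; intro h; linarith
    apply ContinuousAt.continuousWithinAt
    have h1 : (4 * s) ≠ 0 := by positivity
    have h2 : (4 * s ^ 2) ≠ 0 := by positivity
    fun_prop (disch := assumption)
  · intro r s hs
    have : s ≠ 0 := by have := hs.1; intro h; linarith
    have h1 : (4 * s) ≠ 0 := by positivity
    have h2 := ((hasDerivAt_const s (-(r - x) ^ 2)).div ((hasDerivAt_id s).const_mul 4) h1).exp.const_mul ((r-x)^0)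
    refine h2.congr_deriv ?_
    simp only [Pi.div_apply, id]
    field_simp
    ring

lemma kM_dx (g : ℝ → ℝ) (hg : Continuous g) (hg' : HasCompactSupport g) (n : ℕ) (t x : ℝ)
    (ht : 0 < t) :
    HasDerivAt (fun y => kM g n t y) (kM g (n + 1) t x / (2 * t) - n * kM g (n - 1) t x) x := by
  have h := aux_diff g hg hg' (fun y r => (r - y) ^ n * Real.exp (-(r - y) ^ 2 / (4 * t)))
    (fun y r => (r - y) ^ (n + 1) * Real.exp (-(r - y) ^ 2 / (4 * t)) / (2 * t)
      - n * ((r - y) ^ (n - 1) * Real.exp (-(r - y) ^ 2 / (4 * t)))) x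
    (Icc (x - 1) (x + 1)) (Icc_mem_nhds (by linarith) (by linarith)) isCompact_Icc
    (fun s _ => by fun_prop) ?_ ?_
  · refine h.congr_deriv ?_
    rw [kM, kM, ← integral_div, ← integral_const_mul, ← integral_sub]
    · congr 1; ext r; ring
    · exact (kM_int g hg hg' _ t x).div_const _
    · exact (kM_int g hg hg' _ t x).const_mul _
  · fun_prop
  · intro r y _
    have h0 : HasDerivAt (fun y : ℝ => r - y) (-1) y := by
      simpa using (hasDerivAt_id y).const_sub r
    have h2 := (h0.pow n).mul (((h0.pow 2).neg.div_const (4 * t)).exp)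
    refine h2.congr_deriv ?_
    simp
    field_simp
    ring

lemma kM_lim (g : ℝ → ℝ) (hg : Continuous g) (hg' : HasCompactSupport g) (x : ℝ) :
    Tendsto (fun t => 1 / (2 * Real.sqrt (π * t)) * kM g 0 t x) (𝓝[>] 0) (𝓝 (g x)) := by
  obtain ⟨C, hC⟩ := hg.bounded_above_of_compact_support hg'
  have key : Tendsto (fun t : ℝ => 1 / Real.sqrt π * ∫ y, g (2 * Real.sqrt t * y + x) * Real.exp (-1 * y ^ 2))
      (𝓝[>] 0) (𝓝 (1 / Real.sqrt π * ∫ y, g x * Real.exp (-1 * y ^ 2))) := by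
    refine Tendsto.const_mul _ ?_
    refine tendsto_integral_filter_of_dominated_convergence
      (fun y => C * Real.exp (-1 * y ^ 2)) ?_ ?_ ?_ ?_
    · exact Eventually.of_forall fun t => (by fun_prop : Continuous _).aestronglyMeasurable
    · refine Eventually.of_forall fun t => Eventually.of_forall fun y => ?_
      rw [norm_mul, Real.norm_of_nonneg (Real.exp_pos _).le]
      exact mul_le_mul_of_nonneg_right (hC _) (Real.exp_pos _).le
    · exact (integrable_exp_neg_mul_sq one_pos).const_mul C
    · refine Eventually.of_forall fun y => Tendsto.mono_left ?_ nhdsWithin_le_nhds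
      have : Continuous (fun t : ℝ => g (2 * Real.sqrt t * y + x) * Real.exp (-1 * y ^ 2)) := by
        fun_prop
      simpa using this.tendsto 0
  have hpi : Real.sqrt π ≠ 0 := by positivity
  rw [integral_const_mul, integral_gaussian, div_one,
    show 1 / Real.sqrt π * (g x * Real.sqrt π) = g x by field_simp] at key
  refine key.congr' ?_
  filter_upwards [self_mem_nhdsWithin] with t ht
  have ht : 0 < t := ht
  have hst : 0 < Real.sqrt t := by positivity
  have h1 := integral_add_right_eq_self (μ := volume) (fun r => g r * ((r - x) ^ 0 * Real.exp (-(r - x) ^ 2 / (4 * t)))) x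
  have h2 := Measure.integral_comp_mul_left (fun r => g (r + x) * ((r + x - x) ^ 0 * Real.exp (-(r + x - x) ^ 2 / (4 * t)))) (2 * Real.sqrt t)
  rw [h1] at h2
  have h3 : ∫ y, g (2 * Real.sqrt t * y + x) * Real.exp (-1 * y ^ 2) = (2 * Real.sqrt t)⁻¹ * kM g 0 t x := by
    rw [smul_eq_mul, abs_of_pos (show 0 < (2 * Real.sqrt t)⁻¹ by positivity)] at h2
    rw [kM, ← h2]
    congr 1; ext y
    have : -(2 * Real.sqrt t * y + x - x) ^ 2 / (4 * t) = -1 * y ^ 2 := by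
      have := Real.sq_sqrt ht.le
      field_simp
      ring_nf
      rw [this]; ring
    rw [this]; simp
  rw [h3, Real.sqrt_mul pi_pos.le]
  field_simp

lemma kM_repr (f : ℝ → ℝ) (g : ℝ → ℝ) (hg : Continuous g) (hg' : HasCompactSupport g)
    (hodd : ∀ r, g (-r) = - g r) (hgf : ∀ r, 0 < r → g r = Real.sinh r * f r)
    (t x : ℝ) (ht : 0 < t) :
    ∫ r in Set.Ioi (0 : ℝ),
          (Real.sinh r * Real.sinh (x * r / (2 * t)) / Real.sinh x) *
            Real.exp (-(r ^ 2 + x ^ 2) / (4 * t)) * f r = kM g 0 t x / (2 * Real.sinh x) := by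
  have hi := kM_int g hg hg' 0 t x
  have hi2 := hi.comp_neg
  have h1 : kM g 0 t x = ∫ r in Ioi (0:ℝ), (g r * ((r - x) ^ 0 * Real.exp (-(r - x) ^ 2 / (4 * t)))
      + g (-r) * ((-r - x) ^ 0 * Real.exp (-(-r - x) ^ 2 / (4 * t)))) := by
    rw [integral_add hi.integrableOn hi2.integrableOn,
      integral_comp_neg_Ioi (0:ℝ) (fun r => g r * ((r - x) ^ 0 * Real.exp (-(r - x) ^ 2 / (4 * t)))),
      kM, neg_zero, add_comm, intervalIntegral.integral_Iic_add_Ioi hi.integrableOn hi.integrableOn]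
  rw [h1, ← integral_div]
  refine setIntegral_congr_fun measurableSet_Ioi fun r hr => ?_
  have e1 : -(r - x) ^ 2 / (4 * t) = x * r / (2 * t) + -(r ^ 2 + x ^ 2) / (4 * t) := by
    field_simp; ring
  have e2 : -(-r - x) ^ 2 / (4 * t) = -(x * r / (2 * t)) + -(r ^ 2 + x ^ 2) / (4 * t) := by
    field_simp; ring
  simp only [hodd, hgf r hr, e1, e2, Real.exp_add, Real.sinh_eq (x * r / (2 * t))]
  ring

theorem stmt_4 (f : ℝ → ℝ) (hf : Continuous f) (hf' : HasCompactSupport f)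
    (u : ℝ → ℝ → ℝ)
    (hu : ∀ t η : ℝ, u t η =
      (Real.exp (-t) / Real.sqrt (π * t)) *
        ∫ r in Set.Ioi (0 : ℝ),
          (Real.sinh r * Real.sinh (η * r / (2 * t)) / Real.sinh η) *
            Real.exp (-(r ^ 2 + η ^ 2) / (4 * t)) * f r) :
    (∀ t η : ℝ, 0 < t → 0 < η →
      deriv (fun s => u s η) t =
        iteratedDeriv 2 (fun e => u t e) η +
          2 * (Real.cosh η / Real.sinh η) * deriv (fun e => u t e) η) ∧
    (∀ η : ℝ, 0 < η → Filter.Tendsto (fun t => u t η) (𝓝[>] 0) (𝓝 (f η))) := by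
  obtain ⟨g, hgdef⟩ : ∃ g : ℝ → ℝ, g = fun r => Real.sinh r * f |r| := ⟨_, rfl⟩
  have hg : Continuous g := by rw [hgdef]; fun_prop
  have hg' : HasCompactSupport g := by
    obtain ⟨R, hR⟩ := hf'.isCompact.isBounded.subset_closedBall 0
    refine HasCompactSupport.intro (isCompact_closedBall (0:ℝ) R) fun r hr => ?_
    have : |r| ∉ tsupport f := fun h => hr (by simpa using hR h)
    simp [hgdef, image_eq_zero_of_notMem_tsupport this]
  have hodd : ∀ r, g (-r) = - g r := fun r => by simp [hgdef]
  have hgf : ∀ r, 0 < r → g r = Real.sinh r * f r := fun r hr => by simp [hgdef, abs_of_pos hr]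
  have hu' : ∀ t x : ℝ, 0 < t → u t x =
      (Real.exp (-t) / Real.sqrt (π * t)) * (kM g 0 t x / (2 * Real.sinh x)) := fun t x ht => by
    rw [hu, kM_repr f g hg hg' hodd hgf t x ht]
  constructor
  · intro t η ht hη
    have hsh : ∀ x : ℝ, 0 < x → Real.sinh x ≠ 0 := fun x hx => (Real.sinh_pos_iff.2 hx).ne'
    have hsη := hsh η hη
    have hq : Real.sqrt (π * t) ≠ 0 := by positivity
    have hq2 : Real.sqrt (π * t) ^ 2 = π * t := Real.sq_sqrt (by positivity)
    set A := Real.exp (-t) / Real.sqrt (π * t) with hA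
    -- time derivative
    have dt : HasDerivAt (fun s => u s η)
        (A * ((-1 - 1 / (2 * t)) * kM g 0 t η + kM g 2 t η / (4 * t ^ 2)) / (2 * Real.sinh η)) t := by
      have hs : HasDerivAt (fun s => Real.sqrt (π * s)) (π * 1 / (2 * Real.sqrt (π * t))) t :=
        ((hasDerivAt_id t).const_mul π).sqrt (by simp; positivity)
      have he : HasDerivAt (fun s : ℝ => Real.exp (-s)) (Real.exp (-t) * -1) t :=
        (hasDerivAt_id t).neg.exp
      have h := (he.div hs hq).mul ((kM_dt g hg hg' t η ht).div_const (2 * Real.sinh η))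
      refine (h.congr_of_eventuallyEq ?_).congr_deriv ?_
      · filter_upwards [lt_mem_nhds ht] with s hs
        exact hu' s η hs
      · have hpi : π = Real.sqrt (π * t) ^ 2 / t := by rw [hq2]; field_simp
        simp only [Pi.div_apply, hA]
        generalize Real.sqrt (π * t) = q at *
        rw [hpi]
        field_simp
    have dx : ∀ x, 0 < x → HasDerivAt (fun e => u t e)
        (A / 2 * (kM g 1 t x / (2 * t) / Real.sinh x - kM g 0 t x * Real.cosh x / Real.sinh x ^ 2)) x := by
      intro x hx
      have hs := hsh x hx
      have h := ((kM_dx g hg hg' 0 t x ht).div ((Real.hasDerivAt_sinh x).const_mul 2)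
        (mul_ne_zero two_ne_zero hs)).const_mul A
      refine (h.congr_of_eventuallyEq (Eventually.of_forall fun y => hu' t y ht)).congr_deriv ?_
      simp only [Nat.cast_zero, zero_mul, sub_zero, zero_add]
      field_simp
    have dxx : HasDerivAt (deriv fun e => u t e)
        (A / 2 * (((kM g 2 t η / (2 * t) - kM g 0 t η) / (2 * t) * Real.sinh η
            - kM g 1 t η / (2 * t) * Real.cosh η) / Real.sinh η ^ 2
          - ((kM g 1 t η / (2 * t) * Real.cosh η + kM g 0 t η * Real.sinh η) * Real.sinh η ^ 2
            - kM g 0 t η * Real.cosh η * (2 * Real.sinh η * Real.cosh η)) / (Real.sinh η ^ 2) ^ 2)) η := by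
      have h1 := ((kM_dx g hg hg' 1 t η ht).div_const (2 * t)).div (Real.hasDerivAt_sinh η) hsη
      have h2 := ((kM_dx g hg hg' 0 t η ht).mul (Real.hasDerivAt_cosh η)).div
        ((Real.hasDerivAt_sinh η).pow 2) (pow_ne_zero 2 hsη)
      refine (((h1.sub h2).const_mul (A / 2)).congr_of_eventuallyEq ?_).congr_deriv ?_
      · filter_upwards [lt_mem_nhds hη] with x hx
        exact (dx x hx).deriv
      · simp
    rw [iteratedDeriv_succ, iteratedDeriv_one, dt.deriv, dxx.deriv, (dx η hη).deriv]
    have hc := Real.cosh_sq η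
    field_simp
    ring_nf
    try simp only [hc]
    try ring
  · intro η hη
    have hs : Real.sinh η ≠ 0 := (Real.sinh_pos_iff.2 hη).ne'
    have h1 := kM_lim g hg hg' η
    have h2 : Tendsto (fun t : ℝ => Real.exp (-t) / Real.sinh η) (𝓝[>] 0) (𝓝 (1 / Real.sinh η)) := by
      refine Tendsto.mono_left ?_ nhdsWithin_le_nhds
      have : Continuous (fun t : ℝ => Real.exp (-t) / Real.sinh η) := by fun_prop
      simpa using this.tendsto 0
    have h3 := h2.mul h1
    rw [hgf η hη, show 1 / Real.sinh η * (Real.sinh η * f η) = f η by field_simp] at h3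
    refine h3.congr' ?_
    filter_upwards [self_mem_nhdsWithin] with t ht
    rw [hu' t η ht]
    have hq : Real.sqrt (π * t) ≠ 0 := by
      have : 0 < t := ht
      positivity
    field_simp

end
end

section
/- Let f : [0,∞) → ℝ be continuous with compact support. Then for every t > 0 and every x ∈ ℝ³ with x ≠ 0, (1/(4πt)^{3/2})·∫_{ℝ³} e^{−‖y−x‖²/(4t)}·f(‖y‖) dy = (1/√(πt))·∫_0^∞ (r/‖x‖)·sinh(‖x‖·r/(2t))·e^{−(r²+‖x‖²)/(4t)}·f(r) dr. -/
open Real MeasureTheory Filter Topology Set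

noncomputable section

lemma aux_e (H : ℝ → ℝ → ℝ) :
    ∫ z : EuclideanSpace ℝ (Fin 3), H ‖z‖ (z 0) =
      ∫ p : ℝ × EuclideanSpace ℝ (Fin 2), H (√(p.1 ^ 2 + ‖p.2‖ ^ 2)) p.1 := by
  let e1 : ℝ × EuclideanSpace ℝ (Fin 2) ≃ᵐ ℝ × (Fin 2 → ℝ) :=
    (MeasurableEquiv.refl ℝ).prodCongr (MeasurableEquiv.toLp 2 (Fin 2 → ℝ)).symm
  have h1 : MeasurePreserving e1 :=
    (MeasurePreserving.id (volume : Measure ℝ)).prod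
      (EuclideanSpace.volume_preserving_symm_measurableEquiv_toLp (Fin 2))
  have h2 : MeasurePreserving (MeasurableEquiv.piFinSuccAbove (fun _ : Fin 3 => ℝ) 0).symm :=
    (volume_preserving_piFinSuccAbove (fun _ : Fin 3 => ℝ) 0).symm
  have h3 : MeasurePreserving (MeasurableEquiv.toLp 2 (Fin 3 → ℝ)) :=
    (EuclideanSpace.volume_preserving_symm_measurableEquiv_toLp (Fin 3)).symm
  rw [← h3.integral_comp (MeasurableEquiv.measurableEmbedding _),
    ← h2.integral_comp (MeasurableEquiv.measurableEmbedding _),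
    ← h1.integral_comp (MeasurableEquiv.measurableEmbedding _)]
  congr 1
  ext p
  congr 1
  · rw [EuclideanSpace.norm_eq, EuclideanSpace.norm_eq, Real.sq_sqrt (by positivity)]
    simp [e1, Fin.sum_univ_succ, MeasurableEquiv.piFinSuccAbove, Fin.insertNthEquiv]
    rfl

lemma aux_2d (g : ℝ → ℝ) :
    ∫ w : EuclideanSpace ℝ (Fin 2), g ‖w‖ = π * ∫ r : ℝ, |r| * g |r| := by
  rw [integral_fun_norm_addHaar, integral_comp_abs (f := fun r => r * g r)]
  simp [Measure.real, ENNReal.toReal_ofReal pi_pos.le]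
  ring

lemma aux_3d (H : ℝ → ℝ → ℝ) (hH : Continuous (Function.uncurry H)) (M : ℝ)
    (hM : ∀ r s, M < r → H r s = 0) :
    ∫ z : EuclideanSpace ℝ (Fin 3), H ‖z‖ (z 0) =
      π * ∫ r in Ioi (0 : ℝ), ∫ θ in Ioo (-π) π, r * (|r * sin θ| * H r (r * cos θ)) := by
  have key : ∀ a b : ℝ, M < max |a| |b| → M < √(a ^ 2 + b ^ 2) := by
    intro a b h
    refine h.trans_le (max_le ?_ ?_)
    · exact Real.abs_le_sqrt (by nlinarith [sq_nonneg b])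
    · exact Real.abs_le_sqrt (by nlinarith [sq_nonneg a])
  rw [aux_e, Measure.volume_eq_prod, integral_prod]
  · have : ∀ s : ℝ, ∫ w : EuclideanSpace ℝ (Fin 2), H (√(s ^ 2 + ‖w‖ ^ 2)) s =
        π * ∫ r : ℝ, |r| * H (√(s ^ 2 + r ^ 2)) s := by
      intro s
      rw [aux_2d (fun r => H (√(s ^ 2 + r ^ 2)) s)]
      simp
    simp only [this]
    rw [integral_const_mul]
    congr 1
    rw [← integral_prod (f := fun p : ℝ × ℝ => |p.2| * H (√(p.1 ^ 2 + p.2 ^ 2)) p.1),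
      ← Measure.volume_eq_prod, ← integral_comp_polarCoord_symm]
    · simp only [polarCoord_target, polarCoord_symm_apply, smul_eq_mul]
      rw [← setIntegral_prod (f := fun p : ℝ × ℝ => p.1 * (|p.1 * sin p.2| * H p.1 (p.1 * cos p.2))),
        ← Measure.volume_eq_prod]
      · refine setIntegral_congr_fun (measurableSet_Ioi.prod measurableSet_Ioo) ?_
        rintro ⟨r, θ⟩ ⟨hr, -⟩
        have : (r * cos θ) ^ 2 + (r * sin θ) ^ 2 = r ^ 2 := by
          nlinarith [sin_sq_add_cos_sq θ]
        simp only [this, Real.sqrt_sq (le_of_lt (mem_Ioi.1 hr))]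
      · have hc : IntegrableOn (fun p : ℝ × ℝ => p.1 * (|p.1 * sin p.2| * H p.1 (p.1 * cos p.2)))
            (Icc 0 M ×ˢ Icc (-π) π) (volume.prod volume) := by
          refine ContinuousOn.integrableOn_compact (isCompact_Icc.prod isCompact_Icc) ?_
          apply Continuous.continuousOn
          have := hH.comp (g := Function.uncurry H)
            (f := fun p : ℝ × ℝ => (p.1, p.1 * cos p.2)) (by fun_prop)
          simp only [Function.comp_def, Function.uncurry] at this
          fun_prop
        refine hc.of_forall_sdiff_eq_zero (measurableSet_Ioi.prod measurableSet_Ioo) ?_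
        rintro ⟨r, θ⟩ ⟨⟨hr, hθ⟩, h2⟩
        have : M < r := by
          by_contra! h
          exact h2 ⟨⟨le_of_lt hr, h⟩, Ioo_subset_Icc_self hθ⟩
        simp [hM _ _ this]
    · apply Continuous.integrable_of_hasCompactSupport
      · have := hH.comp (g := Function.uncurry H)
            (f := fun p : ℝ × ℝ => (√(p.1 ^ 2 + p.2 ^ 2), p.1)) (by fun_prop)
        simp only [Function.comp_def, Function.uncurry] at this
        fun_prop
      · refine HasCompactSupport.intro (isCompact_closedBall 0 M) ?_
        intro p hp
        rw [hM _ _ (key _ _ ?_), mul_zero]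
        rw [mem_closedBall_zero_iff, not_le, Prod.norm_def] at hp
        simpa using hp
  · apply Continuous.integrable_of_hasCompactSupport
    · exact hH.comp (g := Function.uncurry H)
            (f := fun p : ℝ × EuclideanSpace ℝ (Fin 2) => (√(p.1 ^ 2 + ‖p.2‖ ^ 2), p.1)) (by fun_prop)
    · refine HasCompactSupport.intro (isCompact_closedBall 0 M) ?_
      intro p hp
      rw [hM _ _ (key _ _ ?_)]
      rw [mem_closedBall_zero_iff, not_le, Prod.norm_def] at hp
      simpa using hp

lemma aux_theta (c : ℝ) (hc : c ≠ 0) :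
    ∫ θ in Ioo (-π) π, |sin θ| * exp (c * cos θ) = 4 / c * sinh c := by
  have hpi := pi_pos
  have h0 : ∫ θ in (0:ℝ)..π, |sin θ| * exp (c * cos θ) = 2 / c * sinh c := by
    have : ∫ θ in (0:ℝ)..π, |sin θ| * exp (c * cos θ) =
        ∫ θ in (0:ℝ)..π, sin θ * exp (c * cos θ) := by
      refine intervalIntegral.integral_congr fun θ hθ => ?_
      rw [uIcc_of_le hpi.le] at hθ
      simp only [abs_of_nonneg (sin_nonneg_of_mem_Icc hθ)]
    rw [this, intervalIntegral.integral_eq_sub_of_hasDerivAt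
      (f := fun θ => -(1 / c) * exp (c * cos θ))]
    · simp [sinh_eq]; field_simp; ring
    · intro θ _
      have := (((hasDerivAt_cos θ).const_mul c).exp).const_mul (-(1/c))
      have h2 : -(1 / c) * (rexp (c * cos θ) * (c * -sin θ)) = sin θ * rexp (c * cos θ) := by
        field_simp
      rw [h2] at this
      exact this
    · exact (by fun_prop : Continuous _).intervalIntegrable _ _
  have hi : ∀ a b, IntervalIntegrable (fun θ => |sin θ| * exp (c * cos θ)) volume a b :=
    fun a b => (by fun_prop : Continuous _).intervalIntegrable _ _
  have h1 : ∫ θ in (-π)..0, |sin θ| * exp (c * cos θ) = 2 / c * sinh c := by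
    rw [← h0]
    have := intervalIntegral.integral_comp_neg (a := 0) (b := π)
      (fun θ => |sin θ| * exp (c * cos θ))
    simp only [sin_neg, cos_neg, abs_neg, neg_zero] at this
    exact this.symm
  rw [← integral_Ioc_eq_integral_Ioo, ← intervalIntegral.integral_of_le (by linarith),
    ← intervalIntegral.integral_add_adjacent_intervals (hi _ 0) (hi _ _), h0, h1]
  ring

/-- the action of the Euclidean heat semigroup of `ℝ³` on radial functions. -/
theorem stmt_6 (f : ℝ → ℝ) (hf : Continuous f) (hf' : HasCompactSupport f)
    (t : ℝ) (ht : 0 < t) (x : EuclideanSpace ℝ (Fin 3)) (hx : x ≠ 0) :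
    (1 / (4 * π * t) ^ ((3 : ℝ) / 2)) *
        ∫ y : EuclideanSpace ℝ (Fin 3), Real.exp (-‖y - x‖ ^ 2 / (4 * t)) * f ‖y‖ =
      (1 / Real.sqrt (π * t)) *
        ∫ r in Set.Ioi (0 : ℝ),
          (r / ‖x‖) * Real.sinh (‖x‖ * r / (2 * t)) *
            Real.exp (-(r ^ 2 + ‖x‖ ^ 2) / (4 * t)) * f r := by
  have hR : 0 < ‖x‖ := norm_pos_iff.2 hx
  obtain ⟨b, hb⟩ := Orthonormal.exists_orthonormalBasis_extension_of_card_eq (𝕜 := ℝ)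
    (E := EuclideanSpace ℝ (Fin 3)) (ι := Fin 3) (by simp) (v := fun _ => ‖x‖⁻¹ • x) (s := {0})
    (by
      rw [orthonormal_iff_ite]
      rintro ⟨i, hi⟩ ⟨j, hj⟩
      simp only [mem_singleton_iff] at hi hj
      subst hi hj
      change inner ℝ (‖x‖⁻¹ • x) (‖x‖⁻¹ • x) = ite _ _ _
      simp only [if_true, real_inner_self_eq_norm_sq, norm_smul, norm_inv, norm_norm]
      rw [inv_mul_cancel₀ hR.ne', one_pow])
  have hb0 : b 0 = ‖x‖⁻¹ • x := hb 0 rfl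
  obtain ⟨M, hM⟩ : ∃ M, ∀ r, M < r → f r = 0 := by
    obtain ⟨M, hM⟩ := hf'.isCompact.isBounded.subset_closedBall 0
    refine ⟨M, fun r hr => ?_⟩
    by_contra h
    have := hM (subset_tsupport _ h)
    simp only [mem_closedBall_zero_iff, norm_eq_abs] at this
    linarith [le_abs_self r]
  have e1 : ∫ y : EuclideanSpace ℝ (Fin 3), Real.exp (-‖y - x‖ ^ 2 / (4 * t)) * f ‖y‖ =
      ∫ z : EuclideanSpace ℝ (Fin 3),
        (fun r s => Real.exp (-(r ^ 2 - 2 * (‖x‖ * s) + ‖x‖ ^ 2) / (4 * t)) * f r) ‖z‖ (z 0) := by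
    rw [← b.measurePreserving_repr.integral_comp
      b.repr.toHomeomorph.toMeasurableEquiv.measurableEmbedding (g := fun z : EuclideanSpace ℝ (Fin 3) =>
        (fun r s => Real.exp (-(r ^ 2 - 2 * (‖x‖ * s) + ‖x‖ ^ 2) / (4 * t)) * f r) ‖z‖ (z 0))]
    congr 1
    ext y
    have : b.repr y 0 = ‖x‖⁻¹ * inner ℝ y x := by
      rw [b.repr_apply_apply, hb0, inner_smul_left, real_inner_comm]; simp
    simp only [this, LinearIsometryEquiv.norm_map]
    rw [norm_sub_sq_real, mul_inv_cancel_left₀ hR.ne']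
  rw [e1, aux_3d (fun r s => Real.exp (-(r ^ 2 - 2 * (‖x‖ * s) + ‖x‖ ^ 2) / (4 * t)) * f r) ?_ M ?_]
  · have e2 : ∀ r ∈ Ioi (0:ℝ), (∫ θ in Ioo (-π) π, r * (|r * sin θ| *
        (fun r s => Real.exp (-(r ^ 2 - 2 * (‖x‖ * s) + ‖x‖ ^ 2) / (4 * t)) * f r) r (r * cos θ)))
        = 8 * t * ((r / ‖x‖) * Real.sinh (‖x‖ * r / (2 * t)) *
            Real.exp (-(r ^ 2 + ‖x‖ ^ 2) / (4 * t)) * f r) := by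
      intro r hr
      have hr : 0 < r := hr
      have : ∀ θ, r * (|r * sin θ| *
        (fun r s => Real.exp (-(r ^ 2 - 2 * (‖x‖ * s) + ‖x‖ ^ 2) / (4 * t)) * f r) r (r * cos θ))
         = (r ^ 2 * Real.exp (-(r ^ 2 + ‖x‖ ^ 2) / (4 * t)) * f r) *
          (|sin θ| * exp ((‖x‖ * r / (2 * t)) * cos θ)) := by
        intro θ
        have : -(r ^ 2 - 2 * (‖x‖ * (r * cos θ)) + ‖x‖ ^ 2) / (4 * t) =
          -(r ^ 2 + ‖x‖ ^ 2) / (4 * t) + (‖x‖ * r / (2 * t)) * cos θ := by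
          field_simp; ring
        simp only [this, exp_add, abs_mul, abs_of_pos hr]
        ring
      simp only [this]
      rw [integral_const_mul, aux_theta _ (by positivity)]
      field_simp
      ring
    rw [setIntegral_congr_fun measurableSet_Ioi e2, integral_const_mul]
    have : (4 * π * t) ^ ((3 : ℝ) / 2) = 8 * π * t * √(π * t) := by
      have hp := pi_pos
      rw [show (3:ℝ)/2 = 1 + 1/2 by norm_num, rpow_add (by positivity), rpow_one,
        ← sqrt_eq_rpow, show 4 * π * t = 2 ^ 2 * (π * t) by ring,
        Real.sqrt_mul (by positivity), Real.sqrt_sq (by norm_num)]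
      ring
    rw [this]
    have hp := pi_pos
    have : 0 < √(π * t) := by positivity
    generalize (∫ r in Ioi (0 : ℝ), (r / ‖x‖) * Real.sinh (‖x‖ * r / (2 * t)) *
            Real.exp (-(r ^ 2 + ‖x‖ ^ 2) / (4 * t)) * f r) = I
    field_simp
  · simp only [Function.uncurry_def]
    fun_prop
  · intro r s h
    simp [hM r h]

end
end

section
/- For every integer n ≥ 1, every t > 0, r ∈ [0, π/2) and η ∈ (0, π), the subelliptic heat kernel of the quaternionic Hopf fibration admits the integral representation p_t(r, η) = (e^{−t}/√(πt))·∫_0^∞ (sinh y·sin(ηy/(2t))/sin η)·e^{−(y²−η²)/(4t)}·q_t(cos r·cosh y) dy. -/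
open Real MeasureTheory Filter Topology Set

noncomputable def jacR (A B : ℝ) : ℕ → Polynomial ℝ
  | 0 => 1
  | (j+1) => Polynomial.X * (2 - Polynomial.X) * Polynomial.derivative (jacR A B j) +
      (Polynomial.C (B - j) * (2 - Polynomial.X) - Polynomial.C (A - j) * Polynomial.X) * jacR A B j

lemma jacR_deriv (A B : ℕ) (j : ℕ) : ∀ a b : ℕ, a + j = A → b + j = B → ∀ y : ℝ,
    iteratedDeriv j (fun y : ℝ => (1 - y) ^ A * (1 + y) ^ B) y =
      (1 - y) ^ a * (1 + y) ^ b * (jacR A B j).eval (1 + y) := by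
  induction j with
  | zero => intro a b ha hb y; simp at ha hb; subst ha hb; simp [jacR]
  | succ j ih =>
    intro a b ha hb y
    have h := funext (ih (a+1) (b+1) (by omega) (by omega))
    rw [iteratedDeriv_succ, h]
    have h1 : HasDerivAt (fun y : ℝ => 1 - y) (-1) y := by
      simpa using (hasDerivAt_id y).const_sub 1
    have h2 : HasDerivAt (fun y : ℝ => 1 + y) 1 y := by
      simpa using (hasDerivAt_id y).const_add 1
    have h3 := ((jacR A B j).hasDerivAt (1+y)).comp y h2
    have h4 := ((h1.pow (a+1)).mul (h2.pow (b+1))).mul h3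
    have h5 := h4.deriv
    have e : (fun y : ℝ => (1 - y) ^ (a+1) * (1 + y) ^ (b+1) * (jacR A B j).eval (1 + y)) =
      ((fun y : ℝ => 1 - y) ^ (a+1) * (fun y : ℝ => 1 + y) ^ (b+1)) * ((fun x => Polynomial.eval x (jacR A B j)) ∘ fun y => 1 + y) := by
      ext y; simp
    rw [e, h5]
    have hA : (A : ℝ) = a + 1 + j := by rw [← ha]; push_cast; ring
    have hB : (B : ℝ) = b + 1 + j := by rw [← hb]; push_cast; ring
    simp [jacR, hA, hB]
    ring

lemma jacR_coeff (A B : ℕ) (j : ℕ) : ∀ a b : ℕ, a + j = A → b + j = B → ∀ i : ℕ,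
    (jacR A B j).coeff i = 2 ^ j / 2 ^ i * (-1) ^ i * (B.factorial : ℝ) * ((a + b + j + i).factorial : ℝ)
      / ((a + b + j).factorial * (b + i).factorial) * (j.choose i : ℝ) := by
  induction j with
  | zero =>
    intro a b ha hb i
    simp at ha hb; subst ha hb
    cases i with
    | zero =>
      simp [jacR]
      have := Nat.factorial_ne_zero b
      have := Nat.factorial_ne_zero (a+b)
      field_simp
    | succ i => simp [jacR, Polynomial.coeff_one]
  | succ j ih =>
    intro a b ha hb i
    have ih' := ih (a+1) (b+1) (by omega) (by omega)
    have hA : (A : ℝ) = a + 1 + j := by rw [← ha]; push_cast; ring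
    have hB : (B : ℝ) = b + 1 + j := by rw [← hb]; push_cast; ring
    have e : jacR A B (j+1) = Polynomial.C 2 * (Polynomial.X * Polynomial.derivative (jacR A B j)) -
       Polynomial.X * (Polynomial.X * Polynomial.derivative (jacR A B j)) + Polynomial.C (2 * (B - j : ℝ)) * jacR A B j
       - Polynomial.X * (Polynomial.C (A + B - 2 * j : ℝ) * jacR A B j) := by
      have : Polynomial.C (2:ℝ) = 2 := rfl
      simp only [jacR, map_mul, map_sub, map_add, this]; ring
    rw [e]
    have f1 := Nat.factorial_ne_zero 
    cases i with
    | zero =>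
      simp [Polynomial.mul_coeff_zero, ih']
      rw [show a + 1 + (b+1) + j = a + b + (j+1) + 1 by ring, Nat.factorial_succ b, hB, pow_succ]
      have := f1 b
      have := f1 (a+b+(j+1))
      have := f1 (a+b+(j+1)+1)
      push_cast
      field_simp
      ring
    | succ i =>
      have hX : ∀ s, (Polynomial.X * Polynomial.derivative (jacR A B j)).coeff s = s * (jacR A B j).coeff s := by
        intro s
        cases s with
        | zero => simp
        | succ s => rw [Polynomial.coeff_X_mul, Polynomial.coeff_derivative]; push_cast; ring
      rw [Polynomial.coeff_sub, Polynomial.coeff_add, Polynomial.coeff_sub, Polynomial.coeff_C_mul, Polynomial.coeff_C_mul,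
        hX (i+1), Polynomial.coeff_X_mul, hX i, Polynomial.coeff_X_mul, Polynomial.coeff_C_mul, ih', ih', hA, hB]
      have hc : ((j+1).choose (i+1) : ℝ) = j.choose i + j.choose (i+1) := by
        rw [Nat.choose_succ_succ]; push_cast; ring
      have hc2 : (j.choose (i+1) : ℝ) * (i + 1) = j.choose i * (j - i) := by
        rcases le_or_gt i j with h | h
        · have := Nat.choose_succ_right_eq j i
          have h2 : ((j - i : ℕ) : ℝ) = j - i := by push_cast [h]; ring
          rw [← h2]; exact_mod_cast this
        · rw [Nat.choose_eq_zero_of_lt h, Nat.choose_eq_zero_of_lt (by omega)]; simp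
      have g1 := f1 (b+1+i)
      have g2 := f1 (a+b+(j+1))
      rw [hc, show a + 1 + (b+1) + j + (i+1) = (a + b + (j+1) + (i+1)) + 1 by ring,
        show a + 1 + (b+1) + j + i = (a + b + (j+1) + (i+1)) by ring,
        show a + 1 + (b+1) + j = (a + b + (j+1)) + 1 by ring,
        show b + 1 + (i+1) = b + 1 + i + 1 by ring, show b + (i+1) = b + 1 + i by ring,
        Nat.factorial_succ (a+b+(j+1)+(i+1)), Nat.factorial_succ (a+b+(j+1)), Nat.factorial_succ (b+1+i)]
      generalize (j.choose i : ℝ) = p at *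
      generalize (j.choose (i+1) : ℝ) = q at *
      generalize ((a+b+(j+1)+(i+1)).factorial) = F at *
      generalize ((a+b+(j+1)).factorial) = G at *
      generalize ((b+1+i).factorial) = H at *
      have k1 : (a:ℝ)+b+(j+1)+1 ≠ 0 := by positivity
      have k2 : (b:ℝ)+1+i+1 ≠ 0 := by positivity
      have k3 : (G:ℝ) ≠ 0 := by exact_mod_cast g2
      have k4 : (H:ℝ) ≠ 0 := by exact_mod_cast g1
      push_cast
      rw [pow_succ (2:ℝ) i, pow_succ (-1:ℝ) i, pow_succ (2:ℝ) j]
      field_simp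
      linear_combination (-F * (b + 1 + i + 1) : ℝ) * hc2

lemma poly_ext_Ioo (p q : Polynomial ℝ) (h : ∀ x ∈ Set.Ioo (-1:ℝ) 1, p.eval x = q.eval x) : p = q := by
  apply Polynomial.eq_of_infinite_eval_eq
  exact (Set.Ioo_infinite (by norm_num : (-1:ℝ) < 1)).mono h

lemma jac_explicit (k α β : ℕ) (p : Polynomial ℝ) (h : ∀ x ∈ Set.Ioo (-1 : ℝ) 1, p.eval x = jacobiFormula k α β x) (u : ℝ) :
    p.eval (2 * u - 1) = ∑ i ∈ Finset.range (k+1), (-1) ^ (k+i) * ((β+k).factorial : ℝ) * ((α + β + k + i).factorial : ℝ)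
      / ((α + β + k).factorial * (β + i).factorial * (i.factorial * (k - i).factorial)) * u ^ i := by
  have hp : p = Polynomial.C ((-1 : ℝ) ^ k / (2 ^ k * Nat.factorial k)) * (jacR (α+k : ℕ) (β+k : ℕ) k).comp (1 + Polynomial.X) := by
    apply poly_ext_Ioo
    intro x hx
    rw [h x hx, jacobiFormula, jacR_deriv (α+k) (β+k) k α β rfl rfl]
    have h1 : (1 - x) ≠ 0 := by linarith [hx.2]
    have h2 : (1 + x) ≠ 0 := by linarith [hx.1]
    simp
    field_simp
  have hd : (jacR (α+k : ℕ) (β+k : ℕ) k).natDegree < k + 1 := by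
    rw [Nat.lt_succ_iff, Polynomial.natDegree_le_iff_coeff_eq_zero]
    intro N hN
    rw [jacR_coeff _ _ k α β rfl rfl, Nat.choose_eq_zero_of_lt hN]; simp
  rw [hp, Polynomial.eval_mul, Polynomial.eval_comp, Polynomial.eval_eq_sum_range' hd, Polynomial.eval_C, Finset.mul_sum]
  apply Finset.sum_congr rfl
  intro i hi
  rw [jacR_coeff _ _ k α β rfl rfl, Nat.cast_choose ℝ (by simpa [Nat.lt_succ_iff] using hi)]
  have g1 := Nat.factorial_ne_zero (α+β+k)
  have g2 := Nat.factorial_ne_zero (β+i)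
  have g3 := Nat.factorial_ne_zero i
  have g4 := Nat.factorial_ne_zero (k-i)
  have g5 := Nat.factorial_ne_zero k
  simp only [Polynomial.eval_add, Polynomial.eval_one, Polynomial.eval_X]
  rw [show 1 + (2 * u - 1) = 2 * u by ring, mul_pow, pow_add]
  field_simp

noncomputable def gegQ (A : ℝ) : ℕ → Polynomial ℝ
  | 0 => 1
  | (j+1) => (1 - Polynomial.X ^ 2) * Polynomial.derivative (gegQ A j) -
      Polynomial.C (A - 2 * j) * Polynomial.X * gegQ A j

lemma gegQ_deriv (a : ℝ) (j : ℕ) : ∀ y ∈ Set.Ioo (-1:ℝ) 1,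
    iteratedDeriv j (fun y : ℝ => (1 - y ^ 2) ^ a) y =
      (1 - y ^ 2) ^ (a - j) * (gegQ (2 * a) j).eval y := by
  induction j with
  | zero => intro y hy; simp [gegQ]
  | succ j ih =>
    intro y hy
    rw [iteratedDeriv_succ]
    have h : iteratedDeriv j (fun y : ℝ => (1 - y ^ 2) ^ a) =ᶠ[𝓝 y]
      fun y => (1 - y ^ 2) ^ (a - j) * (gegQ (2 * a) j).eval y := by
      filter_upwards [isOpen_Ioo.mem_nhds hy] with z hz using ih z hz
    rw [h.deriv_eq]
    have hp : 0 < 1 - y ^ 2 := by nlinarith [hy.1, hy.2]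
    have h1 : HasDerivAt (fun y : ℝ => 1 - y ^ 2) (-(2 * y)) y := by
      simpa using ((hasDerivAt_id y).pow 2).const_sub 1
    have h2 := h1.rpow_const (p := a - j) (Or.inl hp.ne')
    have h3 := h2.mul ((gegQ (2 * a) j).hasDerivAt y)
    have e : (fun y : ℝ => (1 - y ^ 2) ^ (a - j) * (gegQ (2 * a) j).eval y) =
      (fun y : ℝ => (1 - y ^ 2) ^ (a - j)) * (fun y => (gegQ (2 * a) j).eval y) := rfl
    rw [e, h3.deriv]
    have e2 : (1 - y ^ 2) ^ (a - j) = (1 - y ^ 2) ^ (a - (j + 1 : ℕ)) * (1 - y ^ 2) := by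
      rw [← rpow_add_one hp.ne']; congr 1; push_cast; ring
    have e3 : a - j - 1 = a - (j + 1 : ℕ) := by push_cast; ring
    rw [e3, e2]
    simp [gegQ]
    ring

lemma gegQ_coeff (A : ℝ) (j : ℕ) (hA : (j:ℝ) < A) :
    (∀ i p : ℕ, p + 2 * i = j → (gegQ A j).coeff p =
      (-1) ^ (j + i) * j.factorial / (i.factorial * p.factorial * 2 ^ i) *
        ((∏ s ∈ Finset.range j, (A - s)) / ∏ s ∈ Finset.range i, (A - 1 - 2 * s))) ∧
    (∀ p : ℕ, (∀ i, p + 2 * i ≠ j) → (gegQ A j).coeff p = 0) := by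
  induction j with
  | zero =>
    constructor
    · intro i p h
      obtain ⟨rfl, rfl⟩ : i = 0 ∧ p = 0 := by omega
      simp [gegQ]
    · intro p h
      have := h 0
      simp [gegQ, Polynomial.coeff_one]; simpa using this
  | succ j ih =>
    push_cast at hA
    obtain ⟨ih1, ih2⟩ := ih (by linarith)
    have h0 : (gegQ A (j+1)).coeff 0 = (gegQ A j).coeff 1 := by
      have : gegQ A (j+1) = Polynomial.derivative (gegQ A j) - Polynomial.X * (Polynomial.X * Polynomial.derivative (gegQ A j) + Polynomial.C (A - 2 * j) * gegQ A j) := by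
        rw [gegQ]; ring
      rw [this, Polynomial.coeff_sub, Polynomial.coeff_derivative]; simp
    have h1 : ∀ q, (gegQ A (j+1)).coeff (q+1) = (q + 2) * (gegQ A j).coeff (q+2) - (A - 2 * j + q) * (gegQ A j).coeff q := by
      intro q
      have : gegQ A (j+1) = Polynomial.derivative (gegQ A j) - Polynomial.X * (Polynomial.X * Polynomial.derivative (gegQ A j) + Polynomial.C (A - 2 * j) * gegQ A j) := by
        rw [gegQ]; ring
      rw [this, Polynomial.coeff_sub, Polynomial.coeff_derivative, Polynomial.coeff_X_mul, Polynomial.coeff_add, Polynomial.coeff_C_mul]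
      cases q with
      | zero => simp; ring
      | succ q => rw [Polynomial.coeff_X_mul, Polynomial.coeff_derivative]; push_cast; ring
    constructor
    · intro i p h
      cases p with
      | zero =>
        obtain ⟨i, rfl⟩ : ∃ i', i = i' + 1 := ⟨i - 1, by omega⟩
        obtain rfl : j = 2 * i + 1 := by omega
        rw [h0, ih1 i 1 (by omega), Finset.prod_range_succ _ (2*i+1), Finset.prod_range_succ _ i]
        push_cast at hA ⊢
        have k1 : A - 1 - 2 * i ≠ 0 := by linarith
        have k2 : (∏ s ∈ Finset.range i, (A - 1 - 2 * s)) ≠ 0 := by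
          rw [Finset.prod_ne_zero_iff]; intro s hs
          have : (s:ℝ) + 1 ≤ i := by exact_mod_cast Finset.mem_range.1 hs
          linarith
        have k3 := Nat.factorial_ne_zero i
        rw [Nat.factorial_succ (2*i+1), Nat.factorial_succ i]
        push_cast
        simp only [Nat.factorial_one, Nat.factorial_zero, Nat.cast_one]
        rw [show A - (2 * i + 1) = A - 1 - 2 * i by ring, show 2 * i + 1 + 1 + (i+1) = (2 * i + 1 + i) + 2 by ring]
        rw [pow_add _ (2*i+1+i) 2]
        field_simp
        ring
      | succ q =>
        have hj : j = q + 2 * i := by omega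
        rw [h1, ih1 i q (by omega), Finset.prod_range_succ _ j]
        have k3 := Nat.factorial_ne_zero q
        cases i with
        | zero =>
          rw [ih2 (q+2) (by omega)]
          have : q = j := by omega
          subst this
          simp [Nat.factorial_succ]
          have k4 : (q:ℝ) + 1 ≠ 0 := by positivity
          field_simp
          ring
        | succ i =>
          rw [ih1 i (q+2) (by omega), Finset.prod_range_succ _ i]
          have hji : (j:ℝ) = q + 2 * (i + 1) := by rw [hj]; push_cast; ring
          have hq : (0:ℝ) ≤ q := by positivity
          have k1 : A - 1 - 2 * i ≠ 0 := by linarith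
          have k2 : (∏ s ∈ Finset.range i, (A - 1 - 2 * s)) ≠ 0 := by
            rw [Finset.prod_ne_zero_iff]; intro s hs
            have : (s:ℝ) + 1 ≤ i := by exact_mod_cast Finset.mem_range.1 hs
            linarith
          have k5 := Nat.factorial_ne_zero i
          generalize (∏ s ∈ Finset.range i, (A - 1 - 2 * s)) = D at *
          generalize (∏ s ∈ Finset.range j, (A - s)) = E at *
          have e1 : j + (i+1) = (j + i) + 1 := by ring
          have e2 : j + 1 + (i+1) = (j+i) + 2 := by ring
          rw [e1, e2, pow_add _ (j+i) 1, pow_add _ (j+i) 2, Nat.factorial_succ j, Nat.factorial_succ i, Nat.factorial_succ (q+1),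
            Nat.factorial_succ q]
          have k6 : (q:ℝ) + 1 ≠ 0 := by positivity
          have k7 : (q:ℝ) + 1 + 1 ≠ 0 := by positivity
          have k8 : (i:ℝ) + 1 ≠ 0 := by positivity
          push_cast
          field_simp
          rw [hji]
          ring
    · intro p h
      cases p with
      | zero => rw [h0]; apply ih2; intro i hi; exact h (i+1) (by omega)
      | succ q =>
        rw [h1, ih2 q (fun i hi => h i (by omega)), ih2 (q+2) (fun i hi => h (i+1) (by omega))]; simp

def Sset (l : ℕ) : Finset (ℕ × ℕ) := (Finset.range (l+1) ×ˢ Finset.range (l+1)).filter (fun q => q.1 + 2 * q.2 = l)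

lemma mem_Sset (l : ℕ) (q : ℕ × ℕ) : q ∈ Sset l ↔ q.1 + 2 * q.2 = l := by
  simp [Sset]; omega

lemma gegQ_eval (A : ℝ) (l : ℕ) (hA : (l:ℝ) < A) (z : ℝ) :
    (gegQ A l).eval z = ∑ q ∈ Sset l, (gegQ A l).coeff q.1 * z ^ q.1 := by
  have hd : (gegQ A l).natDegree < l + 1 := by
    rw [Nat.lt_succ_iff, Polynomial.natDegree_le_iff_coeff_eq_zero]
    intro N hN
    exact (gegQ_coeff A l hA).2 N (by omega)
  rw [Polynomial.eval_eq_sum_range' hd, Sset, Finset.sum_filter, Finset.sum_product]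
  apply Finset.sum_congr rfl
  intro p hp
  by_cases h : ∃ i, p + 2 * i = l
  · obtain ⟨i, hi⟩ := h
    rw [Finset.sum_eq_single i]
    · simp [hi]
    · intro b _ hb; rw [if_neg]; simp; omega
    · intro h'; exfalso; apply h'; simp; omega
  · push Not at h
    rw [(gegQ_coeff A l hA).2 p h]; simp [h]

lemma prod_fac (N j : ℕ) (h : j ≤ N) : (∏ s ∈ Finset.range j, ((N:ℝ) - s)) = N.factorial / (N - j).factorial := by
  induction j with
  | zero => simp; rw [div_self]; exact_mod_cast N.factorial_ne_zero
  | succ j ih =>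
    rw [Finset.prod_range_succ, ih (by omega)]
    obtain ⟨d, rfl⟩ : ∃ d, N = d + (j + 1) := ⟨N - (j+1), by omega⟩
    rw [show d + (j+1) - j = d + 1 by omega, show d + (j+1) - (j+1) = d by omega, Nat.factorial_succ d]
    have := d.factorial_ne_zero
    have k : (d:ℝ) + 1 ≠ 0 := by positivity
    push_cast
    field_simp
    ring

lemma gam_half (n l : ℕ) : ((2*l+4*n+1).factorial : ℝ) * Real.Gamma (2 * (n : ℝ) + 3 / 2) * (2*n).factorial
    = 4 ^ l * (2*n+l).factorial * (4*n+1).factorial * Real.Gamma (2 * (n : ℝ) + l + 3 / 2) := by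
  induction l with
  | zero => simp; ring
  | succ l ih =>
    rw [show 2*(l+1)+4*n+1 = (2*l+4*n+1)+1+1 by ring, show 2*n+(l+1) = (2*n+l)+1 by ring, Nat.factorial_succ, Nat.factorial_succ,
      Nat.factorial_succ (2*n+l)]
    have : (2 * (n : ℝ) + (l+1 : ℕ) + 3 / 2) = (2 * (n : ℝ) + l + 3 / 2) + 1 := by push_cast; ring
    rw [this, Real.Gamma_add_one (by positivity), pow_succ]
    push_cast
    linear_combination ((2*l+4*n+1+1+1) * (2*l+4*n+1+1) : ℝ) * ih

lemma geg_explicit (n l : ℕ) (p : Polynomial ℝ) (h : ∀ x ∈ Set.Ioo (-1 : ℝ) 1, p.eval x = gegenbauerFormula n l x) (z : ℝ) :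
    p.eval z = ∑ q ∈ Sset l, (-1) ^ q.2 * ((2*n+q.1+q.2).factorial : ℝ) / ((2*n).factorial * q.2.factorial * q.1.factorial)
      * (2 * z) ^ q.1 := by
  set K : ℝ := ((-1 : ℝ) ^ l / 2 ^ l) *
    (Real.Gamma ((l : ℝ) + 4 * n + 2) * Real.Gamma (2 * (n : ℝ) + 3 / 2) /
      (Real.Gamma (4 * (n : ℝ) + 2) * Real.Gamma ((l : ℝ) + 1) *
        Real.Gamma (2 * (n : ℝ) + l + 3 / 2))) with hK
  set A : ℝ := 2 * (2 * (n : ℝ) + l + 1 / 2) with hAdef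
  have hA : (l:ℝ) < A := by rw [hAdef]; linarith [Nat.cast_nonneg (α := ℝ) n, Nat.cast_nonneg (α := ℝ) l]
  have hp : p = Polynomial.C K * gegQ A l := by
    apply poly_ext_Ioo
    intro x hx
    have hpos : 0 < 1 - x ^ 2 := by nlinarith [hx.1, hx.2]
    rw [h x hx, gegenbauerFormula, gegQ_deriv _ l x hx, ← hK, Polynomial.eval_mul, Polynomial.eval_C]
    have : (1 - x ^ 2) ^ (-(2 * (n : ℝ) + 1 / 2)) * (1 - x ^ 2) ^ (2 * (n : ℝ) + l + 1 / 2 - l) = 1 := by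
      rw [← rpow_add hpos]; ring_nf; simp
    linear_combination (K * (gegQ A l).eval x) * this
  rw [hp, Polynomial.eval_mul, Polynomial.eval_C, gegQ_eval A l hA, Finset.mul_sum]
  apply Finset.sum_congr rfl
  rintro ⟨m, k⟩ hq
  rw [mem_Sset] at hq
  dsimp only at hq ⊢
  rw [(gegQ_coeff A l hA).1 k m hq]
  have e1 : ∏ s ∈ Finset.range l, (A - s) = (2*l+4*n+1).factorial / (l + 4 * n + 1).factorial := by
    have := prod_fac (2*l+4*n+1) l (by omega)
    rw [show 2*l+4*n+1-l = l+4*n+1 by omega] at this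
    rw [← this]
    apply Finset.prod_congr rfl; intro s _; rw [hAdef]; push_cast; ring
  have e2 : ∏ s ∈ Finset.range k, (A - 1 - 2 * s) = 2 ^ k * ((l+2*n).factorial / (2 * n + m + k).factorial) := by
    have := prod_fac (l+2*n) k (by omega)
    rw [show l+2*n-k = 2*n+m+k by omega] at this
    rw [← this]
    conv_rhs => rw [← Finset.card_range k, ← Finset.prod_const, Finset.card_range, ← Finset.prod_mul_distrib]
    apply Finset.prod_congr rfl; intro s _; rw [hAdef]; push_cast; ring
  have g1 : Real.Gamma ((l : ℝ) + 4 * n + 2) = (l+4*n+1).factorial := by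
    rw [← Real.Gamma_nat_eq_factorial]; congr 1; push_cast; ring
  have g2 : Real.Gamma (4 * (n:ℝ) + 2) = (4*n+1).factorial := by
    rw [← Real.Gamma_nat_eq_factorial]; congr 1; push_cast; ring
  have g3 : Real.Gamma ((l : ℝ) + 1) = l.factorial := Real.Gamma_nat_eq_factorial l
  have g4 := gam_half n l
  have g5 : Real.Gamma (2 * (n : ℝ) + l + 3 / 2) ≠ 0 := (Real.Gamma_pos_of_pos (by positivity)).ne'
  rw [e1, e2, hK, g1, g2, g3]
  have f1 := Nat.factorial_ne_zero (l+4*n+1)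
  have f2 := Nat.factorial_ne_zero (4*n+1)
  have f3 := Nat.factorial_ne_zero l
  have f4 := Nat.factorial_ne_zero (2*n)
  have f5 := Nat.factorial_ne_zero m
  have f6 := Nat.factorial_ne_zero k
  have f7 := Nat.factorial_ne_zero (l+2*n)
  have f8 := Nat.factorial_ne_zero (2*n+m+k)
  have e4 : (4:ℝ)^l = 2^m * 2^l * (2^k)^2 := by
    rw [← pow_mul, ← pow_add, ← pow_add, show (4:ℝ) = 2^2 by norm_num, ← pow_mul]; congr 1; omega
  rw [e4, show 2 * n + l = l + 2 * n by ring] at g4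
  have e5 : (-1:ℝ)^l * (-1)^(l+k) = (-1)^k := by rw [pow_add, ← mul_assoc, ← pow_add, ← two_mul]; simp
  rw [mul_pow]
  generalize Real.Gamma (2 * (n : ℝ) + l + 3 / 2) = G1 at *
  generalize Real.Gamma (2 * (n : ℝ) + 3 / 2) = G2 at *
  rw [← e5]
  field_simp
  linear_combination z ^ m * g4

lemma two_cosh_mul_sinh (m : ℕ) (y : ℝ) :
    2 * Real.cosh y * Real.sinh ((m + 1) * y) = Real.sinh ((m + 1 + 1) * y) + Real.sinh (m * y) := by
  rw [show ((m:ℝ) + 1 + 1) * y = (m + 1) * y + y by ring, show (m:ℝ) * y = (m + 1) * y - y by ring, Real.sinh_add, Real.sinh_sub]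
  ring

noncomputable def dco (m j : ℕ) : ℝ := (m + 1) * (m + 2 * j).factorial / (j.factorial * (m + j + 1).factorial)

lemma dco_rec (m j : ℕ) : dco (m+1) (j+1) = dco m (j+1) + dco (m+2) j := by
  simp only [dco]
  rw [show m + 1 + 2 * (j+1) = (m + 2 * j + 2) + 1 by ring, show m + 2 * (j+1) = m + 2 * j + 2 by ring,
    show m + 2 + 2 * j = m + 2 * j + 2 by ring, show m + 1 + (j+1) + 1 = (m + j + 2) + 1 by ring,
    show m + (j+1) + 1 = m + j + 2 by ring, show m + 2 + j + 1 = (m + j + 2) + 1 by ring, Nat.factorial_succ (m+2*j+2), Nat.factorial_succ (m+j+2),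
    Nat.factorial_succ j]
  have f1 := Nat.factorial_ne_zero j
  have f2 := Nat.factorial_ne_zero (m+j+2)
  have f3 : (m:ℝ) + j + 2 + 1 ≠ 0 := by positivity
  have f4 : (j:ℝ) + 1 ≠ 0 := by positivity
  push_cast
  field_simp
  ring

lemma dco_zero (m : ℕ) : dco m 0 = 1 := by
  simp only [dco]
  have f1 := Nat.factorial_ne_zero m
  have f2 : (m:ℝ) + 1 ≠ 0 := by positivity
  simp [Nat.factorial_succ]
  exact ⟨f2, f1⟩

lemma dco_rec0 (j : ℕ) : dco 0 (j+1) = dco 1 j := by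
  simp only [dco]
  rw [show 0 + 2 * (j+1) = (1 + 2 * j) + 1 by ring, show 0 + (j+1) + 1 = 1 + j + 1 by ring, Nat.factorial_succ (1 + 2 * j),
    Nat.factorial_succ j]
  have f1 := Nat.factorial_ne_zero j
  have f2 := Nat.factorial_ne_zero (1+j+1)
  have f4 : (j:ℝ) + 1 ≠ 0 := by positivity
  push_cast
  field_simp
  ring

lemma cosh_pow_expand (y : ℝ) (p : ℕ) : (2 * Real.cosh y) ^ p * Real.sinh y =
    ∑ q ∈ Sset p, dco q.1 q.2 * Real.sinh ((q.1 + 1) * y) := by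
  induction p with
  | zero =>
    have : Sset 0 = {(0,0)} := by decide
    simp [this, dco]
  | succ p ih =>
    have e1 : ∑ q ∈ Sset p, dco q.1 q.2 * Real.sinh ((q.1 + 1 + 1) * y) =
        ∑ q ∈ (Sset (p+1)).filter (fun q => 1 ≤ q.1), dco (q.1 - 1) q.2 * Real.sinh ((q.1 + 1) * y) := by
      refine Finset.sum_nbij' (fun q => (q.1 + 1, q.2)) (fun q => (q.1 - 1, q.2)) ?_ ?_ ?_ ?_ ?_
      · rintro ⟨m, k⟩ h; simp [mem_Sset] at h ⊢; omega
      · rintro ⟨m, k⟩ h; simp [mem_Sset] at h ⊢; omega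
      · rintro ⟨m, k⟩ h; simp
      · rintro ⟨m, k⟩ h; simp [mem_Sset] at h ⊢; omega
      · rintro ⟨m, k⟩ h; simp
    have e2 : ∑ q ∈ Sset p, dco q.1 q.2 * Real.sinh (q.1 * y) =
        ∑ q ∈ (Sset (p+1)).filter (fun q => 1 ≤ q.2), dco (q.1 + 1) (q.2 - 1) * Real.sinh ((q.1 + 1) * y) := by
      have : ∑ q ∈ Sset p, dco q.1 q.2 * Real.sinh (q.1 * y) = ∑ q ∈ (Sset p).filter (fun q => 1 ≤ q.1), dco q.1 q.2 * Real.sinh (q.1 * y) := by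
        rw [Finset.sum_filter]
        apply Finset.sum_congr rfl
        rintro ⟨m, k⟩ h
        cases m <;> simp
      rw [this]
      refine Finset.sum_nbij' (fun q => (q.1 - 1, q.2 + 1)) (fun q => (q.1 + 1, q.2 - 1)) ?_ ?_ ?_ ?_ ?_
      · rintro ⟨m, k⟩ h; simp [mem_Sset] at h ⊢; omega
      · rintro ⟨m, k⟩ h; simp [mem_Sset] at h ⊢; omega
      · rintro ⟨m, k⟩ h; simp [mem_Sset] at h ⊢; omega
      · rintro ⟨m, k⟩ h; simp [mem_Sset] at h ⊢; omega
      · rintro ⟨m, k⟩ h; simp [mem_Sset] at h ⊢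
        obtain ⟨m, rfl⟩ : ∃ m', m = m' + 1 := ⟨m - 1, by omega⟩
        simp
    have e3 : (2 * Real.cosh y) ^ (p+1) * Real.sinh y = ∑ q ∈ Sset p, dco q.1 q.2 * Real.sinh ((q.1 + 1 + 1) * y)
        + ∑ q ∈ Sset p, dco q.1 q.2 * Real.sinh (q.1 * y) := by
      rw [pow_succ, mul_comm ((2 * Real.cosh y) ^ p), mul_assoc, ih, Finset.mul_sum, ← Finset.sum_add_distrib]
      apply Finset.sum_congr rfl
      intro q _
      rw [← mul_add, ← two_cosh_mul_sinh]; ring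
    rw [e3, e1, e2, Finset.sum_filter, Finset.sum_filter, ← Finset.sum_add_distrib]
    apply Finset.sum_congr rfl
    rintro ⟨m, k⟩ h
    rw [mem_Sset] at h
    rcases m with _ | m <;> rcases k with _ | k
    · simp at h
    · simp [dco_rec0]
    · simp [dco_zero]
    · simp [dco_rec]; ring

noncomputable def Bc (N : ℕ) (x : ℝ) (m k : ℕ) : ℝ := (m + 1) * ∑ ji ∈ Finset.HasAntidiagonal.antidiagonal k,
  (-1) ^ ji.2 * ((N + 1 + m + k + ji.1).factorial : ℝ) / (N.factorial * ji.1.factorial * ji.2.factorial * (m + 1 + ji.1).factorial) * x ^ (m + 2 * ji.1)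

lemma Bc_jac (N : ℕ) (x : ℝ) (m k : ℕ) :
    ((m:ℝ) + 1) * ((k + m + (N + 1)).choose N : ℝ) * x ^ m * (∑ i ∈ Finset.range (k+1), (-1) ^ (k+i) * (((m+1)+k).factorial : ℝ) * ((N + (m+1) + k + i).factorial : ℝ)
      / ((N + (m+1) + k).factorial * ((m+1) + i).factorial * (i.factorial * (k - i).factorial)) * (x^2) ^ i) = Bc N x m k := by
  rw [Bc, Finset.Nat.sum_antidiagonal_eq_sum_range_succ_mk, Finset.mul_sum, Finset.mul_sum]
  apply Finset.sum_congr rfl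
  intro i hi
  have hi : i ≤ k := by simpa [Nat.lt_succ_iff] using hi
  rw [Nat.cast_choose ℝ (by omega : N ≤ k + m + (N+1)), show k + m + (N+1) - N = m + 1 + k by omega,
    show k + m + (N+1) = N + (m+1) + k by ring, show N + 1 + m + k + i = N + (m+1) + k + i by ring]
  have f1 := Nat.factorial_ne_zero N
  have f2 := Nat.factorial_ne_zero (m+1+k)
  have f3 := Nat.factorial_ne_zero (N+(m+1)+k)
  have f4 := Nat.factorial_ne_zero (m+1+i)
  have f5 := Nat.factorial_ne_zero i
  have f6 := Nat.factorial_ne_zero (k-i)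
  have e : (-1:ℝ)^(k+i) = (-1)^(k-i) := by
    rw [show k + i = (k - i) + 2 * i by omega, pow_add, pow_mul]; simp
  rw [e, ← pow_mul, pow_add]
  field_simp

lemma geg_expand (N l : ℕ) (x y : ℝ) :
    ((N:ℝ) + 1) * Real.sinh y * ∑ q ∈ Sset l, (-1) ^ q.2 * ((N+1+q.1+q.2).factorial : ℝ) / ((N+1).factorial * q.2.factorial * q.1.factorial)
      * (2 * (x * Real.cosh y)) ^ q.1 = ∑ q ∈ Sset l, Bc N x q.1 q.2 * Real.sinh ((q.1 + 1) * y) := by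
  have e1 : ∀ q ∈ Sset l, ((N:ℝ) + 1) * Real.sinh y * ((-1) ^ q.2 * ((N+1+q.1+q.2).factorial : ℝ) / ((N+1).factorial * q.2.factorial * q.1.factorial)
      * (2 * (x * Real.cosh y)) ^ q.1) = ∑ s ∈ Sset q.1, (-1) ^ q.2 * ((N+1+q.1+q.2).factorial : ℝ) / (N.factorial * q.2.factorial * q.1.factorial) * x ^ q.1 *
        (dco s.1 s.2 * Real.sinh ((s.1 + 1) * y)) := by
    intro q _
    rw [← Finset.mul_sum, ← cosh_pow_expand, Nat.factorial_succ N]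
    have f1 := Nat.factorial_ne_zero N
    have f2 := Nat.factorial_ne_zero q.1
    have f3 := Nat.factorial_ne_zero q.2
    have f4 : (N:ℝ) + 1 ≠ 0 := by positivity
    rw [show 2 * (x * Real.cosh y) = x * (2 * Real.cosh y) by ring, mul_pow]
    push_cast
    field_simp
  rw [Finset.mul_sum, Finset.sum_congr rfl e1]
  simp only [Bc, Finset.mul_sum, Finset.sum_mul]
  rw [Finset.sum_sigma', Finset.sum_sigma']
  refine Finset.sum_bij' (fun a _ => ⟨(a.2.1, a.2.2 + a.1.2), (a.2.2, a.1.2)⟩) (fun b _ => ⟨(b.1.1 + 2 * b.2.1, b.2.2), (b.1.1, b.2.1)⟩) ?_ ?_ ?_ ?_ ?_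
  · rintro ⟨⟨p, i⟩, ⟨m, j⟩⟩ h; simp [mem_Sset] at h ⊢; omega
  · rintro ⟨⟨m, k⟩, ⟨j, i⟩⟩ h; simp [mem_Sset] at h ⊢; omega
  · rintro ⟨⟨p, i⟩, ⟨m, j⟩⟩ h; simp [mem_Sset] at h ⊢; omega
  · rintro ⟨⟨m, k⟩, ⟨j, i⟩⟩ h; simp [mem_Sset] at h ⊢; omega
  · rintro ⟨⟨p, i⟩, ⟨m, j⟩⟩ h
    simp [mem_Sset] at h
    obtain ⟨h1, rfl⟩ := h
    simp only [dco]
    rw [show N + 1 + m + (j + i) + j = N + 1 + (m + 2 * j) + i by ring, show m + 1 + j = m + j + 1 by ring]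
    have f1 := Nat.factorial_ne_zero N
    have f2 := Nat.factorial_ne_zero (m+2*j)
    have f3 := Nat.factorial_ne_zero i
    have f4 := Nat.factorial_ne_zero j
    have f5 := Nat.factorial_ne_zero (m+j+1)
    field_simp

lemma Bc_bound (N : ℕ) (x : ℝ) (hx0 : 0 ≤ x) (hx1 : x ≤ 1) (m k : ℕ) :
    |Bc N x m k| ≤ ((m:ℝ) + 1) * ((k + 1) * (N + 1 + m + 2 * k) ^ (N + k)) := by
  rw [Bc, abs_mul, abs_of_nonneg (by positivity : (0:ℝ) ≤ m + 1)]
  refine mul_le_mul_of_nonneg_left ?_ (by positivity)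
  refine (Finset.abs_sum_le_sum_abs _ _).trans ?_
  refine (Finset.sum_le_card_nsmul _ _ (((N:ℝ) + 1 + m + 2 * k) ^ (N + k)) ?_).trans ?_
  · rintro ⟨j, i⟩ h
    simp at h
    dsimp only
    have h1 : N + 1 + m + k + j = m + 1 + j + (N + k) := by ring
    have h2 := Nat.factorial_mul_ascFactorial (m+1+j) (N+k)
    have h3 := Nat.ascFactorial_le_pow_add (m+1+j) (N+k)
    rw [h1, ← h2, abs_mul, abs_div, abs_mul, abs_pow, abs_neg, abs_one, one_pow, one_mul, abs_pow, abs_of_nonneg hx0, Nat.abs_cast,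
      abs_of_nonneg (by positivity)]
    have h4 : x ^ (m + 2 * j) ≤ 1 := pow_le_one₀ hx0 hx1
    have h5 : (((m+1+j+1).ascFactorial (N+k) : ℕ) : ℝ) ≤ ((N:ℝ) + 1 + m + 2 * k) ^ (N + k) := by
      refine (Nat.cast_le.2 h3).trans ?_
      push_cast
      apply pow_le_pow_left₀ (by positivity)
      have : (j:ℝ) ≤ k := by exact_mod_cast (by omega : j ≤ k)
      linarith
    have f : ∀ a : ℕ, (1:ℝ) ≤ a.factorial := fun a => by exact_mod_cast Nat.factorial_pos a
    have h6 : (1:ℝ) ≤ N.factorial * j.factorial * i.factorial := by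
      have := f N; have := f j; have := f i
      calc (1:ℝ) = 1 * 1 * 1 := by ring
        _ ≤ _ := by gcongr
    have h7 := f (m+1+j)
    calc _ ≤ ((m+1+j).factorial * (m+1+j+1).ascFactorial (N+k) : ℕ) / ((N.factorial * j.factorial * i.factorial : ℝ) * (m+1+j).factorial) * 1 := by
          gcongr
      _ = ((m+1+j+1).ascFactorial (N+k) : ℕ) / (N.factorial * j.factorial * i.factorial : ℝ) := by
          push_cast; field_simp
      _ ≤ ((m+1+j+1).ascFactorial (N+k) : ℕ) := div_le_self (by positivity) h6
      _ ≤ _ := h5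
  · simp

lemma gauss_c (t : ℝ) (ht : 0 < t) (a b : ℝ) :
    Integrable (fun x : ℝ => Complex.exp (((-1/(4*t) : ℝ) : ℂ) * x ^ 2 + (b + a * Complex.I) * x + 0)) ∧
    ∫ x : ℝ, Complex.exp (((-1/(4*t) : ℝ) : ℂ) * x ^ 2 + (b + a * Complex.I) * x + 0) =
      ((2 * Real.sqrt (π * t) * Real.exp (t * (b^2 - a^2)) : ℝ) : ℂ) * Complex.exp ((2 * a * b * t : ℝ) * Complex.I) := by
  have hneg : (((-1/(4*t) : ℝ) : ℂ)).re < 0 := by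
    rw [Complex.ofReal_re]; apply div_neg_of_neg_of_pos <;> linarith
  refine ⟨integrable_cexp_quadratic' hneg _ _, ?_⟩
  rw [integral_cexp_quadratic hneg]
  have h1 : ((π : ℂ) / -((-1/(4*t) : ℝ) : ℂ)) ^ (1/2 : ℂ) = ((2 * Real.sqrt (π * t) : ℝ) : ℂ) := by
    have : (π : ℂ) / -((-1/(4*t) : ℝ) : ℂ) = ((2 ^ 2 * (π * t) : ℝ) : ℂ) := by
      rw [← Complex.ofReal_neg, ← Complex.ofReal_div]; congr 1; field_simp; norm_num
    rw [this, show (1/2 : ℂ) = ((1/2 : ℝ) : ℂ) by norm_num, ← Complex.ofReal_cpow (by positivity), ← Real.sqrt_eq_rpow,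
      Real.sqrt_mul (by positivity), Real.sqrt_sq (by norm_num)]
  rw [h1, Complex.ofReal_mul (2 * Real.sqrt (π * t)) (Real.exp _), mul_assoc, Complex.ofReal_exp, ← Complex.exp_add]
  congr 2
  have ht' : (t : ℂ) ≠ 0 := by exact_mod_cast ht.ne'
  push_cast
  field_simp
  ring_nf
  rw [Complex.I_sq]
  ring

lemma gauss_sin (t : ℝ) (ht : 0 < t) (a b : ℝ) :
    Integrable (fun x : ℝ => Real.exp (-x^2/(4*t) + b * x) * Real.sin (a * x)) ∧
    ∫ x : ℝ, Real.exp (-x^2/(4*t) + b * x) * Real.sin (a * x) =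
      2 * Real.sqrt (π * t) * Real.exp (t * (b^2 - a^2)) * Real.sin (2 * a * b * t) := by
  obtain ⟨h1, h2⟩ := gauss_c t ht a b
  have e : ∀ x : ℝ, RCLike.im (Complex.exp (((-1/(4*t) : ℝ) : ℂ) * x ^ 2 + (b + a * Complex.I) * x + 0)) = Real.exp (-x^2/(4*t) + b * x) * Real.sin (a * x) := by
    intro x
    have : (((-1/(4*t) : ℝ) : ℂ) * x ^ 2 + (b + a * Complex.I) * x + 0) = ((-x^2/(4*t) + b * x : ℝ) : ℂ) + ((a * x : ℝ) : ℂ) * Complex.I := by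
      push_cast; ring
    rw [this, Complex.exp_add, ← Complex.ofReal_exp]
    simp only [RCLike.im_to_complex]
    rw [Complex.im_ofReal_mul, Complex.exp_ofReal_mul_I_im]
  constructor
  · exact h1.im.congr (Filter.Eventually.of_forall e)
  · have := integral_im h1
    rw [h2] at this
    simp only [e] at this
    rw [this]
    simp only [RCLike.im_to_complex]
    rw [Complex.im_ofReal_mul, Complex.exp_ofReal_mul_I_im]

lemma gauss_re (t : ℝ) (ht : 0 < t) (b : ℝ) :
    Integrable (fun x : ℝ => Real.exp (-x^2/(4*t) + b * x)) ∧
    ∫ x : ℝ, Real.exp (-x^2/(4*t) + b * x) =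
      2 * Real.sqrt (π * t) * Real.exp (t * b^2) := by
  obtain ⟨h1, h2⟩ := gauss_c t ht 0 b
  have e : ∀ x : ℝ, RCLike.re (Complex.exp (((-1/(4*t) : ℝ) : ℂ) * x ^ 2 + (b + (0:ℝ) * Complex.I) * x + 0)) = Real.exp (-x^2/(4*t) + b * x) := by
    intro x
    have : (((-1/(4*t) : ℝ) : ℂ) * x ^ 2 + (b + (0:ℝ) * Complex.I) * x + 0) = ((-x^2/(4*t) + b * x : ℝ) : ℂ) := by
      push_cast; ring
    rw [this, ← Complex.ofReal_exp]
    simp only [RCLike.re_to_complex]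
    rw [Complex.ofReal_re]
  constructor
  · exact h1.re.congr (Filter.Eventually.of_forall e)
  · have := integral_re h1
    rw [h2] at this
    simp only [e] at this
    rw [this]
    simp only [RCLike.re_to_complex]
    rw [Complex.re_ofReal_mul, Complex.exp_ofReal_mul_I_re]
    simp

noncomputable def gfun (t a b y : ℝ) : ℝ := Real.sinh (b * y) * Real.sin (a * y) * Real.exp (-y^2/(4*t))

lemma gfun_eq (t a b y : ℝ) : gfun t a b y = (1/2) * (Real.exp (-y^2/(4*t) + b * y) * Real.sin (a * y))
    - (1/2) * (Real.exp (-y^2/(4*t) + (-b) * y) * Real.sin (a * y)) := by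
  rw [gfun, Real.sinh_eq, Real.exp_add, Real.exp_add, neg_mul]; ring

lemma gfun_integrable (t : ℝ) (ht : 0 < t) (a b : ℝ) : Integrable (gfun t a b) := by
  rw [show gfun t a b = _ from funext (gfun_eq t a b)]
  exact ((gauss_sin t ht a b).1.const_mul _).sub ((gauss_sin t ht a (-b)).1.const_mul _)

lemma gfun_integral (t : ℝ) (ht : 0 < t) (a b : ℝ) : ∫ y in Set.Ioi (0:ℝ), gfun t a b y =
    Real.sqrt (π * t) * Real.exp (t * (b^2 - a^2)) * Real.sin (2 * a * b * t) := by
  have h := integral_comp_abs (f := gfun t a b)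
  have e : ∀ x, gfun t a b |x| = gfun t a b x := by
    intro x
    rcases abs_choice x with h | h <;> rw [h]
    simp [gfun]
  simp only [e] at h
  have h2 : ∫ x, gfun t a b x = 2 * (Real.sqrt (π * t) * Real.exp (t * (b^2 - a^2)) * Real.sin (2 * a * b * t)) := by
    rw [show gfun t a b = _ from funext (gfun_eq t a b), integral_sub ((gauss_sin t ht a b).1.const_mul _) ((gauss_sin t ht a (-b)).1.const_mul _),
      integral_const_mul, integral_const_mul, (gauss_sin t ht a b).2, (gauss_sin t ht a (-b)).2]
    rw [show 2 * a * -b * t = -(2 * a * b * t) by ring, Real.sin_neg, neg_sq]; ring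
  linarith

lemma gfun_abs_le (t a b y : ℝ) (hb : 0 ≤ b) (hy : 0 ≤ y) : |gfun t a b y| ≤ Real.exp (-y^2/(4*t) + b * y) := by
  have hs : 0 ≤ Real.sinh (b * y) := Real.sinh_nonneg_iff.2 (by positivity)
  have h1 : Real.sinh (b * y) ≤ Real.exp (b * y) := by
    rw [Real.sinh_eq]; linarith [Real.exp_pos (b*y), Real.exp_pos (-(b*y))]
  rw [gfun, abs_mul, abs_mul, abs_of_nonneg hs, abs_of_pos (Real.exp_pos _), Real.exp_add, mul_comm (Real.exp (-y^2/(4*t)))]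
  gcongr
  calc _ ≤ Real.exp (b*y) * 1 := by gcongr; exact Real.abs_sin_le_one _
    _ = _ := mul_one _

lemma exp_quad_le (t b y : ℝ) (ht : 0 < t) : Real.exp (-y^2/(4*t) + b * y) ≤ Real.exp (t * b^2) := by
  apply Real.exp_le_exp.2
  have : t * b^2 - (-y^2/(4*t) + b * y) = (y - 2 * t * b)^2 / (4 * t) := by field_simp; ring
  have : 0 ≤ (y - 2 * t * b)^2 / (4 * t) := by positivity
  linarith

lemma gfun_norm_integral (t : ℝ) (ht : 0 < t) (a b : ℝ) (hb : 0 ≤ b) : ∫ y in Set.Ioi (0:ℝ), ‖gfun t a b y‖ ≤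
    2 * Real.sqrt (π * t) * Real.exp (t * b^2) := by
  obtain ⟨h1, h2⟩ := gauss_re t ht b
  rw [← h2]
  calc _ ≤ ∫ y in Set.Ioi (0:ℝ), Real.exp (-y^2/(4*t) + b * y) := by
        apply setIntegral_mono_on (gfun_integrable t ht a b).norm.integrableOn h1.integrableOn measurableSet_Ioi
        intro y hy
        exact gfun_abs_le t a b y hb (le_of_lt hy)
    _ ≤ _ := setIntegral_le_integral h1 (Filter.Eventually.of_forall fun y => (Real.exp_pos _).le)

lemma poly_exp_tendsto (N p : ℕ) (c : ℝ) (hc : 0 < c) :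
    Tendsto (fun s : ℕ => ((N:ℝ) + 2 + 2 * s) ^ p * Real.exp (-c * s)) atTop (𝓝 0) := by
  have h1 : Tendsto (fun s : ℕ => c / 2 * ((N:ℝ) + 2 + 2 * s)) atTop atTop := by
    apply Tendsto.const_mul_atTop (by positivity)
    apply tendsto_atTop_add_const_left
    exact Tendsto.const_mul_atTop (by norm_num) tendsto_natCast_atTop_atTop
  have h2 := ((tendsto_pow_mul_exp_neg_atTop_nhds_zero p).comp h1).const_mul (Real.exp (c / 2 * (N + 2)) / (c/2)^p)
  rw [mul_zero] at h2
  refine h2.congr ?_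
  intro s
  simp only [Function.comp]
  rw [mul_pow, show -(c / 2 * ((N:ℝ) + 2 + 2 * s)) = -(c / 2 * (N + 2)) + (-c * s) by ring, Real.exp_add, Real.exp_neg (c / 2 * (N + 2))]
  have := Real.exp_pos (c / 2 * (N + 2))
  field_simp

lemma poly_exp_bdd (N p : ℕ) (c : ℝ) (hc : 0 < c) :
    ∃ M : ℝ, 0 ≤ M ∧ ∀ s : ℕ, ((N:ℝ) + 2 + 2 * s) ^ p * Real.exp (-c * s) ≤ M := by
  obtain ⟨M, hM⟩ := (poly_exp_tendsto N p c hc).bddAbove_range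
  refine ⟨M, ?_, fun s => hM ⟨s, rfl⟩⟩
  exact le_trans (by positivity) (hM ⟨0, rfl⟩)

lemma pow_exp_bdd (N : ℕ) (c : ℝ) (hc : 0 < c) :
    ∃ M : ℝ, 0 ≤ M ∧ ∀ s k : ℕ, k ≤ s → ((N:ℝ) + 2 + 2 * s) ^ k * Real.exp (-c * (k * s)) ≤ M := by
  have h := (poly_exp_tendsto N 1 c hc).eventually (ge_mem_nhds (zero_lt_one))
  obtain ⟨s0, hs0⟩ := eventually_atTop.1 h
  have hX1 : ∀ s : ℕ, (1:ℝ) ≤ (N:ℝ) + 2 + 2 * s := by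
    intro s; linarith [Nat.cast_nonneg (α := ℝ) N, Nat.cast_nonneg (α := ℝ) s]
  refine ⟨((N:ℝ) + 2 + 2 * s0) ^ s0, by positivity, fun s k hk => ?_⟩
  rcases le_or_gt s0 s with h1 | h1
  · have h2 := hs0 s h1
    have e : ((N:ℝ) + 2 + 2 * s) ^ k * Real.exp (-c * (k * s)) = (((N:ℝ) + 2 + 2 * s) ^ 1 * Real.exp (-c * s)) ^ k := by
      rw [mul_pow, ← Real.exp_nat_mul, pow_one]; congr 2; ring
    rw [e]
    calc _ ≤ (1:ℝ) := pow_le_one₀ (by positivity) h2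
      _ ≤ _ := one_le_pow₀ (hX1 s0)
  · calc _ ≤ ((N:ℝ) + 2 + 2 * s) ^ k * 1 := by
          gcongr; rw [Real.exp_le_one_iff]; have : 0 ≤ c * (k * s) := by positivity
          linarith
      _ ≤ ((N:ℝ) + 2 + 2 * s0) ^ k := by rw [mul_one]; gcongr
      _ ≤ _ := pow_le_pow_right₀ (hX1 s0) (by omega)

noncomputable def Wb (N n : ℕ) (t : ℝ) (q : ℕ × ℕ) : ℝ :=
  (2 * (q.2:ℝ) + q.1 + (N + 1) + 1) * (((q.1:ℝ) + 1) * ((q.2 + 1) * (N + 1 + q.1 + 2 * q.2) ^ (N + q.2))) *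
    Real.exp (-(4 * ((q.2:ℝ) * (q.2 + 2 * n + q.1 + 1) + n * q.1)) * t)

lemma Wb_summable (N n : ℕ) (hn : 1 ≤ n) (t : ℝ) (ht : 0 < t) : Summable (Wb N n t) := by
  obtain ⟨M, hM0, hM⟩ := pow_exp_bdd N (4*t) (by positivity)
  obtain ⟨M2, hM20, hM2⟩ := poly_exp_bdd N (N+3) (2*t) (by positivity)
  have hg : Summable (fun m : ℕ => Real.exp (-(2*t)) ^ m) :=
    summable_geometric_of_lt_one (Real.exp_pos _).le (Real.exp_lt_one_iff.2 (by linarith))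
  have hgg : Summable (fun q : ℕ × ℕ => M * M2 * (Real.exp (-(2*t)) ^ q.1 * Real.exp (-(2*t)) ^ q.2)) :=
    (hg.mul_of_nonneg hg (fun _ => by positivity) (fun _ => by positivity)).mul_left _
  refine Summable.of_nonneg_of_le (fun q => by rw [Wb]; positivity) ?_ hgg
  rintro ⟨m, k⟩
  have h1 := hM (m+k) k (by omega)
  have h2 := hM2 (m+k)
  simp only [Wb]
  have hX0 : (0:ℝ) ≤ (N:ℝ) + 2 + 2 * (m + k : ℕ) := by positivity
  have hm : (0:ℝ) ≤ m := by positivity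
  have hk : (0:ℝ) ≤ k := by positivity
  have hN : (0:ℝ) ≤ N := by positivity
  have hn' : (1:ℝ) ≤ n := by exact_mod_cast hn
  set X : ℝ := (N:ℝ) + 2 + 2 * (m + k : ℕ) with hX
  push_cast at hX
  have hexp : Real.exp (-(4 * ((k:ℝ) * (k + 2 * n + m + 1) + n * m)) * t) ≤
      Real.exp (-(4*t) * (k * (m + k : ℕ))) * Real.exp (-(2*t) * (m + k : ℕ)) * (Real.exp (-(2*t)) ^ m * Real.exp (-(2*t)) ^ k) := by
    rw [← Real.exp_nat_mul, ← Real.exp_nat_mul, ← Real.exp_add, ← Real.exp_add, ← Real.exp_add]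
    apply Real.exp_le_exp.2
    push_cast
    have : (0:ℝ) ≤ t * (2 * n * k + (n - 1) * m) := by
      have : (0:ℝ) ≤ n - 1 := by linarith
      positivity
    nlinarith
  calc _ ≤ (X * (X * (X * X ^ (N + k)))) * (Real.exp (-(4*t) * (k * (m + k : ℕ))) * Real.exp (-(2*t) * (m + k : ℕ)) * (Real.exp (-(2*t)) ^ m * Real.exp (-(2*t)) ^ k)) := by
        gcongr <;> linarith
    _ = (X ^ k * Real.exp (-(4*t) * (k * (m + k : ℕ)))) * (X ^ (N+3) * Real.exp (-(2*t) * (m + k : ℕ))) * (Real.exp (-(2*t)) ^ m * Real.exp (-(2*t)) ^ k) := by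
        rw [pow_add, pow_add]; ring
    _ ≤ _ := by gcongr

lemma sum_fiber (f : ℕ × ℕ → ℝ) (hf : Summable f) : ∑' q, f q = ∑' l, ∑ q ∈ Sset l, f q := by
  have h := (hf.hasSum.tsum_fiberwise (fun q : ℕ × ℕ => q.1 + 2 * q.2)).tsum_eq
  rw [← h]
  congr 1
  ext l
  have e : ((fun q : ℕ × ℕ => q.1 + 2 * q.2) ⁻¹' {l}) = (Sset l : Set (ℕ × ℕ)) := by
    ext q; simp [mem_Sset]
  rw [e]
  exact Finset.tsum_subtype (Sset l) f

noncomputable def Aco (N n : ℕ) (t x η : ℝ) (q : ℕ × ℕ) : ℝ :=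
  (Real.Gamma (2 * n) / (2 * Real.pi ^ (2 * n + 2))) * (2 * (q.2 : ℝ) + q.1 + 2 * n + 1) *
    Real.exp (-(((q.1 : ℝ) + 2 * q.2) * (q.1 + 2 * q.2 + 4 * n + 2)) * t) * Bc N x q.1 q.2 *
    (Real.exp (η ^ 2 / (4 * t)) / Real.sin η)

lemma exp_split (n : ℕ) (t : ℝ) (q : ℕ × ℕ) :
    Real.exp (-(((q.1 : ℝ) + 2 * q.2) * (q.1 + 2 * q.2 + 4 * n + 2)) * t) * Real.exp (t * ((q.1:ℝ) + 1) ^ 2) =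
      Real.exp t * Real.exp (-(4 * ((q.2 : ℝ) * (q.2 + 2 * n + q.1 + 1) + n * q.1)) * t) := by
  rw [← Real.exp_add, ← Real.exp_add]; congr 1; ring

lemma Aco_bound (N n : ℕ) (hN : 2 * n = N + 1) (t x η : ℝ) (hx0 : 0 ≤ x) (hx1 : x ≤ 1)
    (hs : 0 < Real.sin η) (q : ℕ × ℕ) :
    |Aco N n t x η q| * Real.exp (t * ((q.1:ℝ) + 1) ^ 2) ≤
      ((Real.Gamma (2 * n) / (2 * Real.pi ^ (2 * n + 2))) * (Real.exp (η ^ 2 / (4 * t)) / Real.sin η) * Real.exp t) * Wb N n t q := by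
  have hN' : 2 * (n:ℝ) = N + 1 := by exact_mod_cast hN
  have hG : 0 < Real.Gamma (2 * n) := Real.Gamma_pos_of_pos (by rw [hN']; positivity)
  have hc : 0 ≤ Real.Gamma (2 * n) / (2 * Real.pi ^ (2 * n + 2)) := by positivity
  have hE : 0 ≤ Real.exp (η ^ 2 / (4 * t)) / Real.sin η := by positivity
  have hl : 0 ≤ 2 * (q.2 : ℝ) + q.1 + 2 * n + 1 := by positivity
  have hB := Bc_bound N x hx0 hx1 q.1 q.2
  rw [Aco, abs_mul, abs_mul, abs_mul, abs_mul, abs_of_nonneg hc, abs_of_nonneg hE, abs_of_nonneg hl,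
    abs_of_pos (Real.exp_pos _)]
  set c := Real.Gamma (2 * n) / (2 * Real.pi ^ (2 * n + 2))
  set E := Real.exp (η ^ 2 / (4 * t)) / Real.sin η
  have h := exp_split n t q
  calc _ = (c * E) * (2 * (q.2 : ℝ) + q.1 + 2 * n + 1) * |Bc N x q.1 q.2| * (Real.exp (-(((q.1 : ℝ) + 2 * q.2) * (q.1 + 2 * q.2 + 4 * n + 2)) * t) * Real.exp (t * ((q.1:ℝ) + 1) ^ 2)) := by ring
    _ = (c * E) * (2 * (q.2 : ℝ) + q.1 + 2 * n + 1) * |Bc N x q.1 q.2| * (Real.exp t * Real.exp (-(4 * ((q.2 : ℝ) * (q.2 + 2 * n + q.1 + 1) + n * q.1)) * t)) := by rw [h]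
    _ ≤ (c * E) * (2 * (q.2 : ℝ) + q.1 + 2 * n + 1) * (((q.1:ℝ) + 1) * ((q.2 + 1) * (N + 1 + q.1 + 2 * q.2) ^ (N + q.2))) * (Real.exp t * Real.exp (-(4 * ((q.2 : ℝ) * (q.2 + 2 * n + q.1 + 1) + n * q.1)) * t)) := by gcongr
    _ = _ := by
      rw [Wb]
      have e : 2 * (q.2 : ℝ) + q.1 + 2 * n + 1 = 2 * (q.2:ℝ) + q.1 + (N + 1) + 1 := by rw [hN']
      rw [e]; ring

/-- integral representation of the subelliptic heat kernel of the quaternionic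
Hopf fibration in terms of the Riemannian heat kernel of `S^{4n+3}`. -/
theorem stmt_7 (n : ℕ) (hn : 1 ≤ n) (J : ℕ → ℕ → ℕ → ℝ → ℝ) (hJ : IsJacobi J)
    (C : ℕ → ℝ → ℝ) (hC : IsGegenbauer n C)
    (t r η : ℝ) (ht : 0 < t) (hr : r ∈ Set.Ico 0 (π / 2)) (hη : η ∈ Set.Ioo 0 π) :
    pKernel n J t r η =
      (Real.exp (-t) / Real.sqrt (π * t)) *
        ∫ y in Set.Ioi (0 : ℝ),
          (Real.sinh y * Real.sin (η * y / (2 * t)) / Real.sin η) *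
            Real.exp (-(y ^ 2 - η ^ 2) / (4 * t)) * qKernel n C t (Real.cos r * Real.cosh y) := by
  obtain ⟨N, hN⟩ : ∃ N, 2 * n = N + 1 := ⟨2 * n - 1, by omega⟩
  have hN' : 2 * (n:ℝ) = N + 1 := by exact_mod_cast hN
  have hN1 : 2 * n - 1 = N := by omega
  have hsin : 0 < Real.sin η := Real.sin_pos_of_pos_of_lt_pi hη.1 hη.2
  have hx0 : 0 ≤ Real.cos r := Real.cos_nonneg_of_mem_Icc ⟨by linarith [hr.1, Real.pi_pos], hr.2.le⟩
  have hx1 : Real.cos r ≤ 1 := Real.cos_le_one r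
  have hJe : ∀ m k : ℕ, ((m:ℝ) + 1) * (Nat.choose (k + m + 2 * n) (2 * n - 1) : ℝ) * Real.cos r ^ m *
      J k (2 * n - 1) (m + 1) (Real.cos (2 * r)) = Bc N (Real.cos r) m k := by
    intro m k
    obtain ⟨⟨p, hp⟩, hf⟩ := hJ k (2 * n - 1) (m + 1)
    rw [hp, Real.cos_two_mul, jac_explicit k (2 * n - 1) (m + 1) p (fun x hx => by rw [← hp, hf x hx]),
      hN1, hN]
    exact Bc_jac N (Real.cos r) m k
  have hCe : ∀ (l : ℕ) (y : ℝ), 2 * (n:ℝ) * Real.sinh y * C l (Real.cos r * Real.cosh y) =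
      ∑ q ∈ Sset l, Bc N (Real.cos r) q.1 q.2 * Real.sinh ((q.1 + 1) * y) := by
    intro l y
    obtain ⟨⟨p, hp⟩, hf⟩ := hC l
    rw [hp, geg_explicit n l p (fun x hx => by rw [← hp, hf x hx]), hN', hN]
    exact geg_expand N l (Real.cos r) y
  set A := Aco N n t (Real.cos r) η with hA
  have hAb := Aco_bound N n hN t (Real.cos r) η hx0 hx1 hsin
  rw [← hA] at hAb
  set D := ((Real.Gamma (2 * n) / (2 * Real.pi ^ (2 * n + 2))) * (Real.exp (η ^ 2 / (4 * t)) / Real.sin η) * Real.exp t)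
  have hW := Wb_summable N n hn t ht
  set F : ℕ × ℕ → ℝ → ℝ := fun q y => A q * gfun t (η / (2 * t)) ((q.1:ℝ) + 1) y with hF
  have hFint : ∀ q, Integrable (F q) (volume.restrict (Set.Ioi 0)) := fun q =>
    ((gfun_integrable t ht _ _).const_mul _).integrableOn
  have hFsum : Summable fun q => ∫ y in Set.Ioi (0:ℝ), ‖F q y‖ := by
    refine Summable.of_nonneg_of_le (fun q => integral_nonneg fun y => norm_nonneg _) (fun q => ?_)
      (hW.mul_left (2 * Real.sqrt (π * t) * D))
    have h1 := gfun_norm_integral t ht (η / (2 * t)) ((q.1:ℝ) + 1) (by positivity)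
    simp only [hF, norm_mul]
    rw [integral_const_mul, Real.norm_eq_abs]
    calc _ ≤ |A q| * (2 * Real.sqrt (π * t) * Real.exp (t * ((q.1:ℝ) + 1) ^ 2)) := by gcongr
      _ = 2 * Real.sqrt (π * t) * (|A q| * Real.exp (t * ((q.1:ℝ) + 1) ^ 2)) := by ring
      _ ≤ 2 * Real.sqrt (π * t) * (D * Wb N n t q) := mul_le_mul_of_nonneg_left (hAb q) (by positivity)
      _ = _ := by ring
  have hmain := hasSum_integral_of_summable_integral_norm hFint hFsum
  have hpt : ∀ y ∈ Set.Ioi (0:ℝ), Summable fun q => F q y := by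
    intro y hy
    refine Summable.of_norm_bounded (hW.mul_left D) (fun q => ?_)
    simp only [hF, norm_mul, Real.norm_eq_abs]
    refine le_trans ?_ (hAb q)
    gcongr
    exact (gfun_abs_le t _ _ y (by positivity) (le_of_lt hy)).trans (exp_quad_le t _ y ht)
  have hint : ∀ y ∈ Set.Ioi (0:ℝ), (Real.sinh y * Real.sin (η * y / (2 * t)) / Real.sin η) *
            Real.exp (-(y ^ 2 - η ^ 2) / (4 * t)) * qKernel n C t (Real.cos r * Real.cosh y) = ∑' q, F q y := by
    intro y hy
    rw [sum_fiber _ (hpt y hy), qKernel, ← tsum_mul_left, ← tsum_mul_left]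
    congr 1
    ext l
    have e : ∀ q ∈ Sset l, F q y = ((Real.Gamma (2 * n) / (2 * Real.pi ^ (2 * n + 2))) * ((l:ℝ) + 2 * n + 1) *
        Real.exp (-((l : ℝ) * (l + 4 * n + 2)) * t) * (Real.exp (η ^ 2 / (4 * t)) / Real.sin η) *
        Real.sin (η * y / (2 * t)) * Real.exp (-y ^ 2 / (4 * t))) * (Bc N (Real.cos r) q.1 q.2 * Real.sinh ((q.1 + 1) * y)) := by
      intro q hq
      have hl : (l:ℝ) = q.1 + 2 * q.2 := by rw [mem_Sset] at hq; rw [← hq]; push_cast; ring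
      simp only [hF, hA, Aco, gfun]
      rw [hl, show η / (2 * t) * y = η * y / (2 * t) by ring]
      ring
    rw [Finset.sum_congr rfl e, ← Finset.mul_sum, ← hCe]
    have hG : Real.Gamma (2 * n + 1) = 2 * n * Real.Gamma (2 * n) := Real.Gamma_add_one (by rw [hN']; positivity)
    rw [hG, show -(y ^ 2 - η ^ 2) / (4 * t) = η ^ 2 / (4 * t) + -y ^ 2 / (4 * t) by ring, Real.exp_add]
    ring
  rw [setIntegral_congr_fun measurableSet_Ioi hint, ← hmain.tsum_eq, pKernel, ← tsum_mul_left]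
  congr 1
  ext q
  simp only [hF]
  rw [integral_const_mul, gfun_integral t ht]
  have hs := exp_split n t q
  have hsq : Real.sqrt (π * t) ≠ 0 := (Real.sqrt_pos.2 (by have := Real.pi_pos; positivity)).ne'
  have e1 : Real.exp (t * (((q.1:ℝ) + 1) ^ 2 - (η / (2 * t)) ^ 2)) =
      Real.exp (t * ((q.1:ℝ) + 1) ^ 2) * (Real.exp (η ^ 2 / (4 * t)))⁻¹ := by
    rw [← Real.exp_neg, ← Real.exp_add]; congr 1; field_simp; ring
  have e2 : 2 * (η / (2 * t)) * ((q.1:ℝ) + 1) * t = (q.1 + 1) * η := by field_simp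
  have e3 : pTerm n J t r η q = (Real.Gamma (2 * n) / (2 * Real.pi ^ (2 * n + 2))) *
      (2 * (q.2 : ℝ) + q.1 + 2 * n + 1) * Real.exp (-(4 * ((q.2 : ℝ) * (q.2 + 2 * n + q.1 + 1) + n * q.1)) * t) *
      Bc N (Real.cos r) q.1 q.2 * (Real.sin ((q.1 + 1) * η) / Real.sin η) := by
    rw [pTerm, vertFactor, if_neg hη.1.ne', ← hJe q.1 q.2]; ring
  have e4 : Real.exp (-(4 * ((q.2 : ℝ) * (q.2 + 2 * n + q.1 + 1) + n * q.1)) * t) = Real.exp (-t) *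
      (Real.exp (-(((q.1 : ℝ) + 2 * q.2) * (q.1 + 2 * q.2 + 4 * n + 2)) * t) * Real.exp (t * ((q.1:ℝ) + 1) ^ 2)) := by
    rw [hs, ← mul_assoc, ← Real.exp_add]; simp
  rw [e1, e2, e3, e4]
  simp only [hA, Aco]
  have := Real.exp_ne_zero (η ^ 2 / (4 * t))
  have := hsin.ne'
  generalize Real.exp (η ^ 2 / (4 * t)) = E1 at *
  generalize Real.sqrt (π * t) = S1 at *
  field_simp
end
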